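/- arXiv:2406.04704 — 5 statements merged into one kernel-verified Lean document; each statement's English description precedes it below -/
import Mathlib

section
/- Let M be a maximal subgroup of a finite group G and k a natural number. Then M is k-submodular in G if and only if either M is normal in G, or G/Core_G(M) is a non-nilpotent biprimary group with a cyclic Sylow q-subgroup M/Core_G(M) of order q^n and a normal Sylow p-subgroup P/Core_G(M) of order p, for some primes p, q and some natural number n ≤ k. -/
open Pointwise

/-- A subgroup `H` of `K` is `n`-modularly embedded in `K` if either `H ◁ K`, or
`K/Core_K(H)` is a non-nilpotent group of order `p * q ^ n` with `|K : H| = p`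
for some primes `p`, `q`. -/
def ModularlyEmbedded {G : Type*} [Group G] (n : ℕ) (H K : Subgroup G) : Prop :=
  H ≤ K ∧ ((H.subgroupOf K).Normal ∨
    ∃ p q : ℕ, p.Prime ∧ q.Prime ∧
      ¬ Group.IsNilpotent (↥K ⧸ (H.subgroupOf K).normalCore) ∧
      Nat.card (↥K ⧸ (H.subgroupOf K).normalCore) = p * q ^ n ∧
      (H.subgroupOf K).index = p)

/-- `H` is `k`-submodular in `K` if there is a chain `H = H_0 ≤ H_1 ≤ ⋯ ≤ H_m = K`
such that `H_{i-1}` is `n_i`-modularly embedded in `H_i` for some natural number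
`n_i ≤ k`, for every `i`. -/
def KSubmodularIn {G : Type*} [Group G] (k : ℕ) (H K : Subgroup G) : Prop :=
  ∃ (m : ℕ) (c : ℕ → Subgroup G), c 0 = H ∧ c m = K ∧
    ∀ i < m, ∃ n : ℕ, 0 < n ∧ n ≤ k ∧ ModularlyEmbedded n (c i) (c (i + 1))

theorem kS_grow {G : Type*} [Group G] [Finite G] {q : ℕ} [Fact q.Prime] {D R : Subgroup G}
    (hR : IsPGroup q R) (h : D < R) :
    ∃ x, x ∈ R ∧ x ∈ Subgroup.normalizer (D : Set G) ∧ x ∉ D := by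
  haveI := hR.isNilpotent
  have hn : NormalizerCondition R := Group.normalizerCondition_of_isNilpotent
  have hlt : D.subgroupOf R < ⊤ := by
    rw [lt_top_iff_ne_top, Ne, Subgroup.subgroupOf_eq_top]
    exact fun h' => absurd (h.trans_le h') (lt_irrefl _)
  have h1 := hn _ hlt
  rw [← Subgroup.subgroupOf_normalizer_eq h.le] at h1
  obtain ⟨x, hx, hx'⟩ := SetLike.exists_of_lt h1
  exact ⟨x, x.2, hx, hx'⟩

theorem kS_inf {G : Type*} [Group G] [Finite G] {p q n : ℕ} [hp : Fact p.Prime] [hq : Fact q.Prime]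
    (hcard : Nat.card G = p * q ^ n)
    (hcore : ∀ D : Subgroup G, (∀ T : Sylow q G, D ≤ T) → D = ⊥) :
    ∀ P R : Sylow q G, P ≠ R → (P : Subgroup G) ⊓ R = ⊥ := by
  classical
  have hdiv : ∀ m, m ∣ p * q ^ n → ¬ q ∣ m → m ∣ p := by
    intro m h1 h2
    refine Nat.Coprime.dvd_of_dvd_mul_right ?_ h1
    exact (((Nat.Prime.coprime_iff_not_dvd hq.out).2 h2).symm).pow_right n
  intro P0 R0 hne0
  let S : Set (Sylow q G × Sylow q G) := {x | x.1 ≠ x.2}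
  obtain ⟨⟨P, R⟩, hPR, hmax⟩ := Set.exists_max_image S
    (fun x => Nat.card ((x.1 : Subgroup G) ⊓ x.2 : Subgroup G)) (Set.toFinite _) ⟨(P0, R0), hne0⟩
  have hPR : P ≠ R := hPR
  suffices hD : (P : Subgroup G) ⊓ R = ⊥ by
    have := hmax (P0, R0) hne0
    simp only [hD, Subgroup.card_bot] at this
    exact Subgroup.eq_bot_of_card_le _ this
  set D : Subgroup G := (P : Subgroup G) ⊓ R with hDdef
  have key : ∀ A B : Sylow q G, D ≤ A → D ≤ B → (∃ x, x ∈ A ∧ x ∈ B ∧ x ∉ D) → A = B := by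
    intro A B hA hB ⟨x, hxA, hxB, hxD⟩
    by_contra hne
    have h1 := hmax (A, B) hne
    have h2 : D < (A : Subgroup G) ⊓ B :=
      lt_of_le_of_ne (le_inf hA hB) (fun h => hxD (h ▸ ⟨hxA, hxB⟩))
    have h3 : D = (A : Subgroup G) ⊓ B := Subgroup.eq_of_le_of_card_ge h2.le h1
    exact h2.ne h3
  have hDP : D < P := by
    refine lt_of_le_of_ne inf_le_left fun h => hPR ?_
    apply Sylow.ext
    exact (P.3 R.2 (h ▸ inf_le_right)).symm
  have hDR : D < R := by
    refine lt_of_le_of_ne inf_le_right fun h => hPR ?_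
    apply Sylow.ext
    exact R.3 P.2 (h ▸ inf_le_left)
  set N : Subgroup G := Subgroup.normalizer (D : Set G) with hN
  have hDN : D ≤ N := Subgroup.le_normalizer
  haveI : (D.subgroupOf N).Normal := Subgroup.normal_in_normalizer
  have hDq : IsPGroup q D := P.2.to_le hDP.le
  have hDq' : IsPGroup q (D.subgroupOf N) := hDq.comap_subtype
  have hns : Nat.card (Sylow q N) ≠ 1 := by
    intro h1
    haveI : Subsingleton (Sylow q N) := (Nat.card_eq_one_iff_unique.1 h1).1
    obtain ⟨T0⟩ : Nonempty (Sylow q N) := inferInstance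
    obtain ⟨T, hT⟩ := T0.exists_comap_subtype_eq
    have hall : ∀ A : Sylow q G, ∀ x, x ∈ A → x ∈ N → x ∈ T := by
      intro A x hx hxN
      have : IsPGroup q ((A : Subgroup G).subgroupOf N) := A.2.comap_subtype
      obtain ⟨B, hB⟩ := this.exists_le_sylow
      have hx2 : (⟨x, hxN⟩ : N) ∈ (B : Subgroup N) := hB hx
      rw [Subsingleton.elim B T0, ← hT] at hx2
      exact hx2
    have hDT : D ≤ T := fun x hx => hall P x (hDP.le hx) (hDN hx)
    obtain ⟨x, hx, hxN, hxD⟩ := kS_grow P.2 hDP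
    obtain ⟨y, hy, hyN, hyD⟩ := kS_grow R.2 hDR
    have e1 := key P T hDP.le hDT ⟨x, hx, hall P x hx hxN, hxD⟩
    have e2 := key R T hDR.le hDT ⟨y, hy, hall R y hy hyN, hyD⟩
    exact hPR (e1.trans e2.symm)
  have hcN : Nat.card (Sylow q N) = p := by
    obtain ⟨T0⟩ : Nonempty (Sylow q N) := inferInstance
    have h1 : Nat.card (Sylow q N) ∣ p := by
      apply hdiv _ _ (not_dvd_card_sylow q N)
      rw [← hcard]
      exact ((T0.card_dvd_index).trans (Subgroup.index_dvd_card _)).trans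
        (Subgroup.card_subgroup_dvd_card N)
    exact ((Nat.dvd_prime hp.out).1 h1).resolve_left hns
  have hcG : Nat.card (Sylow q G) ≤ p := by
    apply Nat.le_of_dvd hp.out.pos
    apply hdiv _ _ (not_dvd_card_sylow q G)
    rw [← hcard]
    exact (P.card_dvd_index).trans (Subgroup.index_dvd_card _)
  choose f hf using fun T : Sylow q N => T.exists_comap_subtype_eq
  have hfi : Function.Injective f := by
    intro A B h
    apply Sylow.ext
    rw [← hf A, ← hf B, h]
  have hfs : Function.Surjective f := by
    refine ((Nat.bijective_iff_injective_and_card f).2 ⟨hfi, ?_⟩).2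
    exact le_antisymm (Nat.card_le_card_of_injective f hfi) (hcN ▸ hcG)
  apply hcore
  intro T x hx
  obtain ⟨T', rfl⟩ := hfs T
  have h2 : (⟨x, hDN hx⟩ : N) ∈ (T' : Subgroup N) := hDq'.le_sylow_of_normal T' hx
  rw [← hf T'] at h2
  exact h2

theorem kS_main {G : Type*} [Group G] [Finite G] {p q n : ℕ} (hp : p.Prime) (hq : q.Prime)
    (hcard : Nat.card G = p * q ^ n) (H : Subgroup G) (hmax : IsCoatom H) (hnn : ¬ H.Normal)
    (hcore : H.normalCore = ⊥) (hidx : H.index = p) (hnil : ¬ Group.IsNilpotent G) :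
    IsCyclic H ∧ Nat.card H = q ^ n ∧ ∃ P : Subgroup G, P.Normal ∧ Nat.card P = p := by
  classical
  haveI := Fact.mk hp
  haveI := Fact.mk hq
  have hpq : p ≠ q := by
    rintro rfl
    apply hnil
    apply IsPGroup.isNilpotent (p := p)
    exact IsPGroup.of_card (n := n + 1) (by rw [hcard, pow_succ, mul_comm])
  have hHc : Nat.card H = q ^ n := by
    have h := H.card_mul_index
    rw [hidx, hcard, mul_comm] at h
    exact Nat.eq_of_mul_eq_mul_left hp.pos h
  have hHq : IsPGroup q H := IsPGroup.of_card hHc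
  have hni : ¬ q ∣ H.index := by
    rw [hidx]
    exact fun h => hpq ((Nat.prime_dvd_prime_iff_eq hq hp).1 h).symm
  let HS : Sylow q G := hHq.toSylow hni
  have hHS : (HS : Subgroup G) = H := rfl
  have hTc : ∀ T : Sylow q G, Nat.card T = q ^ n := by
    intro T
    rw [← hHc]
    exact Nat.card_congr (T.equiv HS).toEquiv
  have hint := kS_inf (q := q) hcard (by
    intro D hD
    rw [eq_bot_iff, ← hcore]
    intro a ha b
    have h1 := hD (b⁻¹ • HS) ha
    rw [Sylow.coe_subgroup_smul, Subgroup.mem_pointwise_smul_iff_inv_smul_mem] at h1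
    simpa [hHS] using h1)
  have hns : Nat.card (Sylow q G) = p := by
    have h1 : Nat.card (Sylow q G) ∣ p := by
      rw [← hidx]; exact HS.card_dvd_index
    refine ((Nat.dvd_prime hp).1 h1).resolve_left fun h => hnn ?_
    haveI : Subsingleton (Sylow q G) := (Nat.card_eq_one_iff_unique.1 h).1
    exact HS.normal_of_subsingleton
  haveI := Fintype.ofFinite G
  haveI := Fintype.ofFinite (Sylow q G)
  let U : Finset G := Finset.univ.biUnion
    fun T : Sylow q G => (Finset.univ.filter (fun x => x ∈ T)).erase 1
  have hU : U.card = p * (q ^ n - 1) := by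
    rw [Finset.card_biUnion]
    · rw [Finset.sum_congr rfl (g := fun _ => q ^ n - 1)]
      · rw [Finset.sum_const, Finset.card_univ, ← Nat.card_eq_fintype_card, hns, smul_eq_mul]
      · intro T _
        rw [Finset.card_erase_of_mem (by simp [one_mem]), ← hTc T, Nat.card_eq_fintype_card,
          Fintype.card_subtype]
        rfl
    · intro A _ B _ hAB
      rw [Function.onFun_apply, Finset.disjoint_left]
      intro x hx hx'
      simp only [Finset.mem_erase, Finset.mem_filter, Finset.mem_univ, true_and] at hx hx'
      have : x ∈ (A : Subgroup G) ⊓ B := ⟨hx.2, hx'.2⟩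
      rw [hint A B hAB] at this
      exact hx.1 (Subgroup.mem_bot.1 this)
  have hUc : Uᶜ.card = p := by
    rw [Finset.card_compl, hU, ← Nat.card_eq_fintype_card, hcard]
    obtain ⟨t, ht⟩ : ∃ t, q ^ n = t + 1 := ⟨q ^ n - 1, by have := Nat.pow_pos (n := n) hq.pos; omega⟩
    rw [ht, Nat.add_sub_cancel, mul_add, mul_one, Nat.add_sub_cancel_left]
  have hSc : ∀ P : Sylow p G, Nat.card P = p := by
    intro P
    rw [P.card_eq_multiplicity, hcard, Nat.factorization_mul hp.ne_zero (pow_ne_zero _ hq.ne_zero),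
      Nat.Prime.factorization_pow hq, hp.factorization]
    simp [hpq, hpq.symm]
  have hSU : ∀ P : Sylow p G, Finset.univ.filter (fun x => x ∈ P) = Uᶜ := by
    intro P
    apply Finset.eq_of_subset_of_card_le
    · intro x hx
      simp only [Finset.mem_filter, Finset.mem_univ, true_and] at hx
      rw [Finset.mem_compl]
      intro hxU
      simp only [U, Finset.mem_biUnion, Finset.mem_erase, Finset.mem_filter, Finset.mem_univ,
        true_and] at hxU
      obtain ⟨T, hx1, hxT⟩ := hxU
      have hd := IsPGroup.disjoint_of_ne p q hpq _ _ P.2 T.2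
      exact hx1 (Subgroup.mem_bot.1 (hd.le_bot ⟨hx, hxT⟩))
    · have h1 := hSc P
      rw [Nat.card_eq_fintype_card, Fintype.card_subtype] at h1
      rw [hUc]
      exact h1.ge
  obtain ⟨P⟩ : Nonempty (Sylow p G) := inferInstance
  haveI : Subsingleton (Sylow p G) := ⟨fun A B => by
    apply SetLike.ext
    intro x
    have h := (hSU A).trans (hSU B).symm
    simpa using congrArg (x ∈ ·) h⟩
  have hPn : (P : Subgroup G).Normal := P.normal_of_subsingleton
  refine ⟨?_, hHc, P, hPn, hSc P⟩
  haveI : IsCyclic P := isCyclic_of_prime_card (hSc P)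
  haveI hcyc : IsCyclic (ZMod (Nat.card P))ˣ := by
    rw [hSc P]; infer_instance
  let φ : H →* MulAut P := (MulAut.conjNormal (H := (P : Subgroup G))).comp H.subtype
  have hφ : Function.Injective φ := by
    rw [← MonoidHom.ker_eq_bot_iff, eq_bot_iff]
    let C : Subgroup G := H ⊓ Subgroup.centralizer (P : Set G)
    have hHP : H ⊔ (P : Subgroup G) = ⊤ := by
      refine hmax.2 _ (lt_of_le_of_ne le_sup_left fun h => ?_)
      have h1 : (P : Subgroup G) ≤ H := h ▸ le_sup_right
      have h2 := Subgroup.card_dvd_of_le h1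
      rw [hSc P, hHc] at h2
      exact hpq ((Nat.prime_dvd_prime_iff_eq hp hq).1 (hp.dvd_of_dvd_pow h2))
    have hCn : C.Normal := by
      rw [← Subgroup.normalizer_eq_top_iff, eq_top_iff, ← hHP, sup_le_iff]
      have hcn : (Subgroup.centralizer (P : Set G)).Normal := by
        exact Subgroup.normal_centralizer (H := (P : Subgroup G))
      constructor
      · rw [← Subgroup.normal_subgroupOf_iff_le_normalizer inf_le_left]
        constructor
        intro a ha b
        rw [Subgroup.mem_subgroupOf] at ha ⊢
        refine ⟨(b * a * b⁻¹).2, hcn.conj_mem _ ha.2 b⟩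
      · refine le_trans ?_ (Subgroup.centralizer_le_normalizer _)
        rw [Subgroup.le_centralizer_iff]
        exact inf_le_right
    have hCb : C = ⊥ := by
      rw [eq_bot_iff, ← hcore]
      exact Subgroup.normal_le_normalCore.2 inf_le_left
    intro x hx
    have hxC : (x : G) ∈ C := by
      refine ⟨x.2, ?_⟩
      refine Subgroup.mem_centralizer_iff.2 ?_
      intro y hy
      have h1 := DFunLike.congr_fun (MonoidHom.mem_ker.1 hx) ⟨y, hy⟩
      have h2 := congrArg Subtype.val h1
      have h3 : (x : G) * y * (x : G)⁻¹ = y := h2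
      exact (mul_inv_eq_iff_eq_mul.1 h3).symm
    rw [hCb] at hxC
    exact Subgroup.mem_bot.2 (Subtype.ext (Subgroup.mem_bot.1 hxC))
  exact isCyclic_of_injective ((IsCyclic.mulAutMulEquiv P).toMonoidHom.comp φ)
    ((IsCyclic.mulAutMulEquiv P).injective.comp hφ)

theorem kS_top {G : Type*} [Group G] (n : ℕ) (M : Subgroup G) :
    ModularlyEmbedded n M ⊤ ↔ (M.Normal ∨ ∃ p q : ℕ, p.Prime ∧ q.Prime ∧
      ¬ Group.IsNilpotent (G ⧸ M.normalCore) ∧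
      Nat.card (G ⧸ M.normalCore) = p * q ^ n ∧ M.index = p) := by
  have hs : Function.Surjective (⊤ : Subgroup G).subtype := fun x => ⟨⟨x, trivial⟩, rfl⟩
  have hN : (M.subgroupOf ⊤).Normal ↔ M.Normal := Subgroup.normal_comap_iff_of_surjective hs
  have hi : (M.subgroupOf ⊤).index = M.index := Subgroup.index_comap_of_surjective M hs
  have hc : (M.subgroupOf ⊤).normalCore.map
      ((Subgroup.topEquiv : (⊤ : Subgroup G) ≃* G) : (⊤ : Subgroup G) →* G) = M.normalCore := by
    ext x
    constructor
    · rintro ⟨y, hy, rfl⟩ b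
      exact hy ⟨b, trivial⟩
    · intro hx
      exact ⟨⟨x, trivial⟩, fun b => hx b, rfl⟩
  let e := QuotientGroup.congr _ _ (Subgroup.topEquiv : (⊤ : Subgroup G) ≃* G) hc
  have hnil : Group.IsNilpotent (↥(⊤ : Subgroup G) ⧸ (M.subgroupOf ⊤).normalCore) ↔
      Group.IsNilpotent (G ⧸ M.normalCore) :=
    ⟨fun _ => Group.nilpotent_of_mulEquiv e, fun _ => Group.nilpotent_of_mulEquiv e.symm⟩
  have hcd := Nat.card_congr e.toEquiv
  unfold ModularlyEmbedded
  rw [hN, hnil, hcd, hi]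
  simp

/-- Lemma 3.2: a maximal subgroup `M` of `G` is `k`-submodular in `G` iff
either `M` is normal in `G`, or `G/Core_G(M)` is a non-nilpotent biprimary
group of order `p * q ^ n` (`n ≤ k`) whose image of `M` is a cyclic Sylow
`q`-subgroup of order `q ^ n` and which has a normal Sylow `p`-subgroup of
order `p`. -/
theorem maximal_kSubmodular_iff {G : Type*} [Group G] [Finite G]
    {k : ℕ} (hk : 0 < k) {M : Subgroup G} (hmax : IsCoatom M) :
    KSubmodularIn k M ⊤ ↔
      (M.Normal ∨
        ∃ (p q n : ℕ), p.Prime ∧ q.Prime ∧ 0 < n ∧ n ≤ k ∧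
          ¬ Group.IsNilpotent (G ⧸ M.normalCore) ∧
          Nat.card (G ⧸ M.normalCore) = p * q ^ n ∧
          IsCyclic (M.map (QuotientGroup.mk' M.normalCore)) ∧
          Nat.card (M.map (QuotientGroup.mk' M.normalCore)) = q ^ n ∧
          ∃ P : Subgroup (G ⧸ M.normalCore), P.Normal ∧ Nat.card P = p) := by
  by_cases hMn : M.Normal
  · refine iff_of_true ?_ (Or.inl hMn)
    refine ⟨1, fun i => if i = 0 then M else ⊤, by simp, by simp, ?_⟩
    intro i hi
    obtain rfl : i = 0 := by omega
    refine ⟨1, one_pos, hk, ?_⟩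
    simpa using (kS_top 1 M).2 (Or.inl hMn)
  have hker : (QuotientGroup.mk' M.normalCore).ker ≤ M := by
    rw [QuotientGroup.ker_mk']; exact M.normalCore_le
  have hsurj := QuotientGroup.mk'_surjective M.normalCore
  have hidx : (M.map (QuotientGroup.mk' M.normalCore)).index = M.index :=
    Subgroup.index_map_eq _ hsurj hker
  have hcm : (M.map (QuotientGroup.mk' M.normalCore)).comap (QuotientGroup.mk' M.normalCore) = M :=
    Subgroup.comap_map_eq_self hker
  constructor
  · rintro ⟨m, c, h0, hm, hstep⟩
    right
    obtain ⟨n, hn0, hnk, hme⟩ : ∃ n, 0 < n ∧ n ≤ k ∧ ModularlyEmbedded n M ⊤ := by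
      by_contra hno
      have hall : ∀ i ≤ m, c i = M := by
        intro i
        induction i with
        | zero => exact fun _ => h0
        | succ i ih =>
          intro hi
          have h1 := ih (by omega)
          obtain ⟨n, hn0, hnk, hme⟩ := hstep i (by omega)
          rw [h1] at hme
          by_contra hne
          have h2 : c (i + 1) = ⊤ := hmax.2 _ (lt_of_le_of_ne hme.1 (Ne.symm hne))
          rw [h2] at hme
          exact hno ⟨n, hn0, hnk, hme⟩
      exact hmax.1 ((hall m le_rfl).symm.trans hm)
    rcases (kS_top n M).1 hme with h | ⟨p, q, hp, hq, hnil, hcard, hi⟩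
    · exact absurd h hMn
    have hcoat : IsCoatom (M.map (QuotientGroup.mk' M.normalCore)) := by
      constructor
      · intro h
        rw [h, Subgroup.comap_top] at hcm
        exact hmax.1 hcm.symm
      · intro L hL
        have h1 : M < L.comap (QuotientGroup.mk' M.normalCore) := by
          have := (Subgroup.comap_lt_comap_of_surjective hsurj).2 hL
          rwa [hcm] at this
        have h2 := hmax.2 _ h1
        rw [← Subgroup.map_comap_eq_self_of_surjective hsurj L, h2,
          Subgroup.map_top_of_surjective _ hsurj]
    have hnn : ¬ (M.map (QuotientGroup.mk' M.normalCore)).Normal := by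
      intro h
      apply hMn
      rw [← hcm]
      exact h.comap _
    have hcore : (M.map (QuotientGroup.mk' M.normalCore)).normalCore = ⊥ := by
      set K := (M.map (QuotientGroup.mk' M.normalCore)).normalCore with hK
      have h1 : K.comap (QuotientGroup.mk' M.normalCore) ≤ M.normalCore := by
        rw [Subgroup.normal_le_normalCore]
        exact le_trans (Subgroup.comap_mono (Subgroup.normalCore_le _)) hcm.le
      rw [← Subgroup.map_comap_eq_self_of_surjective hsurj K, eq_bot_iff, Subgroup.map_le_iff_le_comap]
      refine h1.trans ?_
      rw [MonoidHom.comap_bot, QuotientGroup.ker_mk']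
    obtain ⟨h1, h2, h3⟩ := kS_main hp hq hcard _ hcoat hnn hcore (hidx.trans hi) hnil
    exact ⟨p, q, n, hp, hq, hn0, hnk, hnil, hcard, h1, h2, h3⟩
  · rintro (h | ⟨p, q, n, hp, hq, hn0, hnk, hnil, hcard, -, hM, -⟩)
    · exact absurd h hMn
    refine ⟨1, fun i => if i = 0 then M else ⊤, by simp, by simp, ?_⟩
    intro i hi
    obtain rfl : i = 0 := by omega
    refine ⟨n, hn0, hnk, ?_⟩
    have : ModularlyEmbedded n M ⊤ := by
      refine (kS_top n M).2 (Or.inr ⟨p, q, hp, hq, hnil, hcard, ?_⟩)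
      have h := (M.map (QuotientGroup.mk' M.normalCore)).card_mul_index
      rw [hM, hcard, hidx, mul_comm p] at h
      exact Nat.eq_of_mul_eq_mul_left (Nat.pow_pos hq.pos) h
    simpa using this
end

section
/- If every maximal subgroup of a finite group G is k-submodular in G, then G is supersoluble. -/
open Pointwise

/-- A group is supersolvable if it has a normal series with cyclic factors
(for finite groups this is equivalent to having a chief series all of whose
factors are cyclic of prime order). -/
def IsSupersolvable (G : Type*) [Group G] : Prop :=
  ∃ (m : ℕ) (c : ℕ → Subgroup G), c 0 = ⊥ ∧ c m = ⊤ ∧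
    (∀ i, (c i).Normal) ∧ (∀ i, i < m → c i ≤ c (i + 1)) ∧
    ∀ i, i < m → ∀ [_h : ((c i).subgroupOf (c (i + 1))).Normal],
      IsCyclic (↥(c (i + 1)) ⧸ (c i).subgroupOf (c (i + 1)))


open Subgroup in
/-- one step of a normal series with cyclic factor -/
def SStep {G : Type*} [Group G] (A B : Subgroup G) : Prop :=
  A.Normal ∧ B.Normal ∧ ∃ b : G, B = A ⊔ Subgroup.zpowers b

def SSChain {G : Type*} [Group G] (A B : Subgroup G) : Prop := Relation.ReflTransGen SStep A B

theorem mem_sup_zpowers {G : Type*} [Group G] {A : Subgroup G} (hA : A.Normal) (b x : G) :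
    x ∈ A ⊔ Subgroup.zpowers b ↔ ∃ n : ℤ, x * b ^ n ∈ A := by
  rw [Subgroup.mem_sup_of_normal_left]
  constructor
  · rintro ⟨y, hy, z, ⟨n, rfl⟩, rfl⟩
    exact ⟨-n, by simpa using hy⟩
  · rintro ⟨n, hn⟩
    exact ⟨_, hn, b ^ (-n), ⟨-n, rfl⟩, by simp⟩

theorem SStep.comap {G : Type*} [Group G] {N : Subgroup G} [N.Normal] {A B : Subgroup (G ⧸ N)}
    (h : SStep A B) : SStep (A.comap (QuotientGroup.mk' N)) (B.comap (QuotientGroup.mk' N)) := by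
  obtain ⟨hA, hB, b, rfl⟩ := h
  obtain ⟨b, rfl⟩ := QuotientGroup.mk'_surjective N b
  refine ⟨inferInstance, inferInstance, b, ?_⟩
  ext x
  rw [mem_sup_zpowers inferInstance, Subgroup.mem_comap, mem_sup_zpowers hA]
  simp

theorem SSChain.of_quot {G : Type*} [Group G] {N : Subgroup G} [N.Normal]
    (h : SSChain (⊥ : Subgroup (G ⧸ N)) ⊤) : SSChain N ⊤ := by
  have := Relation.ReflTransGen.lift (fun A : Subgroup (G ⧸ N) => A.comap (QuotientGroup.mk' N))
    (fun a b h => SStep.comap h) _ _ h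
  have h2 : SSChain ((⊥ : Subgroup (G ⧸ N)).comap (QuotientGroup.mk' N))
    ((⊤ : Subgroup (G ⧸ N)).comap (QuotientGroup.mk' N)) := this
  rwa [MonoidHom.comap_bot, QuotientGroup.ker_mk', Subgroup.comap_top] at h2

theorem SStep.inf {G : Type*} [Group G] {A B : Subgroup G} (h : SStep A B) (N : Subgroup G)
    (hN : N.Normal) : SStep (A ⊓ N) (B ⊓ N) := by
  obtain ⟨hA, hB, b, rfl⟩ := h
  have h1 : (A ⊓ N).Normal := inferInstance
  refine ⟨h1, inferInstance, ?_⟩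
  have hle : ((A ⊔ Subgroup.zpowers b) ⊓ N).map (QuotientGroup.mk' A) ≤
      Subgroup.zpowers (QuotientGroup.mk' A b) := by
    rw [Subgroup.map_le_iff_le_comap]
    intro x hx
    obtain ⟨n, hn⟩ := (mem_sup_zpowers hA b x).1 hx.1
    rw [Subgroup.mem_comap]
    refine ⟨-n, ?_⟩
    have := (QuotientGroup.eq_one_iff _).2 hn
    simp only [QuotientGroup.mk'_apply] at *
    rw [QuotientGroup.mk_mul, QuotientGroup.mk_zpow] at this
    simpa using (eq_inv_of_mul_eq_one_left this).symm
  have hcyc : IsCyclic (((A ⊔ Subgroup.zpowers b) ⊓ N).map (QuotientGroup.mk' A)) :=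
    isCyclic_of_injective (Subgroup.inclusion hle) (Subgroup.inclusion_injective hle)
  obtain ⟨⟨c', hc'⟩, hc⟩ := hcyc
  obtain ⟨c, hcm, rfl⟩ := hc'
  refine ⟨c, le_antisymm ?_ ?_⟩
  · intro y hy
    rw [mem_sup_zpowers h1]
    obtain ⟨n, hn⟩ := hc ⟨_, y, hy, rfl⟩
    have hn' : (QuotientGroup.mk' A c) ^ n = QuotientGroup.mk' A y := congrArg Subtype.val hn
    refine ⟨-n, ?_, N.mul_mem hy.2 (N.zpow_mem hcm.2 _)⟩
    have : QuotientGroup.mk' A (y * c ^ (-n)) = 1 := by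
      rw [map_mul, map_zpow, ← hn']; simp
    exact (QuotientGroup.eq_one_iff _).1 this
  · refine sup_le (inf_le_inf_right _ le_sup_left) ?_
    rw [Subgroup.zpowers_le]; exact hcm

theorem SSChain.inf {G : Type*} [Group G] {A B : Subgroup G} (h : SSChain A B) (N : Subgroup G)
    (hN : N.Normal) : SSChain (A ⊓ N) (B ⊓ N) :=
  Relation.ReflTransGen.lift (fun A => A ⊓ N) (fun _ _ h => SStep.inf h N hN) _ _ h

theorem SSChain.subdirect {G : Type*} [Group G] {A B : Subgroup G} [A.Normal] [B.Normal]
    (hAB : A ⊓ B = ⊥)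
    (hA : SSChain (⊥ : Subgroup (G ⧸ A)) ⊤) (hB : SSChain (⊥ : Subgroup (G ⧸ B)) ⊤) :
    SSChain (⊥ : Subgroup G) ⊤ := by
  have h1 := (SSChain.of_quot hA)
  have h2 := (SSChain.of_quot hB).inf A inferInstance
  rw [inf_comm, hAB, top_inf_eq] at h2
  exact Relation.ReflTransGen.trans h2 h1

theorem SSChain.exists_first {G : Type*} [Group G] {A B : Subgroup G} (h : SSChain A B)
    (hne : A ≠ B) : ∃ E, SStep A E ∧ A ≠ E ∧ E ≤ B := by
  have hle : ∀ {A B : Subgroup G}, SSChain A B → A ≤ B := by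
    intro A B h
    induction h with
    | refl => exact le_rfl
    | tail _ h ih =>
      obtain ⟨_, _, b, rfl⟩ := h
      exact ih.trans le_sup_left
  induction h using Relation.ReflTransGen.head_induction_on with
  | refl => exact absurd rfl hne
  | @head a c h1 h2 ih =>
    by_cases hac : a = c
    · subst hac; exact ih hne
    · exact ⟨c, h1, hac, hle h2⟩

theorem SSChain.isSupersolvable {G : Type*} [Group G] (h : SSChain (⊥ : Subgroup G) ⊤) :
    IsSupersolvable G := by
  have key : ∀ A : Subgroup G, SSChain ⊥ A → ∃ (m : ℕ) (c : ℕ → Subgroup G), c 0 = ⊥ ∧ c m = A ∧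
    (∀ i, (c i).Normal) ∧ (∀ i, i < m → SStep (c i) (c (i + 1))) := by
    intro A h
    induction h with
    | refl => exact ⟨0, fun _ => ⊥, rfl, rfl, fun _ => inferInstance, by simp⟩
    | @tail X Y _ h ih =>
      obtain ⟨m, c, h0, hm, hn, hs⟩ := ih
      refine ⟨m + 1, fun i => if i ≤ m then c i else Y, by simpa using h0, by simp, ?_, ?_⟩
      · intro i; dsimp only; split_ifs
        · exact hn i
        · exact h.2.1
      · intro i hi
        rcases Nat.lt_succ_iff_lt_or_eq.1 hi with h' | h'
        · have := hs i h'
          simpa [h'.le, Nat.succ_le_of_lt h'] using this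
        · subst h'
          simpa [hm] using h
  obtain ⟨m, c, h0, hm, hn, hs⟩ := key _ h
  refine ⟨m, c, h0, hm, hn, ?_, ?_⟩
  · intro i hi
    obtain ⟨_, _, b, hb⟩ := hs i hi
    rw [hb]; exact le_sup_left
  · intro i hi _
    obtain ⟨hA, _, b, hb⟩ := hs i hi
    have hbm : b ∈ c (i + 1) := by
      rw [hb]; exact (le_sup_right : _ ≤ c i ⊔ Subgroup.zpowers b) (Subgroup.mem_zpowers b)
    refine ⟨QuotientGroup.mk (⟨b, hbm⟩ : c (i+1)), ?_⟩
    intro x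
    obtain ⟨⟨x, hx⟩, rfl⟩ := QuotientGroup.mk_surjective x
    have hx' := hx
    rw [hb, mem_sup_zpowers hA] at hx'
    obtain ⟨n, hn⟩ := hx'
    refine ⟨-n, ?_⟩
    have : (QuotientGroup.mk ((⟨x, hx⟩ : c (i+1)) * ⟨b, hbm⟩ ^ n) :
       ↥(c (i + 1)) ⧸ (c i).subgroupOf (c (i + 1))) = 1 := by
      rw [QuotientGroup.eq_one_iff, Subgroup.mem_subgroupOf]
      simpa using hn
    rw [QuotientGroup.mk_mul, QuotientGroup.mk_zpow] at this
    simpa using (eq_inv_of_mul_eq_one_left this).symm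

theorem frattini_arg {G : Type*} [Group G] [Finite G] {q : ℕ} [Fact q.Prime] {Q N : Subgroup G}
    [N.Normal] (hQ : IsPGroup q Q) (hQN : Q ≤ N) (h : ¬ q ∣ Q.relIndex N) :
    Subgroup.normalizer (Q : Set G) ⊔ N = ⊤ := by
  have h1 : IsPGroup q (Q.subgroupOf N) := hQ.comap_subtype
  have := Sylow.normalizer_sup_eq_top (IsPGroup.toSylow h1 h)
  rw [← Subgroup.map_subgroupOf_eq_of_le hQN]
  exact this

theorem prime_index_of_normal {G : Type*} [Group G] [Finite G] {M : Subgroup G} (hM : IsCoatom M)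
    (hn : M.Normal) : M.index.Prime := by
  have h1 : M.index ≠ 1 := fun h => hM.1 (Subgroup.index_eq_one.1 h)
  obtain ⟨r, hr, hd⟩ := Nat.exists_prime_and_dvd h1
  have := Fact.mk hr
  obtain ⟨x, hx⟩ := exists_prime_orderOf_dvd_card' (G := G ⧸ M) r hd
  have h2 : (Subgroup.zpowers x).comap (QuotientGroup.mk' M) = ⊤ := by
    apply hM.2
    refine lt_of_le_of_ne (fun y hy => ?_) ?_
    · rw [Subgroup.mem_comap, QuotientGroup.mk'_apply, (QuotientGroup.eq_one_iff y).2 hy]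
      exact one_mem _
    · intro h
      obtain ⟨y, rfl⟩ := QuotientGroup.mk_surjective x
      have : y ∈ M := by
        rw [h]; exact Subgroup.mem_zpowers _
      rw [(QuotientGroup.eq_one_iff y).2 this, orderOf_one] at hx
      exact hr.one_lt.ne hx
  have h3 : Subgroup.zpowers x = ⊤ := by
    apply Subgroup.comap_injective (QuotientGroup.mk'_surjective M)
    simpa using h2
  rw [Subgroup.index_eq_card, ← Subgroup.card_top, ← h3, Nat.card_zpowers, hx]
  exact hr

theorem prime_index_of_kSub {G : Type*} [Group G] [Finite G] {k : ℕ} {M : Subgroup G}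
    (hM : IsCoatom M) (h : KSubmodularIn k M ⊤) : M.index.Prime := by
  obtain ⟨m, c, h0, hm, hs⟩ := h
  have key : ∀ i ≤ m, c i = M ∨ M.index.Prime := by
    intro i
    induction i with
    | zero => intro _; exact Or.inl h0
    | succ i ih =>
      intro hi
      rcases ih (by omega) with h | h
      · obtain ⟨n, _, _, hle, hor⟩ := hs i (by omega)
        rw [h] at hle hor
        by_cases hc : c (i + 1) = M
        · exact Or.inl hc
        · right
          have ht : c (i + 1) = ⊤ := hM.2 _ (lt_of_le_of_ne hle (Ne.symm hc))
          rw [ht] at hor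
          rcases hor with hn | ⟨p, q, hp, hq, _, _, hi⟩
          · apply prime_index_of_normal hM
            exact ⟨fun x hx g => by
              simpa [Subgroup.mem_subgroupOf] using hn.conj_mem ⟨x, trivial⟩ hx ⟨g, trivial⟩⟩
          · have : (M.subgroupOf ⊤).index = M.index := Subgroup.relIndex_top_right M
            rw [← this, hi]; exact hp
      · exact Or.inr h
  rcases key m le_rfl with h | h
  · exact absurd (h.symm.trans hm) hM.1
  · exact h

theorem sylow_normal_of_largest {G : Type*} [Group G] [Finite G] {p : ℕ} [Fact p.Prime]
    (hG : ∀ M : Subgroup G, IsCoatom M → M.index.Prime)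
    (hp : ∀ q, q.Prime → q ∣ Nat.card G → q ≤ p) (P : Sylow p G) : (P : Subgroup G).Normal := by
  rw [← Subgroup.normalizer_eq_top_iff]
  rcases eq_top_or_exists_le_coatom (Subgroup.normalizer ((P : Subgroup G) : Set G)) with h | ⟨M, hM, hle⟩
  · exact h
  exfalso
  have hq := hG M hM
  have h1 : M.index ≤ p := hp _ hq (Subgroup.index_dvd_card M)
  have hPM : (P : Subgroup G) ≤ M := Subgroup.le_normalizer.trans hle
  have e1 := P.card_eq_index_normalizer
  have e2 := (P.subtype hPM).card_eq_index_normalizer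
  have e3 : (Subgroup.normalizer ((P.subtype hPM : Subgroup M) : Set M)) =
      (Subgroup.normalizer ((P : Subgroup G) : Set G)).subgroupOf M := by
    rw [Sylow.coe_subtype]
    exact (Subgroup.subgroupOf_normalizer_eq hPM).symm
  have c1 := card_sylow_modEq_one p G
  have c2 := card_sylow_modEq_one p M
  have e4 := Subgroup.relIndex_mul_index hle
  simp only [Sylow.coe_coe] at *
  rw [e3] at e2
  rw [Subgroup.relIndex, ← e2, ← e1] at e4
  have c3 : M.index ≡ 1 [MOD p] := by
    calc M.index = 1 * M.index := (one_mul _).symm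
      _ ≡ Nat.card (Sylow p M) * M.index [MOD p] := (c2.symm.mul_right _)
      _ = Nat.card (Sylow p G) := e4
      _ ≡ 1 [MOD p] := c1
  have h2 := hq.two_le
  have h3 := (Nat.modEq_iff_dvd' (by omega)).1 c3.symm
  have := Nat.le_of_dvd (by omega) h3
  omega

open scoped commutatorElement

theorem comm_mem_of_index {G : Type*} [Group G] [Finite G] {p : ℕ} [hp : Fact p.Prime]
    (P : Subgroup G) (hP : IsPGroup p P) (hPn : P.Normal) (M : Subgroup G) (hM : M.index = p)
    (g : G) (hg : (∃ a b : G, g = ⁅a, b⁆) ∨ (∃ a, g = a ^ (p - 1)) ∨ g ∈ P) (x : G) (hx : x ∈ P) :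
    ⁅g, x⁆ ∈ M := by
  apply M.normalCore_le
  set C := M.normalCore with hC
  have hidx : C.index ∣ Nat.factorial p := by
    rw [hC, Subgroup.normalCore_eq_ker, Subgroup.index_ker]
    have h2 : Nat.card (Equiv.Perm (G ⧸ M)) = Nat.factorial p := by
      rw [Nat.card_perm, ← Subgroup.index_eq_card, hM]
    rw [← h2]
    exact Subgroup.card_subgroup_dvd_card _
  let Q := P.map (QuotientGroup.mk' C)
  have hQn : Q.Normal := hPn.map _ (QuotientGroup.mk'_surjective C)
  have hQp : IsPGroup p Q := hP.map _
  have hQc : Nat.card Q ∣ p := by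
    obtain ⟨a, ha⟩ := IsPGroup.iff_card.1 hQp
    have h1 : p ^ a ∣ Nat.factorial p := by
      rw [← ha]
      exact (Subgroup.card_subgroup_dvd_card Q).trans hidx
    rw [ha]
    by_contra hcon
    have ha2 : 2 ≤ a := by
      by_contra h
      apply hcon
      interval_cases a <;> simp
    have h3 : p * p ∣ p * Nat.factorial (p - 1) := by
      rw [Nat.mul_factorial_pred hp.out.ne_zero, ← pow_two]
      exact (pow_dvd_pow p ha2).trans h1
    have h4 := Nat.dvd_of_mul_dvd_mul_left hp.out.pos h3
    have h5 := hp.out.dvd_factorial.1 h4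
    have := hp.out.pos
    omega
  have hcyc : IsCyclic Q := isCyclic_of_card_dvd_prime hQc
  let f : G →* MulAut Q := MulAut.conjNormal.comp (QuotientGroup.mk' C)
  let e := IsCyclic.mulAutMulEquiv Q
  have hf : f g = 1 := by
    rcases hg with ⟨a, b, rfl⟩ | ⟨a, rfl⟩ | hg
    · apply e.injective
      rw [map_commutatorElement, map_commutatorElement, map_one, commutatorElement_eq_one_iff_mul_comm, mul_comm]
    · apply e.injective
      rw [map_pow, map_pow, map_one]
      have ht : Nat.totient (Nat.card Q) ∣ p - 1 := by
        rw [← Nat.totient_prime hp.out]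
        exact Nat.totient_dvd_of_dvd hQc
      obtain ⟨t, ht⟩ := ht
      rw [ht, pow_mul, ZMod.pow_totient, one_pow]
    · ext y
      have := hcyc.isMulCommutative.is_comm.comm ⟨QuotientGroup.mk' C g, g, hg, rfl⟩ y
      have := congrArg Subtype.val this
      simp only [Subgroup.coe_mul] at this
      simp only [f, MonoidHom.comp_apply, MulAut.conjNormal_apply, MulAut.one_apply]
      rw [this]; simp
  have h1 := congrArg Subtype.val (DFunLike.congr_fun hf ⟨QuotientGroup.mk' C x, x, hx, rfl⟩)
  simp only [f, MonoidHom.comp_apply, MulAut.conjNormal_apply, MulAut.one_apply] at h1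
  have h2 : QuotientGroup.mk' C ⁅g, x⁆ = 1 := by
    rw [map_commutatorElement, commutatorElement_def, h1]; simp
  exact (QuotientGroup.eq_one_iff _).1 h2

theorem comm_mem_frattini {G : Type*} [Group G] [Finite G] {p : ℕ} [hp : Fact p.Prime]
    (hG : ∀ M : Subgroup G, IsCoatom M → M.index.Prime)
    (P : Subgroup G) (hP : IsPGroup p P) (hPn : P.Normal)
    (g : G) (hg : (∃ a b : G, g = ⁅a, b⁆) ∨ (∃ a, g = a ^ (p - 1)) ∨ g ∈ P) (x : G) (hx : x ∈ P) :
    ⁅g, x⁆ ∈ frattini G := by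
  simp only [frattini, Order.radical, Subgroup.mem_iInf]
  intro M hM
  replace hM : IsCoatom M := hM
  by_cases hPM : P ≤ M
  · apply hPM
    rw [commutatorElement_def]
    exact P.mul_mem (hPn.conj_mem _ hx _) (P.inv_mem hx)
  · have ht : M ⊔ P = ⊤ := hM.2 _ (left_lt_sup.2 hPM)
    apply comm_mem_of_index P hP hPn M _ g hg x hx
    have h2 : M.index ∣ Nat.card P := by
      have h3 : P.index = P.relIndex M := by
        rw [← Subgroup.relIndex_sup_right, ht, Subgroup.relIndex_top_right]
      obtain ⟨t, h4⟩ : P.index ∣ Nat.card M := h3 ▸ Subgroup.relIndex_dvd_card P M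
      have h5 := M.card_mul_index
      rw [← P.card_mul_index, h4] at h5
      refine ⟨t, ?_⟩
      have h6 : P.index ≠ 0 := Subgroup.index_ne_zero_of_finite
      apply Nat.eq_of_mul_eq_mul_left (Nat.pos_of_ne_zero h6)
      rw [mul_comm P.index, ← h5]; ring
    obtain ⟨a, ha⟩ := IsPGroup.iff_card.1 hP
    rw [ha] at h2
    exact (Nat.prime_dvd_prime_iff_eq (hG M hM) hp.out).1 ((hG M hM).dvd_of_dvd_pow h2)

theorem eigen_aux0 {V : Type*} [AddCommGroup V] [Finite V] [Nontrivial V] {p : ℕ}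
    [hp : Fact p.Prime] [Module (ZMod p) V] (T : Module.End (ZMod p) V) (hT : T ^ (p - 1) = 1) :
    ∃ (n : ℕ) (v : V), v ≠ 0 ∧ T v = n • v := by
  have hT' : Polynomial.aeval T (Polynomial.X ^ p - Polynomial.X : Polynomial (ZMod p)) = 0 := by
    have : T ^ p = T := by
      have h1 : T ^ (p - 1 + 1) = T := by rw [pow_succ, hT, one_mul]
      have h2 : p - 1 + 1 = p := Nat.sub_add_cancel hp.out.one_lt.le
      exact (congrArg (fun n => T ^ n) h2).symm.trans h1
    simp [this]
  have hdvd := minpoly.dvd (ZMod p) T hT'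
  have hs : (Polynomial.X ^ p - Polynomial.X : Polynomial (ZMod p)).Splits := by
    have := FiniteField.splits_X_pow_card_sub_X (K := ZMod p) p
    simpa using this
  have hfin : Module.Finite (ZMod p) V := Module.Finite.of_finite
  have hs2 := hs.of_dvd (FiniteField.X_pow_card_sub_X_ne_zero _ hp.out.one_lt) hdvd
  obtain ⟨μ, hμ⟩ := hs2.exists_eval_eq_zero
    (minpoly.degree_pos (Algebra.IsIntegral.isIntegral T)).ne'
  obtain ⟨v, hv⟩ := (Module.End.hasEigenvalue_of_isRoot hμ).exists_hasEigenvector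
  refine ⟨μ.val, v, hv.2, ?_⟩
  rw [hv.apply_eq_smul]
  conv_lhs => rw [← ZMod.natCast_zmod_val μ]
  rw [Nat.cast_smul_eq_nsmul]

theorem eigen_aux {A : Type*} [CommGroup A] [Finite A] [Nontrivial A] {p : ℕ} [hp : Fact p.Prime]
    (hA : ∀ a : A, a ^ p = 1) (φ : A →* A) (hφ : ∀ a, (φ^[p - 1]) a = a) :
    ∃ (n : ℕ) (a : A), a ≠ 1 ∧ φ a = a ^ n := by
  let _ : Module (ZMod p) (Additive A) := AddCommGroup.zmodModule (n := p) (fun x => hA x.toMul)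
  obtain ⟨n, v, hv, h⟩ := eigen_aux0 (p := p) ((MonoidHom.toAdditive φ).toZModLinearMap p) (by
    apply LinearMap.ext
    intro a
    rw [Module.End.pow_apply]
    exact hφ a.toMul)
  exact ⟨n, v.toMul, hv, h⟩
universe u


theorem caseB {G : Type*} [Group G] [Finite G] {p : ℕ} [hp : Fact p.Prime]
    (P : Subgroup G) (hP : IsPGroup p P) (hPn : P.Normal) (hne : P ≠ ⊥)
    (hcomm : ∀ a b : G, ⁅a, b⁆ ∈ P) (hpow : ∀ a : G, a ^ (p - 1) ∈ P) :
    ∃ x : G, x ≠ 1 ∧ (Subgroup.zpowers x).Normal := by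
  let V : Subgroup G :=
    { carrier := {x | x ∈ P ∧ (∀ y ∈ P, y * x = x * y) ∧ x ^ p = 1}
      one_mem' := ⟨P.one_mem, by simp, by simp⟩
      mul_mem' := by
        rintro a b ⟨h1, h2, h3⟩ ⟨h4, h5, h6⟩
        refine ⟨P.mul_mem h1 h4, fun y hy => ?_, ?_⟩
        · rw [← mul_assoc, h2 y hy, mul_assoc, h5 y hy, mul_assoc]
        · have hc : Commute a b := h5 a h1
          rw [hc.mul_pow, h3, h6, one_mul]
      inv_mem' := by
        rintro a ⟨h1, h2, h3⟩
        refine ⟨P.inv_mem h1, fun y hy => ?_, by simp [h3]⟩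
        have hc : Commute y a := h2 y hy
        exact hc.inv_right }
  have hVn : V.Normal := by
    refine ⟨?_⟩
    rintro x ⟨h1, h2, h3⟩ g
    refine ⟨hPn.conj_mem x h1 g, fun y hy => ?_, ?_⟩
    · have := h2 (g⁻¹ * y * g) (by simpa using hPn.conj_mem y hy g⁻¹)
      have := congrArg (fun z => g * z * g⁻¹) this
      simpa [mul_assoc] using this
    · rw [conj_pow, h3]; simp
  have hVne : V ≠ ⊥ := by
    have hnt : Nontrivial P := (Subgroup.nontrivial_iff_ne_bot P).2 hne
    have hc := hP.center_nontrivial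
    have hcp : IsPGroup p (Subgroup.center P) := hP.to_subgroup _
    obtain ⟨n, hn, hn2⟩ := hcp.nontrivial_iff_card.1 hc
    obtain ⟨x, hx⟩ := exists_prime_orderOf_dvd_card' (G := Subgroup.center P) p
      (by rw [hn2]; exact dvd_pow_self p hn.ne')
    intro h
    have hxV : ((x : P) : G) ∈ V := by
      refine ⟨x.1.2, fun y hy => ?_, ?_⟩
      · have := Subgroup.mem_center_iff.1 x.2 ⟨y, hy⟩
        exact congrArg Subtype.val this
      · have := pow_orderOf_eq_one x
        rw [hx] at this
        have := congrArg (fun z : Subgroup.center P => ((z : P) : G)) this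
        simpa using this
    rw [h, Subgroup.mem_bot] at hxV
    have : x = 1 := by
      ext; simpa using hxV
    rw [this, orderOf_one] at hx
    exact hp.out.one_lt.ne hx
  obtain ⟨N, ⟨hNn, hNne, hNV⟩, hmin⟩ := WellFounded.has_min
    (wellFounded_lt : WellFounded ((· < ·) : Subgroup G → Subgroup G → Prop))
    {N | N.Normal ∧ N ≠ ⊥ ∧ N ≤ V} ⟨V, hVn, hVne, le_rfl⟩
  have hab : ∀ x ∈ N, ∀ y ∈ N, x * y = y * x := fun x hx y hy => (hNV hy).2.1 x (hNV hx).1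
  have key : ∀ g : G, ∃ n : ℕ, ∀ y ∈ N, g * y * g⁻¹ = y ^ n := by
    intro g
    let _ : CommGroup N :=
      { (inferInstance : Group N) with mul_comm := fun a b => Subtype.ext (hab _ a.2 _ b.2) }
    have hnt : Nontrivial N := (Subgroup.nontrivial_iff_ne_bot N).2 hNne
    have hit : ∀ (n : ℕ) (a : N), (((MulAut.conjNormal g : MulAut N).toMonoidHom^[n] a : N) : G) =
        g ^ n * a * (g ^ n)⁻¹ := by
      intro n a
      induction n with
      | zero => simp
      | succ n ih =>
        rw [Function.iterate_succ_apply']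
        simp only [MulEquiv.toMonoidHom_eq_coe, MonoidHom.coe_coe, MulAut.conjNormal_apply] at ih ⊢
        rw [ih, pow_succ']; group
    obtain ⟨n, a, ha, h⟩ := eigen_aux (A := N) (p := p)
      (fun a => Subtype.ext (by simpa using (hNV a.2).2.2))
      (MulAut.conjNormal g : MulAut N).toMonoidHom (by
        intro a
        apply Subtype.ext
        rw [hit, (hNV a.2).2.1 _ (hpow g)]; simp)
    refine ⟨n, ?_⟩
    let K : Subgroup G :=
      { carrier := {y | y ∈ N ∧ g * y * g⁻¹ = y ^ n}
        one_mem' := ⟨N.one_mem, by simp⟩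
        mul_mem' := by
          rintro a b ⟨h1, h2⟩ ⟨h3, h4⟩
          refine ⟨N.mul_mem h1 h3, ?_⟩
          have hc : Commute a b := hab a h1 b h3
          rw [hc.mul_pow, ← h2, ← h4]; group
        inv_mem' := by
          rintro a ⟨h1, h2⟩
          refine ⟨N.inv_mem h1, ?_⟩
          rw [inv_pow, ← h2]; group }
    have hKn : K.Normal := by
      refine ⟨?_⟩
      rintro y ⟨h1, h2⟩ h
      refine ⟨hNn.conj_mem y h1 h, ?_⟩
      rw [conj_pow, ← h2]
      have h3 := (hNV h1).2.1 _ (hcomm g⁻¹ h⁻¹)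
      rw [commutatorElement_def] at h3
      have h4 : g * (h * y * h⁻¹) * g⁻¹ =
        h * g * ((g⁻¹ * h⁻¹ * g⁻¹⁻¹ * h⁻¹⁻¹) * y) * (h⁻¹ * g⁻¹) := by group
      rw [h4, h3]; group
    have hKN : K ≤ N := fun y hy => hy.1
    have hKne : K ≠ ⊥ := by
      intro hK
      have : (a : G) ∈ K := ⟨a.2, congrArg Subtype.val h⟩
      rw [hK, Subgroup.mem_bot] at this
      exact ha (Subtype.ext this)
    have hKeq : K = N := by
      by_contra hne
      exact hmin K ⟨hKn, hKne, hKN.trans hNV⟩ (lt_of_le_of_ne hKN hne)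
    intro y hy
    rw [← hKeq] at hy
    exact hy.2
  obtain ⟨x, hx⟩ := Subgroup.ne_bot_iff_exists_ne_one.1 hNne
  refine ⟨x, fun h => hx (Subtype.ext h), ⟨?_⟩⟩
  rintro _ ⟨k, rfl⟩ g
  obtain ⟨n, hn⟩ := key g
  refine ⟨n * k, ?_⟩
  simp only
  rw [← conj_zpow, hn _ x.2, zpow_mul, zpow_natCast]

theorem le_normalizer_sup {G : Type*} [Group G] (H A B : Subgroup G)
    (hA : ∀ h ∈ H, ∀ a ∈ A, h * a * h⁻¹ ∈ A ⊔ B) (hB : ∀ h ∈ H, ∀ a ∈ B, h * a * h⁻¹ ∈ A ⊔ B) :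
    H ≤ Subgroup.normalizer ((A ⊔ B : Subgroup G) : Set G) := by
  have key : ∀ h ∈ H, ∀ s ∈ A ⊔ B, h * s * h⁻¹ ∈ A ⊔ B := by
    intro h hh
    have : A ⊔ B ≤ (A ⊔ B).comap (MulAut.conj h).toMonoidHom :=
      sup_le (fun a ha => hA h hh a ha) (fun a ha => hB h hh a ha)
    exact fun s hs => this hs
  intro h hh
  rw [Subgroup.mem_normalizer_iff]
  intro s
  refine ⟨key h hh s, fun hs => ?_⟩
  have := key h⁻¹ (H.inv_mem hh) _ hs
  simpa [mul_assoc] using this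

theorem caseA {G : Type*} [Group G] [Finite G] {p : ℕ} [hp : Fact p.Prime]
    (P : Subgroup G) (hP : IsPGroup p P) (hPn : P.Normal) (hidx : ¬ p ∣ P.index)
    (E : Subgroup G) (hE : SStep P E) (hne : P ≠ E)
    (hcomm : ∀ e ∈ E, ∀ x ∈ P, ⁅e, x⁆ ∈ frattini G) :
    ∃ Q : Subgroup G, Q.Normal ∧ Q ≠ ⊥ ∧ P ⊓ Q = ⊥ := by
  obtain ⟨_, hEn, b, hEb⟩ := hE
  let π := QuotientGroup.mk' P
  have hmapP : P.map π = ⊥ := by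
    rw [Subgroup.map_eq_bot_iff, QuotientGroup.ker_mk']
  have hmap : E.map π = Subgroup.zpowers (π b) := by
    rw [hEb, Subgroup.map_sup, hmapP, bot_sup_eq, MonoidHom.map_zpowers]
  have hzn : (Subgroup.zpowers (π b)).Normal := by
    rw [← hmap]; exact hEn.map _ (QuotientGroup.mk'_surjective P)
  have hb1 : orderOf (π b) ≠ 1 := by
    rw [Ne, orderOf_eq_one_iff]
    intro h
    apply hne
    rw [hEb, eq_comm, sup_eq_left, Subgroup.zpowers_le]
    exact (QuotientGroup.eq_one_iff _).1 h
  obtain ⟨q, hq, hqd⟩ := Nat.exists_prime_and_dvd hb1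
  have := Fact.mk hq
  have hqp : p ≠ q := by
    rintro rfl
    apply hidx
    rw [Subgroup.index_eq_card]
    exact hqd.trans (orderOf_dvd_natCard _)
  obtain ⟨j, hj⟩ := hqd
  have hj0 : j ≠ 0 := by
    rintro rfl
    exact (orderOf_pos (π b)).ne' (by simpa using hj)
  have hord : orderOf (π b ^ j) = q := by
    rw [orderOf_pow_of_dvd hj0 (hj ▸ Dvd.intro_left q rfl), hj, Nat.mul_div_cancel _ (Nat.pos_of_ne_zero hj0)]
  have hcn : (Subgroup.zpowers (π b ^ j)).Normal := by
    refine ⟨?_⟩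
    rintro _ ⟨k, rfl⟩ g
    obtain ⟨i, hi⟩ := hzn.conj_mem (π b) (Subgroup.mem_zpowers _) g
    simp only at hi ⊢
    refine ⟨i * k, ?_⟩
    simp only
    rw [← conj_zpow, ← conj_pow, ← hi, ← zpow_natCast, ← zpow_natCast, ← zpow_mul, ← zpow_mul,
      ← zpow_mul]
    congr 1; ring
  let L := (Subgroup.zpowers (π b ^ j)).comap π
  have hLn : L.Normal := hcn.comap π
  have hPker : P = (⊥ : Subgroup (G ⧸ P)).comap π := by
    rw [MonoidHom.comap_bot, QuotientGroup.ker_mk']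
  have hPL : P ≤ L := by
    conv_lhs => rw [hPker]
    exact Subgroup.comap_mono bot_le
  have hLE : L ≤ E := by
    have h1 : E = (E.map π).comap π := by
      rw [Subgroup.comap_map_eq, QuotientGroup.ker_mk', hEb]; simp
    rw [h1, hmap]
    apply Subgroup.comap_mono
    rw [Subgroup.zpowers_le]
    exact Subgroup.pow_mem _ (Subgroup.mem_zpowers _) _
  have hPLq : P.relIndex L = q := by
    conv_lhs => rw [hPker]
    rw [Subgroup.relIndex_comap, Subgroup.map_comap_eq_self_of_surjective (QuotientGroup.mk'_surjective P),
      Subgroup.relIndex_bot_left, Nat.card_zpowers, hord]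
  obtain ⟨Q0⟩ : Nonempty (Sylow q L) := inferInstance
  let Q := (Q0 : Subgroup L).map L.subtype
  have hQ : IsPGroup q Q := Q0.isPGroup'.map _
  have hQL : Q ≤ L := Subgroup.map_subtype_le _
  have hQi : ¬ q ∣ Q.relIndex L := by
    have h1 : Q.subgroupOf L = Q0 := by
      simp only [Q]
      rw [Subgroup.subgroupOf, Subgroup.comap_map_eq_self_of_injective L.subtype_injective]
    rw [Subgroup.relIndex, h1]
    exact Q0.not_dvd_index
  have hQP : L ≤ Q ⊔ P := by
    rw [← Subgroup.relIndex_eq_one]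
    have h1 : (Q ⊔ P).relIndex L ∣ Q.relIndex L := Subgroup.relIndex_dvd_of_le_left L le_sup_left
    have h2 : (Q ⊔ P).relIndex L ∣ q := hPLq ▸ Subgroup.relIndex_dvd_of_le_left L le_sup_right
    rcases (Nat.dvd_prime hq).1 h2 with h | h
    · exact h
    · exact absurd (h ▸ h1) hQi
  let T := Subgroup.normalizer (Q : Set G)
  have hQT : Q ≤ T := Subgroup.le_normalizer
  have hTP : T ⊔ P = ⊤ := by
    rw [eq_top_iff, ← frattini_arg hQ hQL hQi]
    exact sup_le le_sup_left (hQP.trans (sup_le_sup_right hQT P))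
  let F := P ⊓ frattini G
  have hFn : F.Normal := inferInstance
  have hSn : (Q ⊔ F).Normal := by
    rw [← Subgroup.normalizer_eq_top_iff, eq_top_iff, ← hTP]
    have hF : ∀ h : G, ∀ a ∈ F, h * a * h⁻¹ ∈ Q ⊔ F := fun h a ha =>
      (le_sup_right : F ≤ Q ⊔ F) (hFn.conj_mem a ha h)
    refine sup_le ?_ ?_ <;> apply le_normalizer_sup
    · intro t ht a ha
      exact (le_sup_left : Q ≤ Q ⊔ F) ((Subgroup.mem_normalizer_iff.1 ht a).1 ha)
    · exact fun h _ => hF h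
    · intro x hx a ha
      have h1 : ⁅a, x⁆ ∈ F := by
        refine ⟨?_, hcomm a (hLE (hQL ha)) x hx⟩
        rw [commutatorElement_def]
        exact P.mul_mem (hPn.conj_mem _ hx _) (P.inv_mem hx)
      have h2 : x * a * x⁻¹ = ⁅a, x⁆⁻¹ * a := by rw [commutatorElement_def]; group
      rw [h2]
      exact (Q ⊔ F).mul_mem ((Q ⊔ F).inv_mem ((le_sup_right : F ≤ Q ⊔ F) h1)) ((le_sup_left : Q ≤ Q ⊔ F) ha)
    · exact fun h _ => hF h
  have hSL : Q ⊔ F ≤ L := sup_le hQL (inf_le_left.trans hPL)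
  have hQS : ¬ q ∣ Q.relIndex (Q ⊔ F) := fun h => hQi (by
    rw [← Subgroup.relIndex_mul_relIndex Q (Q ⊔ F) L le_sup_left hSL]
    exact h.mul_right _)
  have hT : T = ⊤ := by
    apply frattini_nongenerating
    rw [eq_top_iff, ← frattini_arg hQ le_sup_left hQS]
    exact sup_le le_sup_left (sup_le (hQT.trans le_sup_left) (inf_le_right.trans le_sup_right))
  refine ⟨Q, Subgroup.normalizer_eq_top_iff.1 hT, ?_, ?_⟩
  · intro h
    apply hQi
    rw [h, Subgroup.relIndex_bot_left, ← hPLq]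
    exact Subgroup.relIndex_dvd_card P L
  · exact (IsPGroup.disjoint_of_ne p q hqp P Q hP hQ).eq_bot

theorem main_ind (n : ℕ) : ∀ (G : Type u) [Group G] [Finite G], Nat.card G = n →
    (∀ M : Subgroup G, IsCoatom M → M.index.Prime) → SSChain (⊥ : Subgroup G) ⊤ := by
  induction n using Nat.strong_induction_on with
  | _ n ih =>
  intro G _ _ hn hG
  by_cases h1 : Nat.card G = 1
  · have : Subsingleton G := (Nat.card_eq_one_iff_unique.1 h1).1
    have h2 : (⊥ : Subgroup G) = ⊤ := Subsingleton.elim _ _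
    rw [h2]
    exact Relation.ReflTransGen.refl
  have hquot : ∀ (N : Subgroup G) [N.Normal], N ≠ ⊥ → SSChain (⊥ : Subgroup (G ⧸ N)) ⊤ := by
    intro N _ hN
    refine ih (Nat.card (G ⧸ N)) ?_ (G ⧸ N) rfl ?_
    · rw [← hn, Subgroup.card_eq_card_quotient_mul_card_subgroup N]
      have h2 : 1 < Nat.card N := (Subgroup.one_lt_card_iff_ne_bot N).2 hN
      have h3 : 0 < Nat.card (G ⧸ N) := Nat.card_pos
      exact (Nat.lt_mul_iff_one_lt_right h3).2 h2
    · intro M hM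
      rw [← Subgroup.index_comap_of_surjective M (QuotientGroup.mk'_surjective N)]
      exact hG _ (Subgroup.isCoatom_comap_of_surjective (QuotientGroup.mk'_surjective N) hM)
  have hnz : Nat.card G ≠ 0 := Nat.card_pos.ne'
  have hpf : (Nat.card G).primeFactors.Nonempty := by
    rw [Nat.nonempty_primeFactors]
    omega
  obtain ⟨p, hpm, hpmax⟩ := Finset.exists_max_image (Nat.card G).primeFactors id hpf
  have hp : p.Prime := Nat.prime_of_mem_primeFactors hpm
  have hpd : p ∣ Nat.card G := Nat.dvd_of_mem_primeFactors hpm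
  have := Fact.mk hp
  obtain ⟨P0⟩ : Nonempty (Sylow p G) := inferInstance
  have hPn : (P0 : Subgroup G).Normal := sylow_normal_of_largest (p := p) hG
    (fun q hq hqd => hpmax q (Nat.mem_primeFactors.2 ⟨hq, hqd, hnz⟩)) P0
  have hPne : (P0 : Subgroup G) ≠ ⊥ := P0.ne_bot_of_dvd_card hpd
  have hPp : IsPGroup p (P0 : Subgroup G) := P0.isPGroup'
  have hPi : ¬ p ∣ (P0 : Subgroup G).index := P0.not_dvd_index
  generalize (P0 : Subgroup G) = P at *
  let D := (Subgroup.centralizer ((P.map (QuotientGroup.mk' (frattini G)) :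
    Subgroup (G ⧸ frattini G)) : Set (G ⧸ frattini G))).comap (QuotientGroup.mk' (frattini G))
  have hmn : (P.map (QuotientGroup.mk' (frattini G))).Normal :=
    hPn.map _ (QuotientGroup.mk'_surjective _)
  have hDn : D.Normal := Subgroup.Normal.comap inferInstance _
  have hD : ∀ g, g ∈ D ↔ ∀ x ∈ P, ⁅g, x⁆ ∈ frattini G := by
    intro g
    simp only [D, Subgroup.mem_comap, Subgroup.mem_centralizer_iff_commutator_eq_one']
    constructor
    · intro h x hx
      have := h (QuotientGroup.mk' _ x) ⟨x, hx, rfl⟩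
      rw [← map_commutatorElement] at this
      exact (QuotientGroup.eq_one_iff _).1 this
    · rintro h _ ⟨x, hx, rfl⟩
      rw [← map_commutatorElement]
      exact (QuotientGroup.eq_one_iff _).2 (h x hx)
  have hkey := comm_mem_frattini hG P hPp hPn
  have hPD : P ≤ D := fun g hg => (hD g).2 (hkey g (Or.inr (Or.inr hg)))
  by_cases hPDe : P = D
  · obtain ⟨x, hx, hxn⟩ := caseB P hPp hPn hPne
      (fun a b => by rw [hPDe]; exact (hD _).2 (hkey _ (Or.inl ⟨a, b, rfl⟩)))
      (fun a => by rw [hPDe]; exact (hD _).2 (hkey _ (Or.inr (Or.inl ⟨a, rfl⟩))))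
    have h2 := SSChain.of_quot (hquot (Subgroup.zpowers x) (by simpa using hx))
    exact Relation.ReflTransGen.head ⟨inferInstance, hxn, x, by simp⟩ h2
  · have h2 := (SSChain.of_quot (hquot P hPne)).inf D hDn
    rw [inf_eq_left.2 hPD, top_inf_eq] at h2
    obtain ⟨E, hE, hPE, hED⟩ := h2.exists_first hPDe
    obtain ⟨Q, hQn, hQne, hPQ⟩ := caseA P hPp hPn hPi E hE hPE
      (fun e he => (hD e).1 (hED he))
    exact SSChain.subdirect hPQ (hquot P hPne) (hquot Q hQne)

/-- Lemma 3.3(1): if every maximal subgroup of `G` is `k`-submodular in `G`,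
then `G` is supersoluble. -/
theorem isSupersolvable_of_maximal_kSubmodular {G : Type*} [Group G] [Finite G]
    {k : ℕ} (hk : 0 < k)
    (hmax : ∀ M : Subgroup G, IsCoatom M → KSubmodularIn k M ⊤) :
    IsSupersolvable G := by
  exact (main_ind _ G rfl fun M hM => prime_index_of_kSub hM (hmax M hM)).isSupersolvable
end

section
/- Let H and U be subgroups of a finite group G. If H is k-submodular in G, then H ∩ U is k-submodular in U. -/
open Pointwise

theorem ksm_refl {G : Type*} [Group G] (k : ℕ) (H : Subgroup G) : KSubmodularIn k H H :=
  ⟨0, fun _ => H, rfl, rfl, fun i hi => absurd hi (Nat.not_lt_zero i)⟩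

theorem ksm_head {G : Type*} [Group G] {k n : ℕ} {H K L : Subgroup G} (h0 : 0 < n) (hn : n ≤ k)
    (h : ModularlyEmbedded n H K) (h2 : KSubmodularIn k K L) : KSubmodularIn k H L := by
  obtain ⟨m, c, hc0, hcm, hc⟩ := h2
  refine ⟨m + 1, fun i => Nat.casesOn i H c, rfl, hcm, ?_⟩
  intro i hi
  cases i with
  | zero => exact ⟨n, h0, hn, by simpa [hc0] using h⟩
  | succ i => exact hc i (by omega)

theorem ksm_trans {G : Type*} [Group G] {k : ℕ} {L : Subgroup G} (m : ℕ) :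
    ∀ (A B : Subgroup G) (c : ℕ → Subgroup G), c 0 = A → c m = B →
      (∀ i < m, ∃ n : ℕ, 0 < n ∧ n ≤ k ∧ ModularlyEmbedded n (c i) (c (i + 1))) →
      KSubmodularIn k B L → KSubmodularIn k A L := by
  induction m with
  | zero => rintro A B c rfl rfl _ h; exact h
  | succ m ih =>
    rintro A B c rfl rfl hc h
    obtain ⟨n, h0, hn, hme⟩ := hc 0 (by omega)
    exact ksm_head h0 hn hme
      (ih _ _ (fun i => c (i + 1)) rfl rfl (fun i hi => hc (i + 1) (by omega)) h)

theorem ksm_chain {G : Type*} [Group G] {k : ℕ} {L : Subgroup G} (m : ℕ) :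
    ∀ (c : ℕ → Subgroup G), c m = L →
      (∀ i < m, KSubmodularIn k (c i) (c (i + 1))) → KSubmodularIn k (c 0) L := by
  induction m with
  | zero => rintro c rfl _; exact ksm_refl k _
  | succ m ih =>
    rintro c hcm hc
    obtain ⟨m', c', h0', hm', hc'⟩ := hc 0 (by omega)
    exact ksm_trans m' _ _ c' h0' hm' hc'
      (ih (fun i => c (i + 1)) hcm (fun i hi => hc (i + 1) (by omega)))

theorem ksm_subnormal {G : Type*} [Group G] {k : ℕ} (hk : 0 < k) (V : Subgroup G)
    (T : Subgroup V) (hT : T.IsSubnormal) : KSubmodularIn k (T.map V.subtype) V := by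
  induction hT with
  | top =>
    rw [← MonoidHom.range_eq_map, Subgroup.range_subtype]
    exact ksm_refl k V
  | step A B h_le hSubn hN ih =>
    refine ksm_head one_pos hk ⟨Subgroup.map_mono h_le, Or.inl ?_⟩ ih
    rw [Subgroup.normal_subgroupOf_iff_le_normalizer h_le] at hN
    rw [Subgroup.normal_subgroupOf_iff_le_normalizer (Subgroup.map_mono h_le)]
    exact le_trans (Subgroup.map_mono hN) (Subgroup.le_normalizer_map _)

theorem ksm_nilp_subnormal {A : Type*} [Group A] [Finite A] [Group.IsNilpotent A] :
    ∀ (T : Subgroup A), T.IsSubnormal := by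
  intro T
  induction T using WellFoundedGT.induction with
  | ind T ih =>
    by_cases h : T = ⊤
    · subst h; exact .top
    · have hlt := Group.normalizerCondition_of_isNilpotent (G := A) T (lt_top_iff_ne_top.2 h)
      exact .step T _ hlt.le (ih _ hlt) Subgroup.normal_in_normalizer

theorem ksm_core_subnormal {A : Type*} [Group A] [Finite A] (T : Subgroup A)
    (h : Group.IsNilpotent (A ⧸ T.normalCore)) : T.IsSubnormal := by
  have h1 := (ksm_nilp_subnormal (T.map (QuotientGroup.mk' T.normalCore))).comap
    (QuotientGroup.mk' T.normalCore)
  rwa [Subgroup.comap_map_eq_self] at h1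
  rw [QuotientGroup.ker_mk']
  exact T.normalCore_le

theorem ksm_core {A B : Type*} [Group A] [Group B] [Finite A] [Finite B] (f : A →* B)
    (S : Subgroup B) {p q n : ℕ} (hp : p.Prime) (hq : q.Prime)
    (hc : Nat.card (B ⧸ S.normalCore) = p * q ^ n) (hi : S.index = p)
    (hnil : ¬ Group.IsNilpotent (A ⧸ (S.comap f).normalCore)) :
    ∃ m, 0 < m ∧ m ≤ n ∧ Nat.card (A ⧸ (S.comap f).normalCore) = p * q ^ m ∧
      (S.comap f).index = p := by
  set T := S.comap f with hT
  have hN : S.normalCore.comap f ≤ T.normalCore := by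
    refine Subgroup.normal_le_normalCore.2 ?_
    exact Subgroup.comap_mono S.normalCore_le
  have hcS : S.normalCore.index = p * q ^ n := hc
  have hmul := Subgroup.relIndex_mul_index S.normalCore_le
  have hmulT := Subgroup.relIndex_mul_index T.normalCore_le
  have hSr : S.normalCore.relIndex S = q ^ n := by
    rw [hcS, hi, mul_comm] at hmul
    exact Nat.eq_of_mul_eq_mul_left hp.pos hmul
  have hd1 : T.normalCore.index ∣ p * q ^ n := by
    refine (Subgroup.index_dvd_of_le hN).trans ?_
    rw [Subgroup.index_comap, ← hcS]
    exact Subgroup.relIndex_dvd_index_of_normal _ _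
  have hd2 : T.normalCore.relIndex T ∣ q ^ n := by
    refine (Subgroup.relIndex_dvd_of_le_left T hN).trans ?_
    rw [Subgroup.relIndex_comap, ← hSr]
    have hle : T.map f ≤ S := Subgroup.map_comap_le f S
    have := Subgroup.relIndex_dvd_index_of_normal (S.normalCore.subgroupOf S)
      ((T.map f).subgroupOf S)
    rwa [Subgroup.relIndex_subgroupOf hle] at this
  have hle : T.index ≤ p := by
    rw [hT, Subgroup.index_comap, ← hi, ← Subgroup.relIndex_top_right S]
    refine Subgroup.relIndex_le_of_le_right le_top ?_
    rw [Subgroup.relIndex_top_right, hi]; exact hp.ne_zero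
  have hnq : ∀ r j, r.Prime → T.normalCore.index ≠ r ^ j := by
    intro r j hr h
    have := Fact.mk hr
    exact hnil (IsPGroup.of_card (n := j) h).isNilpotent
  have hpq : p ≠ q := by
    rintro rfl
    rw [← pow_succ'] at hd1
    obtain ⟨j, _, hj⟩ := (Nat.dvd_prime_pow hp).1 hd1
    exact hnq p j hp hj
  obtain ⟨j, hjn, hj⟩ := (Nat.dvd_prime_pow hq).1 hd2
  have hpd : p ∣ T.normalCore.index := by
    by_contra hnd
    have : T.normalCore.index ∣ q ^ n :=
      (Nat.Coprime.dvd_of_dvd_mul_left ((Nat.Prime.coprime_iff_not_dvd hp).2 hnd).symm hd1)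
    obtain ⟨j, _, hj⟩ := (Nat.dvd_prime_pow hq).1 this
    exact hnq q j hq hj
  have hpT : T.index = p := by
    rw [← hmulT, hj] at hpd
    have : p ∣ T.index := Nat.Coprime.dvd_of_dvd_mul_left
      (Nat.Coprime.pow_right j ((Nat.coprime_primes hp hq).2 hpq)) hpd
    exact le_antisymm hle (Nat.le_of_dvd (Nat.pos_of_ne_zero Subgroup.index_ne_zero_of_finite) this)
  have hidx : T.normalCore.index = p * q ^ j := by rw [← hmulT, hj, hpT, mul_comm]
  refine ⟨j, ?_, hjn, hidx, hpT⟩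
  rcases Nat.eq_zero_or_pos j with rfl | h
  · exact absurd (by simpa using hidx) (hnq p 1 hp)
  · exact h

theorem ksm_step {G : Type*} [Group G] [Finite G] {k n : ℕ} (hk : 0 < k) (hn : n ≤ k)
    {H K : Subgroup G} (U : Subgroup G) (h : ModularlyEmbedded n H K) :
    KSubmodularIn k (H ⊓ U) (K ⊓ U) := by
  obtain ⟨hHK, h⟩ := h
  have hle : H ⊓ U ≤ K ⊓ U := inf_le_inf_right U hHK
  have hVK : K ⊓ U ≤ K := inf_le_left
  have hT : (H ⊓ U).subgroupOf (K ⊓ U) =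
      (H.subgroupOf K).comap (Subgroup.inclusion hVK) := by
    ext x
    simp only [Subgroup.mem_subgroupOf, Subgroup.mem_comap, Subgroup.mem_inf,
      Subgroup.coe_inclusion]
    exact ⟨fun h => h.1, fun h => ⟨h, x.2.2⟩⟩
  rcases h with h | ⟨p, q, hp, hq, -, hc, hi⟩
  · refine ksm_head one_pos hk ⟨hle, Or.inl ?_⟩ (ksm_refl k _)
    rw [hT]
    exact h.comap _
  · by_cases hnil : Group.IsNilpotent
      (↥(K ⊓ U) ⧸ ((H ⊓ U).subgroupOf (K ⊓ U)).normalCore)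
    · have := ksm_subnormal hk (K ⊓ U) _ (ksm_core_subnormal _ hnil)
      rwa [Subgroup.map_subgroupOf_eq_of_le hle] at this
    · obtain ⟨m, hm0, hmn, h1, h2⟩ := ksm_core (Subgroup.inclusion hVK) (H.subgroupOf K) hp hq
        hc hi (by rw [← hT]; exact hnil)
      refine ksm_head hm0 (hmn.trans hn)
        ⟨hle, Or.inr ⟨p, q, hp, hq, hnil, ?_, ?_⟩⟩ (ksm_refl k _)
      · rw [hT]; exact h1
      · rw [hT]; exact h2

/-- Lemma 3.5(1): if `H` is `k`-submodular in `G`, then `H ⊓ U` is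
`k`-submodular in `U`. -/
theorem kSubmodularIn_inf_of_kSubmodularIn {G : Type*} [Group G] [Finite G]
    {k : ℕ} (hk : 0 < k) {H : Subgroup G} (U : Subgroup G)
    (hsub : KSubmodularIn k H ⊤) : KSubmodularIn k (H ⊓ U) U := by
  obtain ⟨m, c, rfl, hm, hc⟩ := hsub
  refine ksm_chain m (fun i => c i ⊓ U) (by simp [hm]) fun i hi => ?_
  obtain ⟨n, -, hn, h⟩ := hc i hi
  exact ksm_step hk hn U h
end

section
/- Let G be a finite group. Every maximal subgroup of G is k-submodular in G if and only if G is supersoluble and for every complemented chief factor H/K of G, the group G/C_G(H/K) is either trivial or cyclic of order q^n for some prime q and some natural number n ≤ k. -/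
open Pointwise

/-- The centralizer C_G(H/K) of a factor `H/K`, where `H` and `K` are normal
subgroups of `G`: all `g` acting trivially on `H/K` by conjugation. -/
def chiefCentralizer {G : Type*} [Group G] (H K : Subgroup G)
    (hH : H.Normal) (hK : K.Normal) : Subgroup G where
  carrier := {g | ∀ h ∈ H, g * h * g⁻¹ * h⁻¹ ∈ K}
  one_mem' := by intro h _; simpa using K.one_mem
  mul_mem' := by
    intro a b ha hb h hh
    have h2 : b * h * b⁻¹ ∈ H := hH.conj_mem h hh b
    have hmem := K.mul_mem (ha _ h2) (hb h hh)
    convert hmem using 1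
    group
  inv_mem' := by
    intro a ha h hh
    have h2 : a⁻¹ * h * a ∈ H := by simpa using hH.conj_mem h hh a⁻¹
    have k1 := K.inv_mem (ha _ h2)
    convert k1 using 1
    group

/-- `H/K` is a chief factor of `G`: both are normal in `G`, `K < H`, and there
is no normal subgroup of `G` strictly between `K` and `H`. -/
def IsChiefFactor {G : Type*} [Group G] (H K : Subgroup G) : Prop :=
  H.Normal ∧ K.Normal ∧ K < H ∧
    ∀ L : Subgroup G, L.Normal → K ≤ L → L ≤ H → L = K ∨ L = H


theorem ks_autHom {G : Type*} [Group G] [Finite G] (H K : Subgroup G) (hH : H.Normal)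
    (hK : K.Normal) (hKH : K ≤ H) (p : ℕ) (hp : p.Prime) (hrel : K.relIndex H = p) :
    ∃ φ : G →* (ZMod p)ˣ, (∀ g, φ g = 1 ↔ ∀ h ∈ H, g * h * g⁻¹ * h⁻¹ ∈ K) ∧
      ∀ g ∈ H, φ g = 1 := by
  classical
  have : Fact p.Prime := ⟨hp⟩
  let Hb : Subgroup (G ⧸ K) := H.map (QuotientGroup.mk' K)
  have hN : Hb.Normal := hH.map _ (QuotientGroup.mk'_surjective K)
  have hcard : Nat.card Hb = p := by
    rw [← hrel, ← Subgroup.relIndex_ker, QuotientGroup.ker_mk']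
  have hcyc : IsCyclic Hb := isCyclic_of_prime_card hcard
  let e : MulAut Hb ≃* (ZMod (Nat.card Hb))ˣ := IsCyclic.mulAutMulEquiv Hb
  let φ0 : G →* MulAut Hb := (MulAut.conjNormal (H := Hb)).comp (QuotientGroup.mk' K)
  have h1 : ∀ g, φ0 g = 1 ↔ ∀ h ∈ H, g * h * g⁻¹ * h⁻¹ ∈ K := by
    intro g
    constructor
    · intro h0 h hh
      have := congrArg (fun f : MulAut Hb => ((f ⟨QuotientGroup.mk' K h, ⟨h, hh, rfl⟩⟩ : Hb) : G ⧸ K)) h0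
      simp only [φ0, MonoidHom.comp_apply, MulAut.conjNormal_apply, MulAut.one_apply] at this
      rw [← QuotientGroup.ker_mk' K, MonoidHom.mem_ker]
      simp only [map_mul, map_inv]
      rw [this]; simp
    · intro h0
      ext ⟨x, h, hh, rfl⟩
      simp only [φ0, MonoidHom.comp_apply, MulAut.conjNormal_apply, MulAut.one_apply]
      have := h0 h hh
      rw [← QuotientGroup.ker_mk' K, MonoidHom.mem_ker] at this
      simp only [map_mul, map_inv] at this
      exact mul_inv_eq_one.mp this
  rw [← hcard]
  refine ⟨e.toMonoidHom.comp φ0, ?_, ?_⟩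
  · intro g
    rw [← h1]
    simp
  · intro g hg
    have : φ0 g = 1 := by
      ext ⟨x, h, hh, rfl⟩
      simp only [φ0, MonoidHom.comp_apply, MulAut.conjNormal_apply, MulAut.one_apply]
      have hc := hcyc.isMulCommutative.is_comm.comm (⟨QuotientGroup.mk' K g, ⟨g, hg, rfl⟩⟩ : Hb) ⟨QuotientGroup.mk' K h, ⟨h, hh, rfl⟩⟩
      have hc := congrArg Subtype.val hc
      simp only [Subgroup.coe_mul] at hc
      rw [hc]; simp
    simp [this]

theorem ks_cent {G : Type*} [Group G] [Finite G] (R D M : Subgroup G) (hR : R.Normal)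
    (hD : D = M.normalCore) (hDR : D ≤ R) (p : ℕ) (hp : p.Prime) (hrel : D.relIndex R = p)
    (hRM : R ⊔ M = ⊤) (g : G) : (∀ h ∈ R, g * h * g⁻¹ * h⁻¹ ∈ D) ↔ g ∈ R := by
  have hDn : D.Normal := by rw [hD]; infer_instance
  have hDM : D ≤ M := by rw [hD]; exact M.normalCore_le
  obtain ⟨φ, hφ, hφR⟩ := ks_autHom R D hR hDn hDR p hp hrel
  rw [← hφ]
  refine ⟨fun hg => ?_, hφR g⟩
  have hRC : R ≤ φ.ker := fun x hx => hφR x hx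
  have hn : (φ.ker ⊓ M).Normal := by
    rw [← Subgroup.normalizer_eq_top_iff, eq_top_iff, ← hRM, sup_le_iff]
    constructor
    · intro r hr
      rw [Subgroup.mem_normalizer_iff]
      have key : ∀ s ∈ R, ∀ x ∈ φ.ker ⊓ M, s * x * s⁻¹ ∈ φ.ker ⊓ M := by
        intro s hs x hx
        have h1 : x * s * x⁻¹ * s⁻¹ ∈ D := (hφ x).1 hx.1 s hs
        have h2 : x⁻¹ * (x * s * x⁻¹ * s⁻¹)⁻¹ * x⁻¹⁻¹ ∈ D := hDn.conj_mem _ (inv_mem h1) x⁻¹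
        have h3 : s * x * s⁻¹ = x * (x⁻¹ * (x * s * x⁻¹ * s⁻¹)⁻¹ * x⁻¹⁻¹) := by group
        rw [h3]
        exact mul_mem hx ⟨hRC (hDR h2), hDM h2⟩
      intro x
      refine ⟨key r hr x, fun hx => ?_⟩
      have := key r⁻¹ (inv_mem hr) _ hx
      convert this using 1; group
    · intro m hm
      rw [Subgroup.mem_normalizer_iff]
      intro x
      constructor
      · intro hx
        exact Subgroup.mem_inf.2 ⟨(MonoidHom.normal_ker φ).conj_mem _ hx.1 m, mul_mem (mul_mem hm hx.2) (inv_mem hm)⟩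
      · intro hx
        have h1 := (MonoidHom.normal_ker φ).conj_mem _ hx.1 m⁻¹
        have h2 := mul_mem (mul_mem (inv_mem hm) hx.2) hm
        refine Subgroup.mem_inf.2 ⟨?_, ?_⟩
        · convert h1 using 1; group
        · convert h2 using 1; group
  have hle : φ.ker ⊓ M ≤ D := by
    rw [hD]
    exact Subgroup.normal_le_normalCore.2 inf_le_right
  have hgt : g ∈ R ⊔ M := by rw [hRM]; trivial
  obtain ⟨r, hr, m, hm, rfl⟩ := Subgroup.mem_sup_of_normal_left.1 hgt
  refine mul_mem hr (hDR (hle ⟨?_, hm⟩))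
  have : φ r = 1 := hφR r hr
  rw [map_mul, this, one_mul] at hg
  exact hg

theorem ks_top_conv {G : Type*} [Group G] (n : ℕ) (M : Subgroup G) :
    ModularlyEmbedded n M ⊤ ↔ (M.Normal ∨ ∃ p q : ℕ, p.Prime ∧ q.Prime ∧
      ¬ Group.IsNilpotent (G ⧸ M.normalCore) ∧ M.normalCore.index = p * q ^ n ∧ M.index = p) := by
  have hcore : (M.subgroupOf ⊤).normalCore = M.normalCore.subgroupOf ⊤ := by
    ext ⟨x, hx⟩
    simp only [Subgroup.mem_subgroupOf, Subgroup.normalCore]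
    constructor
    · intro h g
      exact h ⟨g, trivial⟩
    · intro h g
      exact h g
  have hc2 : (M.subgroupOf ⊤).normalCore.map (Subgroup.topEquiv (G := G)).toMonoidHom = M.normalCore := by
    rw [hcore]
    ext x
    simp [Subgroup.mem_map, Subgroup.mem_subgroupOf]
  let e : (↥(⊤ : Subgroup G) ⧸ (M.subgroupOf ⊤).normalCore) ≃* G ⧸ M.normalCore :=
    QuotientGroup.congr _ _ (Subgroup.topEquiv (G := G)) hc2
  have hnorm : (M.subgroupOf ⊤).Normal ↔ M.Normal := by
    constructor
    · intro h
      refine ⟨fun x hx g => ?_⟩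
      have := h.conj_mem ⟨x, trivial⟩ hx ⟨g, trivial⟩
      exact this
    · intro h
      infer_instance
  have hnil : Group.IsNilpotent (↥(⊤ : Subgroup G) ⧸ (M.subgroupOf ⊤).normalCore) ↔
      Group.IsNilpotent (G ⧸ M.normalCore) :=
    Group.isNilpotent_congr e
  have hcard : Nat.card (↥(⊤ : Subgroup G) ⧸ (M.subgroupOf ⊤).normalCore) = M.normalCore.index :=
    Nat.card_congr e.toEquiv
  have hidx : (M.subgroupOf ⊤).index = M.index := M.relIndex_top_right
  unfold ModularlyEmbedded
  rw [hnorm, hnil, hcard, hidx]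
  simp

theorem ks_coatom_conv {G : Type*} [Group G] (k : ℕ) (hk : 0 < k) (M : Subgroup G) (hM : IsCoatom M) :
    KSubmodularIn k M ⊤ ↔ (M.Normal ∨ ∃ n p q : ℕ, 0 < n ∧ n ≤ k ∧ p.Prime ∧ q.Prime ∧
      ¬ Group.IsNilpotent (G ⧸ M.normalCore) ∧ M.normalCore.index = p * q ^ n ∧ M.index = p) := by
  constructor
  · rintro ⟨m, c, h0, hm, hc⟩
    have : ∃ n, 0 < n ∧ n ≤ k ∧ ModularlyEmbedded n M ⊤ := by
      by_contra hcon
      have hall : ∀ i ≤ m, c i = M := by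
        intro i
        induction i with
        | zero => intro _; exact h0
        | succ i ih =>
          intro hi
          have h1 := ih (by omega)
          obtain ⟨n, hn, hnk, hme⟩ := hc i (by omega)
          by_contra hne
          have hle := hme.1
          rw [h1] at hle
          have : c (i + 1) = ⊤ := hM.2 _ (lt_of_le_of_ne hle (Ne.symm hne))
          rw [h1, this] at hme
          exact hcon ⟨n, hn, hnk, hme⟩
      exact hM.1 ((hall m le_rfl).symm.trans hm)
    obtain ⟨n, hn, hnk, hme⟩ := this
    rcases (ks_top_conv n M).1 hme with h | ⟨p, q, h⟩
    · exact Or.inl h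
    · exact Or.inr ⟨n, p, q, hn, hnk, h⟩
  · intro h
    have : ∃ n, 0 < n ∧ n ≤ k ∧ ModularlyEmbedded n M ⊤ := by
      rcases h with h | ⟨n, p, q, hn, hnk, h⟩
      · exact ⟨1, one_pos, hk, (ks_top_conv 1 M).2 (Or.inl h)⟩
      · exact ⟨n, hn, hnk, (ks_top_conv n M).2 (Or.inr ⟨p, q, h⟩)⟩
    obtain ⟨n, hn, hnk, hme⟩ := this
    refine ⟨1, fun i => if i = 0 then M else ⊤, by simp, by simp, ?_⟩
    intro i hi
    obtain rfl : i = 0 := by omega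
    exact ⟨n, hn, hnk, by simpa using hme⟩


theorem ks_norm_grow {X : Type*} [Group X] [Finite X] (q : ℕ) (hq : q.Prime) (D Q : Subgroup X)
    (hQ : IsPGroup q Q) (hDQ : D < Q) : ∃ x ∈ Q, x ∈ Subgroup.normalizer (D : Set X) ∧ x ∉ D := by
  have : Fact q.Prime := ⟨hq⟩
  have hnil : Group.IsNilpotent Q := hQ.isNilpotent
  have hlt : D.subgroupOf Q < ⊤ := by
    rw [lt_top_iff_ne_top, Ne, Subgroup.subgroupOf_eq_top]
    exact not_le_of_gt hDQ
  have := Group.normalizerCondition_of_isNilpotent (G := Q) _ hlt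
  obtain ⟨x, hx, hxD⟩ := SetLike.exists_of_lt this
  refine ⟨x, x.2, ?_, hxD⟩
  rw [Subgroup.mem_normalizer_iff] at hx ⊢
  intro h
  constructor
  · intro hh
    exact (hx ⟨h, hDQ.le hh⟩).1 hh
  · intro hh
    have hQ' : h ∈ Q := by
      have := mul_mem (mul_mem (inv_mem x.2) (hDQ.le hh)) x.2
      convert this using 1; group
    exact (hx ⟨h, hQ'⟩).2 hh

theorem ks_pq {X : Type*} [Group X] [Finite X] (p q n : ℕ) (hp : p.Prime) (hq : q.Prime)
    (hpq : p ≠ q) (Q : Subgroup X) (hcard : Nat.card X = p * q ^ n) (hidx : Q.index = p)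
    (hcore : Q.normalCore = ⊥) : ∃ R : Subgroup X, R.Normal ∧ Nat.card R = p := by
  classical
  have : Fact q.Prime := ⟨hq⟩
  have : Fact p.Prime := ⟨hp⟩
  have hQc : Nat.card Q = q ^ n := by
    have := Q.card_mul_index
    rw [hcard, hidx, mul_comm] at this
    exact Nat.eq_of_mul_eq_mul_left hp.pos this
  have hcop : Nat.Coprime p (q ^ n) := ((Nat.coprime_primes hp hq).2 hpq).pow_right n
  by_cases hQ0 : Q = ⊥
  · refine ⟨⊤, inferInstance, ?_⟩
    rw [← hidx, hQ0]; simp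
  have hQp : IsPGroup q Q := IsPGroup.of_card hQc
  have hfac : (Nat.card X).factorization q = n := by
    rw [hcard, Nat.factorization_mul hp.ne_zero (pow_ne_zero _ hq.ne_zero)]
    simp [hq.factorization_self, Nat.factorization_eq_zero_of_not_dvd
      (fun h => hpq ((Nat.prime_dvd_prime_iff_eq hq hp).1 h).symm)]
  let Q0 : Sylow q X := Sylow.ofCard Q (by rw [hQc, hfac])
  have hQ0c : (Q0 : Subgroup X) = Q := rfl
  have hSc : ∀ S : Sylow q X, Nat.card S = q ^ n := by
    intro S; rw [S.card_eq_multiplicity, hfac]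
  by_cases hTI : ∀ Q1 Q2 : Sylow q X, Q1 ≠ Q2 → (Q1 : Subgroup X) ⊓ Q2 = ⊥
  · -- trivial intersections
    have hnQ : Subgroup.normalizer (Q : Set X) = Q := by
      have hle : Q ≤ Subgroup.normalizer (Q : Set X) := Subgroup.le_normalizer
      have h1 := Subgroup.relIndex_mul_index hle
      rw [hidx] at h1
      rcases (Nat.dvd_prime hp).1 (Dvd.intro_left _ h1) with h | h
      · rw [Subgroup.index_eq_one, Subgroup.normalizer_eq_top_iff] at h
        exact absurd (Subgroup.normalCore_eq_self Q ▸ hcore) hQ0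
      · rw [h] at h1
        have : Q.relIndex (Subgroup.normalizer (Q : Set X)) = 1 := by
          have := hp.pos
          nlinarith
        exact le_antisymm (Subgroup.relIndex_eq_one.1 this) hle
    let U : Set X := {x | x ≠ 1 ∧ ∃ g : X, g * x * g⁻¹ ∈ Q}
    let F : (X ⧸ Q) × {m : Q // m ≠ 1} → U := fun a =>
      ⟨a.1.out * a.2.1 * a.1.out⁻¹, by
        refine ⟨?_, a.1.out⁻¹, ?_⟩
        · intro h
          apply a.2.2
          rw [mul_inv_eq_one, mul_eq_left] at h
          exact Subtype.ext h
        · have : a.1.out⁻¹ * (a.1.out * a.2.1 * a.1.out⁻¹) * a.1.out⁻¹⁻¹ = (a.2.1 : X) := by group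
          rw [this]; exact a.2.1.2⟩
    have hF : Function.Injective F := by
      rintro ⟨c1, ⟨m1, hm1⟩⟩ ⟨c2, ⟨m2, hm2⟩⟩ h
      have h : c1.out * m1 * c1.out⁻¹ = c2.out * m2 * c2.out⁻¹ := congrArg Subtype.val h
      have hcc : c1 = c2 := by
        have hS : c1.out • Q0 = c2.out • Q0 := by
          by_contra hne
          have := hTI _ _ hne
          have hmem : c1.out * m1 * c1.out⁻¹ ∈ ((c1.out • Q0 : Sylow q X) : Subgroup X) ⊓ (c2.out • Q0 : Sylow q X) := by
            refine Subgroup.mem_inf.2 ⟨?_, ?_⟩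
            · exact ⟨m1, m1.2, rfl⟩
            · rw [h]; exact ⟨m2, m2.2, rfl⟩
          rw [this, Subgroup.mem_bot, mul_inv_eq_one, mul_eq_left] at hmem
          exact hm1 (Subtype.ext hmem)
        have h2 : (c1.out⁻¹ * c2.out) • Q0 = Q0 := by
          rw [mul_smul, ← hS, inv_smul_smul]
        rw [Sylow.smul_eq_iff_mem_normalizer] at h2
        have h3 : c1.out⁻¹ * c2.out ∈ Q := hnQ.le h2
        rw [← QuotientGroup.eq] at h3
        simpa using h3
      subst hcc
      have : (m1 : X) = m2 := by simpa using h
      have : m1 = m2 := Subtype.ext this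
      subst this
      rfl
    have hUcard : p * (q ^ n - 1) ≤ U.ncard := by
      have h1 := Nat.card_le_card_of_injective F hF
      rw [Nat.card_prod] at h1
      have h2 : Nat.card (X ⧸ Q) = p := hidx
      have h3 : Nat.card {m : Q // m ≠ 1} = q ^ n - 1 := by
        have := Fintype.ofFinite Q
        rw [← hQc, Nat.card_eq_fintype_card, Nat.card_eq_fintype_card, Fintype.card_subtype_compl]
        simp
      rw [h2, h3, Nat.card_coe_set_eq] at h1
      exact h1
    have hUc : Uᶜ.ncard ≤ p := by
      have := Set.ncard_add_ncard_compl U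
      rw [hcard] at this
      have h2 : p * (q ^ n - 1) + p = p * q ^ n := by
        obtain ⟨t, ht⟩ := Nat.exists_eq_succ_of_ne_zero (pow_ne_zero n hq.ne_zero)
        rw [ht]; simp; ring
      omega
    obtain ⟨x, hx⟩ := exists_prime_orderOf_dvd_card' (G := X) p (by rw [hcard]; exact dvd_mul_right _ _)
    have hCc : Nat.card (Subgroup.zpowers x) = p := by rw [Nat.card_zpowers, hx]
    have hsub : (Subgroup.zpowers x : Set X) ⊆ Uᶜ := by
      rintro y hy ⟨hy1, g, hg⟩
      have h1 : orderOf y ∣ p := by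
        rw [← hCc]
        exact Subgroup.orderOf_dvd_natCard _ hy
      have h2 : orderOf y ∣ q ^ n := by
        have : orderOf (g * y * g⁻¹) = orderOf y := by
          have := orderOf_injective (MulAut.conj g).toMonoidHom (MulAut.conj g).injective y
          simpa using this
        rw [← this, ← hQc]
        exact Subgroup.orderOf_dvd_natCard _ hg
      have := Nat.eq_one_of_dvd_coprimes hcop h1 h2
      exact hy1 (orderOf_eq_one_iff.1 this)
    have heq : (Subgroup.zpowers x : Set X) = Uᶜ := by
      apply Set.eq_of_subset_of_ncard_le hsub
      rw [← Nat.card_coe_set_eq (Subgroup.zpowers x : Set X)]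
      exact hUc.trans hCc.ge
    refine ⟨Subgroup.zpowers x, ⟨?_⟩, hCc⟩
    intro y hy g
    rw [← SetLike.mem_coe, heq] at hy ⊢
    rintro ⟨h1, g', hg'⟩
    apply hy
    refine ⟨?_, g' * g, ?_⟩
    · rintro rfl; simp at h1
    · convert hg' using 1; group
  · exfalso
    push Not at hTI
    obtain ⟨A1, A2, hA, hA0⟩ := hTI
    have : Nonempty {a : Sylow q X × Sylow q X // a.1 ≠ a.2} := ⟨⟨(A1, A2), hA⟩⟩
    obtain ⟨⟨⟨Q1, Q2⟩, hne⟩, hmax⟩ := Finite.exists_max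
      (fun a : {a : Sylow q X × Sylow q X // a.1 ≠ a.2} =>
        Nat.card ((a.1.1 : Subgroup X) ⊓ (a.1.2 : Subgroup X) : Subgroup X))
    simp only at hne
    set D : Subgroup X := (Q1 : Subgroup X) ⊓ Q2 with hD
    have hmax' : ∀ S1 S2 : Sylow q X, S1 ≠ S2 →
        Nat.card ((S1 : Subgroup X) ⊓ S2 : Subgroup X) ≤ Nat.card D :=
      fun S1 S2 h => hmax ⟨(S1, S2), h⟩
    have hD0 : D ≠ ⊥ := by
      intro h
      have h1 := hmax' A1 A2 hA
      rw [h, Subgroup.card_bot] at h1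
      exact hA0 (Subgroup.card_le_one_iff_eq_bot _ |>.1 h1)
    have hD1 : D < Q1 := by
      refine lt_of_le_of_ne inf_le_left fun h => hne ?_
      have : (Q1 : Subgroup X) ≤ Q2 := by rw [← h]; exact inf_le_right
      apply Sylow.ext
      exact Subgroup.eq_of_le_of_card_ge this (by rw [hSc, hSc])
    have hD2 : D < Q2 := by
      refine lt_of_le_of_ne inf_le_right fun h => hne ?_
      have : (Q2 : Subgroup X) ≤ Q1 := by rw [← h]; exact inf_le_left
      apply Sylow.ext
      exact (Subgroup.eq_of_le_of_card_ge this (by rw [hSc, hSc])).symm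
    have hpN : p ∣ Nat.card (Subgroup.normalizer (D : Set X)) := by
      by_contra hpN
      have h1 : Nat.card (Subgroup.normalizer (D : Set X)) ∣ p * q ^ n := by
        rw [← hcard]; exact Subgroup.card_subgroup_dvd_card _
      have h2 := (Nat.Coprime.dvd_of_dvd_mul_left ((Nat.Prime.coprime_iff_not_dvd hp).2 hpN).symm h1)
      obtain ⟨j, -, hj⟩ := (Nat.dvd_prime_pow hq).1 h2
      have hNp : IsPGroup q (Subgroup.normalizer (D : Set X)) := IsPGroup.of_card hj
      obtain ⟨Q3, hQ3⟩ := hNp.exists_le_sylow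
      have key : ∀ S : Sylow q X, D < S → Q3 = S := by
        intro S hS
        by_contra hne3
        obtain ⟨x, hx, hxN, hxD⟩ := ks_norm_grow q hq D S S.isPGroup' hS
        have hle : D ≤ (Q3 : Subgroup X) ⊓ S :=
          le_inf (Subgroup.le_normalizer.trans hQ3) hS.le
        have := Subgroup.eq_of_le_of_card_ge hle (hmax' _ _ hne3)
        exact hxD (this ▸ Subgroup.mem_inf.2 ⟨hQ3 hxN, hx⟩)
      exact hne ((key Q1 hD1).symm.trans (key Q2 hD2))
    obtain ⟨x, hx⟩ := exists_prime_orderOf_dvd_card' (G := Subgroup.normalizer (D : Set X)) p hpN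
    have hx' : orderOf (x : X) = p := by rw [Subgroup.orderOf_coe, hx]
    have hCc : Nat.card (Subgroup.zpowers (x : X)) = p := by rw [Nat.card_zpowers, hx']
    have hcomp : Subgroup.IsComplement' (Subgroup.zpowers (x : X)) (Q1 : Subgroup X) := by
      apply Subgroup.isComplement'_of_coprime
      · rw [hCc, hSc, hcard]
      · rw [hCc, hSc]; exact hcop
    have hDc : ∀ d ∈ D, ∀ g : X, g * d * g⁻¹ ∈ (Q1 : Subgroup X) := by
      intro d hd g
      obtain ⟨⟨c, b⟩, hcb⟩ := hcomp.2 g⁻¹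
      simp only at hcb
      have hcN : (c : X) ∈ Subgroup.normalizer (D : Set X) := by
        have : Subgroup.zpowers (x : X) ≤ Subgroup.normalizer (D : Set X) := by
          rw [Subgroup.zpowers_le]; exact x.2
        exact this c.2
      have h1 : (c : X)⁻¹ * d * c ∈ D := by
        have := (Subgroup.mem_normalizer_iff.1 (inv_mem hcN) d).1 hd
        simpa using this
      have h2 : g * d * g⁻¹ = (b : X)⁻¹ * ((c : X)⁻¹ * d * c) * b := by
        have : g = (b : X)⁻¹ * (c : X)⁻¹ := by
          rw [← mul_inv_rev, hcb, inv_inv]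
        rw [this]; group
      rw [h2]
      exact mul_mem (mul_mem (inv_mem b.2) (hD1.le h1)) b.2
    obtain ⟨g0, hg0⟩ := MulAction.exists_smul_eq X Q1 Q0
    apply hD0
    rw [eq_bot_iff, ← hcore]
    intro d hd g
    have h1 := hDc d hd (g0⁻¹ * g)
    have h2 : g * d * g⁻¹ ∈ ((g0 • Q1 : Sylow q X) : Subgroup X) :=
      ⟨_, h1, by simp [MulAut.conj_apply, mul_assoc]⟩
    rw [hg0] at h2
    exact h2


theorem ks_eig_mod {V : Type*} [AddCommGroup V] [Finite V] [Nontrivial V] (p : ℕ) (hp : p.Prime)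
    [Module (ZMod p) V] (f : V →+ V) (hf : ∀ x, f^[p - 1] x = x) :
    ∃ x : V, x ≠ 0 ∧ ∃ a : ℕ, f x = a • x := by
  have : Fact p.Prime := ⟨hp⟩
  let F : Module.End (ZMod p) V := f.toZModLinearMap p
  have hF : F ^ p = F := by
    ext x
    rw [Module.End.pow_apply]
    have hpp : p = (p - 1) + 1 := by have := hp.pos; omega
    have h1 : f^[(p - 1) + 1] x = f x := by
      rw [Function.iterate_succ_apply]
      exact hf (f x)
    rw [← hpp] at h1
    exact h1
  have hdvd : minpoly (ZMod p) F ∣ (Polynomial.X ^ p - Polynomial.X) := by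
    apply minpoly.dvd
    simp [hF]
  have hspl : (minpoly (ZMod p) F).Splits :=
    (GaloisField.splits_zmod_X_pow_sub_X p).of_dvd
      (FiniteField.X_pow_card_sub_X_ne_zero (ZMod p) hp.one_lt) hdvd
  have hint : IsIntegral (ZMod p) F := Algebra.IsIntegral.isIntegral F
  obtain ⟨a, ha⟩ := hspl.exists_eval_eq_zero (minpoly.degree_pos hint).ne'
  obtain ⟨v, hv⟩ := (Module.End.hasEigenvalue_of_isRoot (f := F) (μ := a) ha).exists_hasEigenvector
  refine ⟨v, hv.2, a.val, ?_⟩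
  have h1 : F v = a • v := hv.apply_eq_smul
  have h2 : (a.val : ZMod p) • v = a.val • v := by rw [Nat.cast_smul_eq_nsmul]
  rw [← h2, ZMod.natCast_zmod_val]
  exact h1

theorem ks_eig_add {V : Type*} [AddCommGroup V] [Finite V] [Nontrivial V] (p : ℕ) (hp : p.Prime)
    (hexp : ∀ x : V, p • x = 0) (f : V →+ V) (hf : ∀ x, f^[p - 1] x = x) :
    ∃ x : V, x ≠ 0 ∧ ∃ a : ℕ, f x = a • x := by
  letI : Module (ZMod p) V := AddCommGroup.zmodModule hexp
  exact ks_eig_mod p hp f hf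

theorem ks_eig {G : Type*} [Group G] [Finite G] (N : Subgroup G) (hN : N.Normal) (hN0 : N ≠ ⊥)
    (hmin : ∀ L : Subgroup G, L.Normal → L ≤ N → L = ⊥ ∨ L = N) (p : ℕ) (hp : p.Prime)
    (hpN : p ∣ Nat.card N) (hcomm : ∀ x ∈ N, ∀ y ∈ N, x * y = y * x)
    (hc : ∀ g h : G, ∀ x ∈ N, (g * h * g⁻¹ * h⁻¹) * x = x * (g * h * g⁻¹ * h⁻¹))
    (hpow : ∀ g : G, ∀ x ∈ N, g ^ (p - 1) * x = x * g ^ (p - 1)) : Nat.card N = p := by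
  have : Fact p.Prime := ⟨hp⟩
  have hpt : ∀ x ∈ N, x ^ p = 1 := by
    let T : Subgroup G :=
      { carrier := {x | x ∈ N ∧ x ^ p = 1}
        one_mem' := ⟨one_mem _, one_pow _⟩
        mul_mem' := by
          rintro a b ⟨ha, ha'⟩ ⟨hb, hb'⟩
          refine ⟨mul_mem ha hb, ?_⟩
          rw [(show Commute a b from hcomm a ha b hb).mul_pow, ha', hb', one_mul]
        inv_mem' := by
          rintro a ⟨ha, ha'⟩
          exact ⟨inv_mem ha, by rw [inv_pow, ha', inv_one]⟩ }
    have hT : T.Normal := ⟨by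
      rintro x ⟨hx, hx'⟩ g
      exact ⟨hN.conj_mem x hx g, by rw [conj_pow, hx']; simp⟩⟩
    rcases hmin T hT (fun x hx => hx.1) with h | h
    · obtain ⟨x, hx⟩ := exists_prime_orderOf_dvd_card' (G := N) p hpN
      have hxT : (x : G) ∈ T := ⟨x.2, by
        have := pow_orderOf_eq_one x
        rw [hx] at this
        exact_mod_cast congrArg Subtype.val this⟩
      rw [h, Subgroup.mem_bot] at hxT
      have : x = 1 := Subtype.ext hxT
      rw [this, orderOf_one] at hx
      exact absurd hx hp.one_lt.ne
    · intro x hx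
      rw [← h] at hx
      exact hx.2
  have hscal : ∀ g : G, ∃ a : ℕ, ∀ x ∈ N, g * x * g⁻¹ = x ^ a := by
    intro g
    letI : CommGroup N := { (inferInstance : Group N) with
      mul_comm := fun x y => Subtype.ext (hcomm x x.2 y y.2) }
    have : Nontrivial N := (Subgroup.nontrivial_iff_ne_bot N).2 hN0
    let f0 : N →* N := (MulAut.conjNormal (H := N) g).toMonoidHom
    have hf0 : ∀ n : ℕ, ∀ x : N, ((f0^[n] x : N) : G) = g ^ n * x * (g ^ n)⁻¹ := by
      intro n
      induction n with
      | zero => intro x; simp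
      | succ n ih =>
        intro x
        rw [Function.iterate_succ_apply, ih]
        have : ((f0 x : N) : G) = g * x * g⁻¹ := MulAut.conjNormal_apply g x
        rw [this, pow_succ]; group
    obtain ⟨x, hx0, a, hxa⟩ := ks_eig_add (V := Additive N) p hp
      (fun x => by
        apply Additive.toMul.injective
        apply Subtype.ext
        have := hpt (x.toMul : G) x.toMul.2
        simpa using this) (MonoidHom.toAdditive f0) (by
        intro x
        have h1 : f0^[p - 1] x.toMul = x.toMul := by
          apply Subtype.ext
          rw [hf0, hpow g _ x.toMul.2]; group
        exact h1)
    have hxa : f0 x.toMul = x.toMul ^ a := hxa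
    have hx0 : x.toMul ≠ 1 := hx0
    have hxa' : g * (x.toMul : G) * g⁻¹ = (x.toMul : G) ^ a := by
      have := congrArg Subtype.val hxa
      rw [← MulAut.conjNormal_apply g x.toMul]
      exact this
    refine ⟨a, ?_⟩
    let T : Subgroup G :=
      { carrier := {x | x ∈ N ∧ g * x * g⁻¹ = x ^ a}
        one_mem' := ⟨one_mem _, by simp⟩
        mul_mem' := by
          rintro b c ⟨hb, hb'⟩ ⟨hd, hd'⟩
          refine ⟨mul_mem hb hd, ?_⟩
          rw [(show Commute b c from hcomm b hb c hd).mul_pow, ← hb', ← hd']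
          group
        inv_mem' := by
          rintro b ⟨hb, hb'⟩
          exact ⟨inv_mem hb, by rw [inv_pow, ← hb']; group⟩ }
    have hT : T.Normal := ⟨by
      rintro y ⟨hy, hy'⟩ h
      refine ⟨hN.conj_mem y hy h, ?_⟩
      rw [conj_pow, ← hy']
      have hm : h * (g * y * g⁻¹) * h⁻¹ ∈ N := hN.conj_mem _ (hN.conj_mem y hy g) h
      have h1 := hc g h _ hm
      have h2 : g * (h * y * h⁻¹) * g⁻¹ =
        ((g * h * g⁻¹ * h⁻¹) * (h * (g * y * g⁻¹) * h⁻¹)) * (g * h * g⁻¹ * h⁻¹)⁻¹ := by group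
      rw [h2, h1, mul_inv_cancel_right]⟩
    rcases hmin T hT (fun x hx => hx.1) with h | h
    · have hxT : (x.toMul : G) ∈ T := ⟨x.toMul.2, hxa'⟩
      rw [h, Subgroup.mem_bot] at hxT
      exact absurd (Subtype.ext hxT) hx0
    · intro x hx
      rw [← h] at hx
      exact hx.2
  obtain ⟨x, hx, hx1⟩ := N.bot_or_exists_ne_one.resolve_left hN0
  have hZ : (Subgroup.zpowers x).Normal := ⟨by
    intro y hy g
    obtain ⟨a, ha⟩ := hscal g
    have hyN : y ∈ N := (Subgroup.zpowers_le.2 hx) hy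
    rw [ha y hyN]
    exact pow_mem hy a⟩
  rcases hmin _ hZ (Subgroup.zpowers_le.2 hx) with h | h
  · exact absurd (Subgroup.zpowers_eq_bot.1 h) hx1
  · rw [← h, Nat.card_zpowers]
    exact orderOf_eq_prime (hpt x hx) hx1

theorem ks_chief_above {G : Type*} [Group G] [Finite G] (P A : Subgroup G) (hP : P.Normal)
    (hA : A.Normal) (h : P < A) : ∃ E : Subgroup G, IsChiefFactor E P ∧ E ≤ A := by
  obtain ⟨E, hE⟩ := (Set.toFinite {E : Subgroup G | E.Normal ∧ P < E ∧ E ≤ A}).exists_minimal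
    ⟨A, hA, h, le_rfl⟩
  refine ⟨E, ⟨hE.1.1, hP, hE.1.2.1, ?_⟩, hE.1.2.2⟩
  intro L hL hPL hLE
  by_cases hne : L = P
  · exact Or.inl hne
  · exact Or.inr (le_antisymm hLE (hE.2 ⟨hL, lt_of_le_of_ne hPL (Ne.symm hne), hLE.trans hE.1.2.2⟩ hLE))

theorem ks_chief_below {G : Type*} [Group G] [Finite G] (N L : Subgroup G) (hN : N.Normal)
    (hL : L.Normal) (h : N < L) : ∃ K : Subgroup G, IsChiefFactor L K ∧ N ≤ K := by
  obtain ⟨E, hE⟩ := (Set.toFinite {E : Subgroup G | E.Normal ∧ E < L ∧ N ≤ E}).exists_maximal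
    ⟨N, hN, h, le_rfl⟩
  refine ⟨E, ⟨hL, hE.1.1, hE.1.2.1, ?_⟩, hE.1.2.2⟩
  intro T hT hET hTL
  by_cases hne : T = L
  · exact Or.inr hne
  · exact Or.inl (le_antisymm (hE.2 ⟨hT, lt_of_le_of_ne hTL hne, hE.1.2.2.trans hET⟩ hET) hET)


theorem ks_pgroup_of_dvd {G : Type*} [Group G] [Finite G] (H : Subgroup G) (p r : ℕ) (hp : p.Prime)
    (hr : r.Prime) (hH : IsPGroup p H) (hdvd : r ∣ Nat.card H) : r = p := by
  have : Fact p.Prime := ⟨hp⟩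
  obtain ⟨m, hm⟩ := (IsPGroup.iff_card).1 hH
  rw [hm] at hdvd
  exact (Nat.prime_dvd_prime_iff_eq hr hp).1 (hr.dvd_of_dvd_pow hdvd)

theorem ks_coprime_fix {G : Type*} [Group G] [Finite G] (S K : Subgroup G) (r : ℕ) (hr : r.Prime)
    (hS : IsPGroup r S) (hK : K.Normal) (hrK : ¬ r ∣ Nat.card K) (y : G)
    (hy : ∀ s ∈ S, s * y * s⁻¹ * y⁻¹ ∈ K) :
    ∃ z : G, y⁻¹ * z ∈ K ∧ ∀ s ∈ S, s * z * s⁻¹ = z := by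
  have : Fact r.Prime := ⟨hr⟩
  have key : ∀ s ∈ S, ∀ z : G, y⁻¹ * z ∈ K → y⁻¹ * (s * z * s⁻¹) ∈ K := by
    intro s hs z hz
    have h1 := hK.conj_mem _ (hy s hs) y⁻¹
    have h2 := hK.conj_mem _ hz s
    convert mul_mem h1 h2 using 1
    group
  letI : MulAction S {z : G // y⁻¹ * z ∈ K} :=
    { smul := fun s z => ⟨s * z.1 * (s : G)⁻¹, key s s.2 z.1 z.2⟩
      one_smul := fun z => Subtype.ext (by
        change ((1 : S) : G) * z.1 * ((1 : S) : G)⁻¹ = z.1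
        simp)
      mul_smul := fun s t z => Subtype.ext (by
        change ((s * t : S) : G) * z.1 * ((s * t : S) : G)⁻¹ = s * (t * z.1 * (t : G)⁻¹) * (s : G)⁻¹
        simp [mul_assoc]) }
  have hcard : Nat.card {z : G // y⁻¹ * z ∈ K} = Nat.card K :=
    Nat.card_congr
      { toFun := fun z => ⟨y⁻¹ * z.1, z.2⟩
        invFun := fun k => ⟨y * k.1, by simp⟩
        left_inv := fun z => by simp
        right_inv := fun k => by simp }
  obtain ⟨z, hz⟩ := hS.nonempty_fixed_point_of_prime_not_dvd_card {z : G // y⁻¹ * z ∈ K}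
    (by rw [hcard]; exact hrK)
  exact ⟨z.1, z.2, fun s hs => congrArg Subtype.val (hz ⟨s, hs⟩)⟩

theorem ks_L {G : Type*} [Group G] [Finite G] (N : Subgroup G) (hcf : IsChiefFactor N ⊥)
    (hfr : N ≤ frattini G)
    (hch : ∀ H K : Subgroup G, IsChiefFactor H K → K ≠ ⊥ → (K.relIndex H).Prime) :
    (Nat.card N).Prime := by
  classical
  have hN : N.Normal := hcf.1
  have hN0 : N ≠ ⊥ := hcf.2.2.1.ne'
  have hmin : ∀ L : Subgroup G, L.Normal → L ≤ N → L = ⊥ ∨ L = N :=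
    fun L hL hLN => hcf.2.2.2 L hL bot_le hLN
  have hfrat : ∀ T : Subgroup G, T ⊔ N = ⊤ → T = ⊤ := by
    intro T hT
    apply frattini_nongenerating
    rw [eq_top_iff, ← hT]
    exact sup_le_sup_left hfr _
  obtain ⟨p, hp, hpN⟩ := Nat.exists_prime_and_dvd (n := Nat.card N)
    (fun h => hN0 ((Subgroup.card_eq_one).1 h))
  have : Fact p.Prime := ⟨hp⟩
  -- N is a p-group
  have hNp : IsPGroup p N := by
    obtain ⟨P⟩ : Nonempty (Sylow p N) := inferInstance
    have h1 := hfrat _ (Sylow.normalizer_sup_eq_top P)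
    have h2 : ((P : Subgroup N).map N.subtype).Normal := Subgroup.normalizer_eq_top_iff.1 h1
    rcases hmin _ h2 (Subgroup.map_subtype_le _) with h | h
    · rw [Subgroup.map_eq_bot_iff_of_injective _ N.subtype_injective] at h
      exact absurd h (P.ne_bot_of_dvd_card hpN)
    · rw [← h]
      exact P.isPGroup'.map _
  by_cases hL : ∃ L : Subgroup G, L.Normal ∧ L ≠ ⊥ ∧ N ⊓ L = ⊥
  · obtain ⟨L, hL, hL0, hNL⟩ := hL
    have hc : IsChiefFactor (N ⊔ L) L := by
      refine ⟨Subgroup.sup_normal N L, hL, lt_of_le_of_ne le_sup_right ?_, ?_⟩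
      · intro h
        have : N ≤ L := by rw [h]; exact le_sup_left
        rw [inf_eq_left.2 this] at hNL
        exact hN0 hNL
      · intro T hT hLT hTN
        rcases hmin (N ⊓ T) (Subgroup.normal_inf_normal N T) inf_le_left with h | h
        · left
          refine le_antisymm ?_ hLT
          intro t ht
          obtain ⟨n, hn, l, hl, rfl⟩ := Subgroup.mem_sup_of_normal_left.1 (hTN ht)
          have : n ∈ N ⊓ T := Subgroup.mem_inf.2 ⟨hn, by
            have := mul_mem ht (inv_mem (hLT hl))
            simpa using this⟩
          rw [h, Subgroup.mem_bot] at this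
          rw [this, one_mul]; exact hl
        · right
          exact le_antisymm hTN (sup_le (inf_eq_left.1 h) hLT)
    have := hch _ _ hc hL0
    rw [Subgroup.relIndex_sup_right, ← Subgroup.inf_relIndex_right, inf_comm, hNL,
      Subgroup.relIndex_bot_left] at this
    exact this
  have huniq : ∀ L : Subgroup G, L.Normal → L ≠ ⊥ → N ≤ L := by
    intro L hLn hL0
    rcases hmin (N ⊓ L) (Subgroup.normal_inf_normal N L) inf_le_left with h | h
    · exact absurd ⟨L, hLn, hL0, h⟩ hL
    · exact inf_eq_left.1 h
  obtain ⟨P, hPmax⟩ := (Set.toFinite {P : Subgroup G | P.Normal ∧ N ≤ P ∧ IsPGroup p P}).exists_maximal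
    ⟨N, hN, le_rfl, hNp⟩
  obtain ⟨hPn, hNP, hPp⟩ := hPmax.1
  obtain ⟨m, hPc⟩ := (IsPGroup.iff_card).1 hPp
  -- P centralizes N
  have hPN : N ≤ Subgroup.centralizer (P : Set G) := by
    have hn : (Subgroup.centralizer (P : Set G)).Normal := inferInstance
    rcases hmin (N ⊓ Subgroup.centralizer (P : Set G)) (Subgroup.normal_inf_normal _ _) inf_le_left with h | h
    · exfalso
      letI : MulAction P N := MulAction.compHom N ((MulAut.conjNormal (H := N)).comp P.subtype)
      obtain ⟨b, hb, hb1⟩ := hPp.exists_fixed_point_of_prime_dvd_card_of_fixed_point N hpN (a := 1)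
        (by
          intro x
          change (MulAut.conjNormal (H := N) (x : G)) 1 = 1
          simp)
      apply hb1
      have : (b : G) ∈ N ⊓ Subgroup.centralizer (P : Set G) := by
        refine Subgroup.mem_inf.2 ⟨b.2, ?_⟩
        rw [Subgroup.mem_centralizer_iff]
        intro x hx
        have h1 : (MulAut.conjNormal (H := N) x) b = b := hb ⟨x, hx⟩
        have h2 := congrArg Subtype.val h1
        rw [MulAut.conjNormal_apply] at h2
        exact mul_inv_eq_iff_eq_mul.1 h2
      rw [h, Subgroup.mem_bot] at this
      exact (Subtype.ext this).symm
    · exact inf_eq_left.1 h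
  have hPcent : ∀ g ∈ P, ∀ x ∈ N, g * x = x * g := fun g hg x hx =>
    Subgroup.mem_centralizer_iff.1 (hPN hx) g hg
  -- the homs
  have hφ : ∀ H K : Subgroup G, IsChiefFactor H K → N ≤ K → H ≤ P →
      ∃ φ : G →* (ZMod p)ˣ, ∀ g, φ g = 1 ↔ ∀ h ∈ H, g * h * g⁻¹ * h⁻¹ ∈ K := by
    intro H K hHK hNK hHP
    have hK0 : K ≠ ⊥ := fun h => hN0 (le_bot_iff.1 (h ▸ hNK))
    have h1 := hch H K hHK hK0
    have h2 : K.relIndex H = p := by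
      apply ks_pgroup_of_dvd H p _ hp h1 (hPp.to_le hHP)
      exact Subgroup.relIndex_dvd_card _ _
    obtain ⟨φ, h3, -⟩ := ks_autHom H K hHK.1 hHK.2.1 hHK.2.2.1.le p hp h2
    exact ⟨φ, h3⟩
  let A : Subgroup G := ⨅ (H : Subgroup G), ⨅ (K : Subgroup G), ⨅ (h : IsChiefFactor H K),
    ⨅ (_ : N ≤ K), ⨅ (_ : H ≤ P), chiefCentralizer H K h.1 h.2.1
  have hmemA : ∀ g, g ∈ A ↔ ∀ H K : Subgroup G, IsChiefFactor H K → N ≤ K → H ≤ P →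
      ∀ h ∈ H, g * h * g⁻¹ * h⁻¹ ∈ K := by
    intro g
    simp only [A, Subgroup.mem_iInf]
    rfl
  have hAn : A.Normal := ⟨by
    intro a ha g
    rw [hmemA] at ha ⊢
    intro H K hHK hNK hHP
    obtain ⟨φ, hφ1⟩ := hφ H K hHK hNK hHP
    have := (hφ1 a).2 (ha H K hHK hNK hHP)
    rw [← hφ1]
    simp [this]⟩
  have hAcomm : ∀ g h : G, g * h * g⁻¹ * h⁻¹ ∈ A := by
    intro g h
    rw [hmemA]
    intro H K hHK hNK hHP
    obtain ⟨φ, hφ1⟩ := hφ H K hHK hNK hHP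
    rw [← hφ1]
    simp [mul_comm]
  have hunits : ∀ u : (ZMod p)ˣ, u ^ (p - 1) = 1 := fun u => ZMod.units_pow_card_sub_one_eq_one p u
  have hApow : ∀ g : G, g ^ (p - 1) ∈ A := by
    intro g
    rw [hmemA]
    intro H K hHK hNK hHP
    obtain ⟨φ, hφ1⟩ := hφ H K hHK hNK hHP
    rw [← hφ1, map_pow, hunits]
  have hPA : P ≤ A := by
    intro g hg
    rw [hmemA]
    intro H K hHK hNK hHP
    obtain ⟨φ, hφ1⟩ := hφ H K hHK hNK hHP
    rw [← hφ1]
    have h1 : orderOf (φ g) ∣ p - 1 := orderOf_dvd_of_pow_eq_one (hunits _)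
    have h2 : orderOf (φ g) ∣ p ^ m := by
      refine (orderOf_map_dvd φ g).trans ?_
      rw [← hPc]
      exact Subgroup.orderOf_dvd_natCard _ hg
    have h3 : Nat.Coprime (p - 1) (p ^ m) := by
      apply Nat.Coprime.pow_right
      apply Nat.Coprime.symm
      rw [Nat.Prime.coprime_iff_not_dvd hp]
      intro h
      have := Nat.le_of_dvd (by have := hp.one_lt; omega) h
      have := hp.pos
      omega
    exact orderOf_eq_one_iff.1 (Nat.eq_one_of_dvd_coprimes h3 h1 h2)
  have hAP : A = P := by
    by_contra hne
    obtain ⟨E, hE, hEA⟩ := ks_chief_above P A hPn hAn (lt_of_le_of_ne hPA (Ne.symm hne))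
    have hEn : E.Normal := hE.1
    have hPE : P < E := hE.2.2.1
    have hP0 : P ≠ ⊥ := fun h => hN0 (le_bot_iff.1 (h ▸ hNP))
    have hr := hch E P hE hP0
    set r := P.relIndex E with hrdef
    have : Fact r.Prime := ⟨hr⟩
    have hEc : Nat.card E = p ^ m * r := by
      have := Subgroup.relIndex_mul_relIndex ⊥ P E bot_le hPE.le
      rw [Subgroup.relIndex_bot_left, Subgroup.relIndex_bot_left, hPc] at this
      exact this.symm
    have hrp : r ≠ p := by
      intro h
      have : IsPGroup p E := IsPGroup.of_card (n := m + 1) (by rw [hEc, h, pow_succ])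
      exact hPE.not_ge (hPmax.2 ⟨hEn, hNP.trans hPE.le, this⟩ hPE.le)
    obtain ⟨S0⟩ : Nonempty (Sylow r E) := inferInstance
    set S : Subgroup G := (S0 : Subgroup E).map E.subtype with hSdef
    have hSE : S ≤ E := Subgroup.map_subtype_le _
    have hSr : IsPGroup r S := S0.isPGroup'.map _
    have hS0 : S ≠ ⊥ := by
      intro h
      rw [hSdef, Subgroup.map_eq_bot_iff_of_injective _ E.subtype_injective] at h
      exact S0.ne_bot_of_dvd_card (by rw [hEc]; exact dvd_mul_left _ _) h
    have hNS : Subgroup.normalizer (S : Set G) ⊔ E = ⊤ := Sylow.normalizer_sup_eq_top S0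
    have hSP : ¬ S ≤ P := by
      intro h
      obtain ⟨s, hs, hsd⟩ := Nat.exists_prime_and_dvd (n := Nat.card S)
        (fun h => hS0 ((Subgroup.card_eq_one).1 h))
      have h1 := ks_pgroup_of_dvd S r s hr hs hSr hsd
      have h2 := ks_pgroup_of_dvd S p s hp hs (hPp.to_le h) hsd
      exact hrp (h1.symm.trans h2)
    have hEPS : E = P ⊔ S := by
      have hle : P ⊔ S ≤ E := sup_le hPE.le hSE
      have h1 := Subgroup.relIndex_mul_relIndex P (P ⊔ S) E le_sup_left hle
      rw [← hrdef] at h1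
      rcases (Nat.dvd_prime hr).1 (Dvd.intro _ h1) with h | h
      · exact absurd (le_sup_right.trans (Subgroup.relIndex_eq_one.1 h)) hSP
      · rw [h] at h1
        have : (P ⊔ S).relIndex E = 1 := by
          have := hr.pos
          nlinarith
        exact le_antisymm (Subgroup.relIndex_eq_one.1 this) hle
    have hPNC : P ≤ N ⊔ Subgroup.centralizer (S : Set G) := by
      obtain ⟨L, hLmin⟩ := (Set.toFinite {L : Subgroup G | L.Normal ∧ N ≤ L ∧ L ≤ P ∧
        P ≤ L ⊔ Subgroup.centralizer (S : Set G)}).exists_minimal ⟨P, hPn, hNP, le_rfl, le_sup_left⟩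
      obtain ⟨hLn, hNL, hLP, hPL⟩ := hLmin.1
      by_cases hLN : N = L
      · rw [hLN]; exact hPL
      exfalso
      obtain ⟨K, hK, hNK⟩ := ks_chief_below N L hN hLn (lt_of_le_of_ne hNL hLN)
      have hKn : K.Normal := hK.2.1
      have hKL : K < L := hK.2.2.1
      have hsub : L ≤ K ⊔ Subgroup.centralizer (S : Set G) := by
        intro y hy
        obtain ⟨z, hz, hz2⟩ := ks_coprime_fix S K r hr hSr hKn
          (fun h => hrp (ks_pgroup_of_dvd K p r hp hr (hPp.to_le (hKL.le.trans hLP)) h)) y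
          (fun s hs => (hmemA s).1 (hEA (hSE hs)) L K hK hNK hLP y hy)
        have hzc : z ∈ Subgroup.centralizer (S : Set G) := by
          rw [Subgroup.mem_centralizer_iff]
          intro s hs
          exact mul_inv_eq_iff_eq_mul.1 (hz2 s hs)
        have : y = z * (y⁻¹ * z)⁻¹ := by group
        rw [this]
        exact mul_mem (Subgroup.mem_sup_right hzc) (Subgroup.mem_sup_left (inv_mem hz))
      have := hLmin.2 ⟨hKn, hNK, hKL.le.trans hLP, hPL.trans (sup_le hsub le_sup_right)⟩ hKL.le
      exact hKL.not_ge this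
    have hCN : Subgroup.centralizer (S : Set G) ≤ Subgroup.normalizer (S : Set G) :=
      Subgroup.centralizer_le_normalizer (S : Set G)
    have htop : Subgroup.normalizer (S : Set G) ⊔ N = ⊤ := by
      rw [eq_top_iff, ← hNS]
      refine sup_le le_sup_left ?_
      rw [hEPS]
      refine sup_le (hPNC.trans (sup_le le_sup_right (hCN.trans le_sup_left))) ?_
      exact Subgroup.le_normalizer.trans le_sup_left
    have hSn : S.Normal := Subgroup.normalizer_eq_top_iff.1 (hfrat _ htop)
    have hNS2 := huniq S hSn hS0
    exact hrp (ks_pgroup_of_dvd S r p hr hp hSr (hpN.trans (Subgroup.card_dvd_of_le hNS2))).symm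
  rw [ks_eig N hN hN0 hmin p hp hpN (fun x hx y hy => hPcent x (hNP hx) y hy)
    (fun g h x hx => hPcent _ (hAP ▸ hAcomm g h) x hx)
    (fun g x hx => hPcent _ (hAP ▸ hApow g) x hx)]
  exact hp


theorem ks_coatom_of_prime {G : Type*} [Group G] [Finite G] (M : Subgroup G) (h : M.index.Prime) :
    IsCoatom M := by
  refine ⟨fun hM => ?_, fun T hT => ?_⟩
  · rw [hM, Subgroup.index_top] at h
    exact Nat.not_prime_one h
  · have h1 := Subgroup.relIndex_mul_index hT.le
    rcases (Nat.dvd_prime h).1 (Dvd.intro_left _ h1) with h2 | h2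
    · exact Subgroup.index_eq_one.1 h2
    · rw [h2] at h1
      have : M.relIndex T = 1 := by
        have := h.pos
        nlinarith
      exact absurd (Subgroup.relIndex_eq_one.1 this) hT.not_ge

theorem ks_normal_coatom {G : Type*} [Group G] [Finite G] (M : Subgroup G) (hn : M.Normal)
    (hM : IsCoatom M) : M.index.Prime := by
  obtain ⟨p, hp, hpd⟩ := Nat.exists_prime_and_dvd (n := M.index)
    (fun h => hM.1 (Subgroup.index_eq_one.1 h))
  have : Fact p.Prime := ⟨hp⟩
  obtain ⟨x, hx⟩ := exists_prime_orderOf_dvd_card' (G := G ⧸ M) p hpd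
  have h1 : M < (Subgroup.zpowers x).comap (QuotientGroup.mk' M) := by
    refine lt_of_le_of_ne ?_ ?_
    · conv_lhs => rw [← QuotientGroup.ker_mk' M]
      exact MonoidHom.ker_le_comap _ _
    · intro h
      obtain ⟨y, rfl⟩ := QuotientGroup.mk'_surjective M x
      have : y ∈ M := by
        rw [h]; exact Subgroup.mem_zpowers (QuotientGroup.mk' M y)
      have h2 : QuotientGroup.mk' M y = 1 := (QuotientGroup.eq_one_iff y).2 this
      rw [h2, orderOf_one] at hx
      exact hp.one_lt.ne hx
  have h2 := hM.2 _ h1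
  have h3 : Subgroup.zpowers x = ⊤ := by
    rw [← Subgroup.map_comap_eq_self_of_surjective (QuotientGroup.mk'_surjective M) (Subgroup.zpowers x), h2,
      Subgroup.map_top_of_surjective _ (QuotientGroup.mk'_surjective M)]
  have h4 : Nat.card (Subgroup.zpowers x) = M.index := by
    rw [h3, Subgroup.card_top]; rfl
  rw [← h4, Nat.card_zpowers, hx]
  exact hp

theorem ks_J {G : Type*} [Group G] [Finite G] (M : Subgroup G) (hM : IsCoatom M)
    (h : M.Normal ∨ ∃ n p q : ℕ, p.Prime ∧ q.Prime ∧
      ¬ Group.IsNilpotent (G ⧸ M.normalCore) ∧ M.normalCore.index = p * q ^ n ∧ M.index = p) :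
    ∃ R : Subgroup G, R.Normal ∧ M.normalCore ≤ R ∧ (M.normalCore.relIndex R).Prime ∧ R ⊔ M = ⊤ := by
  rcases h with h | ⟨n, p, q, hp, hq, hnil, hc, hi⟩
  · refine ⟨⊤, inferInstance, le_top, ?_, by simp⟩
    rw [Subgroup.normalCore_eq_self, Subgroup.relIndex_top_right]
    exact ks_normal_coatom M h hM
  · set D := M.normalCore with hD
    have hDM : D ≤ M := M.normalCore_le
    have hpq : p ≠ q := by
      rintro rfl
      have : Fact p.Prime := ⟨hp⟩
      apply hnil
      have : IsPGroup p (G ⧸ D) := IsPGroup.of_card (n := n + 1) (by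
        rw [pow_succ, mul_comm, ← hc]; rfl)
      exact this.isNilpotent
    have hsurj := QuotientGroup.mk'_surjective D
    let Q := M.map (QuotientGroup.mk' D)
    have hQ : Q.comap (QuotientGroup.mk' D) = M := by
      rw [Subgroup.comap_map_eq, QuotientGroup.ker_mk', sup_eq_left]; exact hDM
    have hQi : Q.index = p := by
      rw [← hi, ← Subgroup.index_comap_of_surjective Q hsurj, hQ]
    have hQc : Q.normalCore = ⊥ := by
      rw [← Subgroup.map_comap_eq_self_of_surjective hsurj Q.normalCore, Subgroup.map_eq_bot_iff,
        QuotientGroup.ker_mk']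
      have hnn : (Q.normalCore.comap (QuotientGroup.mk' D)).Normal :=
        (inferInstance : Q.normalCore.Normal).comap (QuotientGroup.mk' D)
      refine Subgroup.normal_le_normalCore.2 ?_
      calc _ ≤ Q.comap (QuotientGroup.mk' D) := Subgroup.comap_mono Q.normalCore_le
        _ = M := hQ
    obtain ⟨R0, hR0, hR0c⟩ := ks_pq (X := G ⧸ D) p q n hp hq hpq Q hc hQi hQc
    have hrel : D.relIndex (R0.comap (QuotientGroup.mk' D)) = p := by
      have hk := Subgroup.relIndex_ker (QuotientGroup.mk' D) (K := R0.comap (QuotientGroup.mk' D))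
      rw [QuotientGroup.ker_mk'] at hk
      rw [hk, Subgroup.map_comap_eq_self_of_surjective hsurj, hR0c]
    refine ⟨R0.comap (QuotientGroup.mk' D), hR0.comap _, ?_, ?_, ?_⟩
    · have hk := MonoidHom.ker_le_comap (QuotientGroup.mk' D) R0
      rwa [QuotientGroup.ker_mk'] at hk
    · rw [hrel]; exact hp
    · by_contra hne
      have h1 : M = R0.comap (QuotientGroup.mk' D) ⊔ M := by
        by_contra h2
        exact hne (hM.2 _ (lt_of_le_of_ne le_sup_right h2))
      have h2 : R0.comap (QuotientGroup.mk' D) ≤ M := by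
        exact le_sup_left.trans h1.symm.le
      have hn := hR0.comap (QuotientGroup.mk' D)
      have h3 := Subgroup.normal_le_normalCore.2 h2
      rw [← hD, ← Subgroup.relIndex_eq_one, hrel] at h3
      exact hp.one_lt.ne' h3

theorem ks_huppert {G : Type*} [Group G] [Finite G]
    (hJ : ∀ M : Subgroup G, IsCoatom M → ∃ R : Subgroup G, R.Normal ∧ M.normalCore ≤ R ∧
      (M.normalCore.relIndex R).Prime ∧ R ⊔ M = ⊤) :
    ∀ n : ℕ, ∀ H K : Subgroup G, K.index = n → IsChiefFactor H K → (K.relIndex H).Prime := by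
  intro n
  induction n using Nat.strong_induction_on with
  | _ n ih =>
  intro H K hKn hcf
  have hHn : H.Normal := hcf.1
  have hKn' : K.Normal := hcf.2.1
  have hKH : K < H := hcf.2.2.1
  by_cases hM : ∃ M : Subgroup G, IsCoatom M ∧ K ≤ M ∧ ¬ H ≤ M
  · obtain ⟨M, hM, hKM, hHM⟩ := hM
    obtain ⟨R, hR, hDR, hpr, hRM⟩ := hJ M hM
    set D := M.normalCore with hD
    have hKD : K ≤ D := Subgroup.normal_le_normalCore.2 hKM
    have hHD : H ⊓ D = K := by
      rcases hcf.2.2.2 (H ⊓ D) (Subgroup.normal_inf_normal _ _) (le_inf hKH.le hKD) inf_le_left with h | h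
      · exact h
      · exact absurd ((inf_eq_left.1 h).trans M.normalCore_le) hHM
    have hHR : H ≤ R := by
      rcases hcf.2.2.2 (H ⊓ R) (Subgroup.normal_inf_normal _ _) (le_inf hKH.le (hKD.trans hDR)) inf_le_left with h | h
      · intro x hx
        refine (ks_cent R D M hR hD hDR _ hpr rfl hRM x).1 fun y hy => hKD ?_
        rw [← h]
        refine Subgroup.mem_inf.2 ⟨?_, ?_⟩
        · have := mul_mem hx (hHn.conj_mem _ (inv_mem hx) y)
          convert this using 1; group
        · exact mul_mem (hR.conj_mem y hy x) (inv_mem hy)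
      · exact inf_eq_left.1 h
    have h1 : K.relIndex H = D.relIndex H := by
      rw [← hHD, Subgroup.inf_relIndex_left]
    have h2 : D.relIndex H ∣ D.relIndex R := by
      have hDn : (D.subgroupOf R).Normal := inferInstance
      have := Subgroup.relIndex_dvd_index_of_normal (D.subgroupOf R) (H.subgroupOf R)
      rwa [Subgroup.relIndex_subgroupOf hHR] at this
    rw [h1]
    rcases (Nat.dvd_prime hpr).1 h2 with h | h
    · rw [← h1, Subgroup.relIndex_eq_one] at h
      exact absurd h hKH.not_ge
    · rw [h]; exact hpr
  · push Not at hM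
    have hsurj := QuotientGroup.mk'_surjective K
    have hmk : ∀ T : Subgroup (G ⧸ K), K ≤ T.comap (QuotientGroup.mk' K) := by
      intro T
      conv_lhs => rw [← QuotientGroup.ker_mk' K]
      exact MonoidHom.ker_le_comap _ _
    have hcm : ∀ T : Subgroup G, K ≤ T → (T.map (QuotientGroup.mk' K)).comap (QuotientGroup.mk' K) = T := by
      intro T hT
      rw [Subgroup.comap_map_eq, QuotientGroup.ker_mk', sup_eq_left]; exact hT
    have hcard : Nat.card (H.map (QuotientGroup.mk' K)) = K.relIndex H := by
      rw [← Subgroup.relIndex_ker, QuotientGroup.ker_mk']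
    rw [← hcard]
    apply ks_L
    · refine ⟨hHn.map _ hsurj, inferInstance, ?_, ?_⟩
      · rw [bot_lt_iff_ne_bot, Ne, Subgroup.map_eq_bot_iff, QuotientGroup.ker_mk']
        exact hKH.not_ge
      · intro L hL _ hLH
        have h1 : L.comap (QuotientGroup.mk' K) ≤ H := by
          rw [← hcm H hKH.le]; exact Subgroup.comap_mono hLH
        rcases hcf.2.2.2 _ (hL.comap _) (hmk L) h1 with h | h
        · left
          rw [← Subgroup.map_comap_eq_self_of_surjective hsurj L, h, Subgroup.map_eq_bot_iff,
            QuotientGroup.ker_mk']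
        · right
          rw [← Subgroup.map_comap_eq_self_of_surjective hsurj L, h]
    · simp only [frattini, Order.radical, le_iInf_iff]
      intro M hMc
      rw [Subgroup.map_le_iff_le_comap]
      exact hM _ (Subgroup.isCoatom_comap_of_surjective hsurj hMc) (hmk M)
    · intro H' K' hcf' hK'
      have hlt : K < K'.comap (QuotientGroup.mk' K) := by
        refine lt_of_le_of_ne (hmk K') fun h => hK' ?_
        rw [← Subgroup.map_comap_eq_self_of_surjective hsurj K', ← h, Subgroup.map_eq_bot_iff,
            QuotientGroup.ker_mk']
      have hidx : (K'.comap (QuotientGroup.mk' K)).index < n := by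
        rw [← hKn]
        exact Subgroup.index_strictAnti hlt
      have := ih _ hidx (H'.comap (QuotientGroup.mk' K)) (K'.comap (QuotientGroup.mk' K)) rfl
        ⟨hcf'.1.comap _, hcf'.2.1.comap _,
          (Subgroup.comap_lt_comap_of_surjective hsurj).2 hcf'.2.2.1, by
          intro L hL hKL hLH
          have hKL' : K ≤ L := (hmk K').trans hKL
          have h1 : K' ≤ L.map (QuotientGroup.mk' K) := by
            rw [← Subgroup.map_comap_eq_self_of_surjective hsurj K']; exact Subgroup.map_mono hKL
          have h2 : L.map (QuotientGroup.mk' K) ≤ H' := Subgroup.map_le_iff_le_comap.2 hLH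
          rcases hcf'.2.2.2 _ (hL.map _ hsurj) h1 h2 with h | h
          · left; rw [← h, hcm L hKL']
          · right; rw [← h, hcm L hKL']⟩
      rwa [Subgroup.relIndex_comap, Subgroup.map_comap_eq_self_of_surjective hsurj] at this

theorem ks_ss_chief {G : Type*} [Group G] [Finite G] (hss : IsSupersolvable G) (H K : Subgroup G)
    (hcf : IsChiefFactor H K) : (K.relIndex H).Prime := by
  obtain ⟨m, c, h0, hm, hn, hle, hcyc⟩ := hss
  have hHn : H.Normal := hcf.1
  have hKn : K.Normal := hcf.2.1
  have hKH : K < H := hcf.2.2.1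
  obtain ⟨i, him, hi1, hi2⟩ : ∃ i, i < m ∧ c i ⊓ H ≤ K ∧ ¬ c (i + 1) ⊓ H ≤ K := by
    by_contra hcon
    push Not at hcon
    have : ∀ i ≤ m, c i ⊓ H ≤ K := by
      intro i
      induction i with
      | zero => intro _; rw [h0]; simp
      | succ i ih => intro hi; exact hcon i (by omega) (ih (by omega))
    have := this m le_rfl
    rw [hm, top_inf_eq] at this
    exact hKH.not_ge this
  have hBn := hn i
  have hCn := hn (i + 1)
  have hBC := hle i him
  have hq := hcyc i him
  generalize c i = B at *
  generalize c (i + 1) = C at *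
  have hsup : (C ⊓ H) ⊔ K = H := by
    have hnn : (C ⊓ H).Normal := Subgroup.normal_inf_normal _ _
    rcases hcf.2.2.2 _ (Subgroup.sup_normal (C ⊓ H) K) le_sup_right (sup_le inf_le_right hKH.le) with h | h
    · exact absurd (sup_eq_right.1 h) hi2
    · exact h
  let f : ↥(C ⊓ H) →* C ⧸ B.subgroupOf C :=
    (QuotientGroup.mk' (B.subgroupOf C)).comp (Subgroup.inclusion inf_le_left)
  have hker : ∀ y : ↥(C ⊓ H), f y = 1 → (y : G) ∈ K := by
    intro y hy
    have h1 : (Subgroup.inclusion inf_le_left y : C) ∈ B.subgroupOf C :=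
      (QuotientGroup.eq_one_iff _).1 hy
    exact hi1 (Subgroup.mem_inf.2 ⟨h1, (Subgroup.mem_inf.1 y.2).2⟩)
  have hrc : IsCyclic f.range := inferInstance
  obtain ⟨⟨_, x0, rfl⟩, hx0⟩ := hrc.exists_generator
  have hgen : ∀ y : ↥(C ⊓ H), ∃ j : ℤ, (y : G) * (x0 : G) ^ (-j) ∈ K := by
    intro y
    obtain ⟨j, hj⟩ := hx0 ⟨f y, y, rfl⟩
    have hj : f x0 ^ j = f y := congrArg Subtype.val hj
    refine ⟨j, ?_⟩
    have := hker (y * x0 ^ (-j)) (by rw [map_mul, map_zpow, zpow_neg, hj, mul_inv_cancel])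
    simpa using this
  let Hb := H.map (QuotientGroup.mk' K)
  have hsurj := QuotientGroup.mk'_surjective K
  have hHbn : Hb.Normal := hHn.map _ hsurj
  have hx0H : (x0 : G) ∈ H := (Subgroup.mem_inf.1 x0.2).2
  have hHcyc : IsCyclic Hb := by
    refine ⟨⟨⟨QuotientGroup.mk' K x0, x0, hx0H, rfl⟩, ?_⟩⟩
    rintro ⟨_, h, hh, rfl⟩
    have hh' : h ∈ (C ⊓ H) ⊔ K := by rw [hsup]; exact hh
    obtain ⟨y, hy, k, hk, rfl⟩ := Subgroup.mem_sup_of_normal_right.1 hh'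
    obtain ⟨j, hj⟩ := hgen ⟨y, hy⟩
    refine ⟨j, Subtype.ext ?_⟩
    have h1 : QuotientGroup.mk' K k = 1 := (QuotientGroup.eq_one_iff k).2 hk
    have h2 : QuotientGroup.mk' K (y * (x0 : G) ^ (-j)) = 1 := (QuotientGroup.eq_one_iff _).2 hj
    rw [map_mul, map_zpow, zpow_neg, mul_inv_eq_one] at h2
    change (QuotientGroup.mk' K x0) ^ j = QuotientGroup.mk' K (y * k)
    rw [map_mul, h1, mul_one, h2]
  have hcard : Nat.card Hb = K.relIndex H := by
    rw [← Subgroup.relIndex_ker, QuotientGroup.ker_mk']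
  obtain ⟨p, hp, hpd⟩ := Nat.exists_prime_and_dvd (n := Nat.card Hb) (by
    rw [hcard, Ne, Subgroup.relIndex_eq_one]; exact hKH.not_ge)
  have : Fact p.Prime := ⟨hp⟩
  obtain ⟨y, hy⟩ := exists_prime_orderOf_dvd_card' (G := Hb) p hpd
  have hy' : orderOf (y : G ⧸ K) = p := by rw [Subgroup.orderOf_coe, hy]
  have hZn : (Subgroup.zpowers (y : G ⧸ K)).Normal := ⟨by
    rintro z hz g
    have hzH : z ∈ Hb := (Subgroup.zpowers_le.2 y.2) hz
    obtain ⟨a, ha⟩ := MonoidHom.map_cyclic (MulAut.conjNormal (H := Hb) g).toMonoidHom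
    have h1 := congrArg Subtype.val (ha ⟨z, hzH⟩)
    have h2 : g * z * g⁻¹ = z ^ a := by
      have h3 := MulAut.conjNormal_apply (H := Hb) g ⟨z, hzH⟩
      rw [← h3]
      exact h1
    rw [h2]
    exact zpow_mem hz a⟩
  have hKle : K ≤ (Subgroup.zpowers (y : G ⧸ K)).comap (QuotientGroup.mk' K) := by
    conv_lhs => rw [← QuotientGroup.ker_mk' K]
    exact MonoidHom.ker_le_comap _ _
  have hleH : (Subgroup.zpowers (y : G ⧸ K)).comap (QuotientGroup.mk' K) ≤ H := by
    have : Hb.comap (QuotientGroup.mk' K) = H := by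
      rw [Subgroup.comap_map_eq, QuotientGroup.ker_mk', sup_eq_left]; exact hKH.le
    rw [← this]
    exact Subgroup.comap_mono (Subgroup.zpowers_le.2 y.2)
  rcases hcf.2.2.2 _ (hZn.comap _) hKle hleH with h | h
  · exfalso
    have h1 : Subgroup.zpowers (y : G ⧸ K) = ⊥ := by
      rw [← Subgroup.map_comap_eq_self_of_surjective hsurj (Subgroup.zpowers (y : G ⧸ K)), h,
        Subgroup.map_eq_bot_iff, QuotientGroup.ker_mk']
    rw [Subgroup.zpowers_eq_bot] at h1
    rw [h1, orderOf_one] at hy'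
    exact hp.one_lt.ne hy'
  · have h1 : Subgroup.zpowers (y : G ⧸ K) = Hb := by
      rw [← Subgroup.map_comap_eq_self_of_surjective hsurj (Subgroup.zpowers (y : G ⧸ K)), h]
    rw [← hcard, ← h1, Nat.card_zpowers, hy']
    exact hp

theorem ks_chief_ss_aux {G : Type*} [Group G] [Finite G]
    (hch : ∀ H K : Subgroup G, IsChiefFactor H K → (K.relIndex H).Prime) :
    ∀ n : ℕ, ∀ N : Subgroup G, N.Normal → N.index = n → 
    ∃ (m : ℕ) (c : ℕ → Subgroup G), c 0 = N ∧ c m = ⊤ ∧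
    (∀ i, (c i).Normal) ∧ (∀ i, i < m → c i ≤ c (i + 1)) ∧
    ∀ i, i < m → ∀ [_h : ((c i).subgroupOf (c (i + 1))).Normal],
      IsCyclic (↥(c (i + 1)) ⧸ (c i).subgroupOf (c (i + 1))) := by
  intro n
  induction n using Nat.strong_induction_on with
  | _ n ih =>
  intro N hN hNn
  by_cases hT : N = ⊤
  · exact ⟨0, fun _ => N, rfl, hT, fun _ => hN, fun i hi => absurd hi (by omega),
      fun i hi => absurd hi (by omega)⟩
  · obtain ⟨E, hE, -⟩ := ks_chief_above N ⊤ hN inferInstance (lt_top_iff_ne_top.2 hT)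
    have hlt : E.index < n := by
      rw [← hNn]
      exact Subgroup.index_strictAnti hE.2.2.1
    obtain ⟨m, c, h0, hm, hn, hle, hcyc⟩ := ih _ hlt E hE.1 rfl
    refine ⟨m + 1, fun i => Nat.casesOn i N c, rfl, hm, ?_, ?_, ?_⟩
    · rintro (_ | i)
      · exact hN
      · exact hn i
    · rintro (_ | i) hi
      · change N ≤ c 0
        rw [h0]; exact hE.2.2.1.le
      · exact hle i (by omega)
    · rintro (_ | i) hi
      · change ∀ [_h : (N.subgroupOf (c 0)).Normal], IsCyclic (↥(c 0) ⧸ N.subgroupOf (c 0))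
        intro _
        have hp := hch E N hE
        rw [← h0] at hp
        have : Fact ((N.relIndex (c 0)).Prime) := ⟨hp⟩
        exact isCyclic_of_prime_card (p := N.relIndex (c 0)) rfl
      · exact hcyc i (by omega)

theorem ks_index {G : Type*} [Group G] [Finite G] (H K M : Subgroup G) (hH : H.Normal)
    (h1 : H ⊔ M = ⊤) (h2 : H ⊓ M = K) : M.index = K.relIndex H := by
  have hKH : K ≤ H := by rw [← h2]; exact inf_le_left
  have hKM : K ≤ M := by rw [← h2]; exact inf_le_right
  have a := Subgroup.relIndex_mul_index hKH
  have b := Subgroup.relIndex_mul_index hKM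
  have e : K.relIndex M = H.index := by
    rw [← h2, Subgroup.inf_relIndex_right, ← Subgroup.relIndex_sup_right, sup_comm, h1,
      Subgroup.relIndex_top_right]
  rw [e, ← a, mul_comm] at b
  exact Nat.eq_of_mul_eq_mul_right (Nat.pos_of_ne_zero Subgroup.index_ne_zero_of_finite) b


theorem ks_gen {G : Type*} [Group G] (p : ℕ) (hp : p.Prime) (φ : G →* (ZMod p)ˣ) :
    ∃ g : G, φ.ker ⊔ Subgroup.zpowers g = ⊤ := by
  have : Fact p.Prime := ⟨hp⟩
  obtain ⟨⟨_, g, rfl⟩, hg⟩ := IsCyclic.exists_generator (α := φ.range)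
  refine ⟨g, ?_⟩
  rw [eq_top_iff]
  intro x _
  obtain ⟨j, hj⟩ := Subgroup.mem_zpowers_iff.1 (hg ⟨φ x, x, rfl⟩)
  have hj' : φ g ^ j = φ x := by
    have := congrArg Subtype.val hj
    simpa using this
  have h1 : x * (g ^ j)⁻¹ ∈ φ.ker := by
    rw [MonoidHom.mem_ker, map_mul, map_inv, map_zpow, hj', mul_inv_cancel]
  have := Subgroup.mul_mem_sup h1 (Subgroup.zpow_mem_zpowers g j)
  simpa using this

theorem ks_fwd {G : Type*} [Group G] [Finite G] {k : ℕ} (hk : 0 < k)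
    (hall : ∀ M : Subgroup G, IsCoatom M → KSubmodularIn k M ⊤)
    (hch : ∀ H K : Subgroup G, IsChiefFactor H K → (K.relIndex H).Prime)
    (H K : Subgroup G) (hcf : IsChiefFactor H K) (M : Subgroup G) (h1 : H ⊔ M = ⊤)
    (h2 : H ⊓ M = K) :
    (chiefCentralizer H K hcf.1 hcf.2.1 = ⊤ ∨
            ∃ (q n : ℕ), q.Prime ∧ 0 < n ∧ n ≤ k ∧
              (chiefCentralizer H K hcf.1 hcf.2.1).index = q ^ n ∧
              ∃ g : G, chiefCentralizer H K hcf.1 hcf.2.1 ⊔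
                Subgroup.zpowers g = ⊤) := by
  have hp := hch H K hcf
  have hH : H.Normal := hcf.1
  have hK : K.Normal := hcf.2.1
  have hKH : K ≤ H := hcf.2.2.1.le
  have hMi := ks_index H K M hH h1 h2
  have hM : IsCoatom M := ks_coatom_of_prime M (by rw [hMi]; exact hp)
  obtain ⟨φ, hφ, hφH⟩ := ks_autHom H K hH hK hKH _ hp rfl
  have hker : chiefCentralizer H K hcf.1 hcf.2.1 = φ.ker := by
    ext g
    exact (hφ g).symm
  rcases (ks_coatom_conv k hk M hM).1 (hall M hM) with hn | ⟨n, p, q, hn0, hnk, hpp, hq, hnil, hc, hi⟩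
  · left
    rw [hker, eq_top_iff, ← h1]
    refine sup_le (fun x hx => hφH x hx) (fun x hx => (hφ x).2 fun h hh => ?_)
    rw [← h2]
    refine Subgroup.mem_inf.2 ⟨mul_mem (hH.conj_mem h hh x) (inv_mem hh), ?_⟩
    have := mul_mem hx (hn.conj_mem _ (inv_mem hx) h)
    convert this using 1; group
  · right
    refine ⟨q, n, hq, hn0, hnk, ?_, ?_⟩
    · have hKD : K ≤ M.normalCore := Subgroup.normal_le_normalCore.2 (h2 ▸ inf_le_right)
      have hHD : H ⊓ M.normalCore = K := by
        refine le_antisymm ?_ (le_inf hKH hKD)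
        rw [← h2]
        exact inf_le_inf_left _ M.normalCore_le
      have hR : (H ⊔ M.normalCore).Normal := inferInstance
      have hrel : M.normalCore.relIndex (H ⊔ M.normalCore) = K.relIndex H := by
        rw [Subgroup.relIndex_sup_right, ← Subgroup.inf_relIndex_left, hHD]
      have hRM : (H ⊔ M.normalCore) ⊔ M = ⊤ := by
        rw [eq_top_iff, ← h1]
        exact sup_le_sup_right le_sup_left _
      have hcent := ks_cent (H ⊔ M.normalCore) M.normalCore M hR rfl le_sup_right _ hp hrel hRM
      have hDn : M.normalCore.Normal := inferInstance
      have hCR : chiefCentralizer H K hcf.1 hcf.2.1 = H ⊔ M.normalCore := by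
        ext g
        rw [← hcent g]
        constructor
        · intro hg y hy
          obtain ⟨a, ha, d, hd, rfl⟩ := Subgroup.mem_sup_of_normal_left.1 hy
          have e1 : g * a * g⁻¹ * a⁻¹ ∈ M.normalCore := hKD (hg a ha)
          have e2 := hDn.conj_mem _ (mul_mem (hDn.conj_mem d hd g) (inv_mem hd)) a
          convert mul_mem e1 e2 using 1; group
        · intro hg h hh
          have e1 := hg h (Subgroup.mem_sup_left hh)
          show _ ∈ K
          rw [← hHD]
          exact Subgroup.mem_inf.2 ⟨mul_mem (hH.conj_mem h hh g) (inv_mem hh), e1⟩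
      have e := Subgroup.relIndex_mul_index (le_sup_right : M.normalCore ≤ H ⊔ M.normalCore)
      rw [hrel, hc, ← hMi, hi] at e
      rw [hCR]
      exact Nat.eq_of_mul_eq_mul_left hpp.pos e
    · rw [hker]
      exact ks_gen _ hp φ

theorem ks_bwd {G : Type*} [Group G] [Finite G] {k : ℕ} (hk : 0 < k)
    (hss : IsSupersolvable G)
    (hall : ∀ H K : Subgroup G, ∀ hcf : IsChiefFactor H K,
          (∃ M : Subgroup G, H ⊔ M = ⊤ ∧ H ⊓ M = K) →
          (chiefCentralizer H K hcf.1 hcf.2.1 = ⊤ ∨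
            ∃ (q n : ℕ), q.Prime ∧ 0 < n ∧ n ≤ k ∧
              (chiefCentralizer H K hcf.1 hcf.2.1).index = q ^ n ∧
              ∃ g : G, chiefCentralizer H K hcf.1 hcf.2.1 ⊔
                Subgroup.zpowers g = ⊤))
    (M : Subgroup G) (hM : IsCoatom M) : KSubmodularIn k M ⊤ := by
  have hDM : M.normalCore ≤ M := M.normalCore_le
  have hDn : M.normalCore.Normal := inferInstance
  obtain ⟨R, hcf, -⟩ := ks_chief_above M.normalCore ⊤ inferInstance inferInstance
    (lt_of_le_of_lt hDM hM.lt_top)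
  have hR : R.Normal := hcf.1
  have hDR : M.normalCore < R := hcf.2.2.1
  have hp := ks_ss_chief hss R _ hcf
  have hRM : ¬ R ≤ M := fun h => hDR.not_ge (Subgroup.normal_le_normalCore.2 h)
  have hsup : R ⊔ M = ⊤ := by
    refine hM.2 _ (lt_of_le_of_ne le_sup_right fun h => hRM ?_)
    exact le_sup_left.trans h.symm.le
  have hinf : R ⊓ M = M.normalCore := by
    have hle : M.normalCore ≤ R ⊓ M := le_inf hDR.le hDM
    have e := Subgroup.relIndex_mul_relIndex _ _ _ hle (inf_le_left : R ⊓ M ≤ R)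
    rcases (Nat.dvd_prime hp).1 (Dvd.intro _ e) with h | h
    · exact le_antisymm (Subgroup.relIndex_eq_one.1 h) hle
    · rw [h] at e
      have h3 : (R ⊓ M).relIndex R = 1 := by
        have := hp.pos
        nlinarith
      exact absurd ((Subgroup.relIndex_eq_one.1 h3).trans inf_le_right) hRM
  have hMi := ks_index R _ M hR hsup hinf
  have hcent := ks_cent R M.normalCore M hR rfl hDR.le _ hp rfl hsup
  have hCR : chiefCentralizer R M.normalCore hcf.1 hcf.2.1 = R := by
    ext g
    exact hcent g
  have hmul := Subgroup.relIndex_mul_index hDR.le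
  rw [ks_coatom_conv k hk M hM]
  rcases hall R _ hcf ⟨M, hsup, hinf⟩ with h | ⟨q, n, hq, hn0, hnk, hidx, -⟩
  · left
    rw [hCR] at h
    have e : M.normalCore = M := by
      rw [← hinf, h, top_inf_eq]
    rw [← e]; exact hDn
  · rw [hCR] at hidx
    by_cases hnil : Group.IsNilpotent (G ⧸ M.normalCore)
    · left
      have hsurj := QuotientGroup.mk'_surjective M.normalCore
      have hQ : (M.map (QuotientGroup.mk' M.normalCore)).comap (QuotientGroup.mk' M.normalCore) = M := by
        rw [Subgroup.comap_map_eq, QuotientGroup.ker_mk', sup_eq_left]; exact hDM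
      have hQi : (M.map (QuotientGroup.mk' M.normalCore)).index = M.index := by
        rw [← Subgroup.index_comap_of_surjective _ hsurj, hQ]
      have hco := ks_coatom_of_prime (M.map (QuotientGroup.mk' M.normalCore))
        (by rw [hQi, hMi]; exact hp)
      have hnn := Group.normalizerCondition_of_isNilpotent (G := G ⧸ M.normalCore)
      have := (Subgroup.NormalizerCondition.normal_of_coatom _ hnn hco).comap (QuotientGroup.mk' M.normalCore)
      rwa [hQ] at this
    · right
      exact ⟨n, _, q, hn0, hnk, hp, hq, hnil, by rw [← hmul, hidx], hMi⟩

/-- Theorem 1: every maximal subgroup of `G` is `k`-submodular in `G` iff `G`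
is supersoluble and, for every complemented chief factor `H/K` of `G`,
`G/C_G(H/K)` is trivial or cyclic of order `q ^ n` for a prime `q` and a
natural number `n ≤ k`. -/
theorem maximal_kSubmodular_iff_supersolvable {G : Type*} [Group G] [Finite G]
    {k : ℕ} (hk : 0 < k) :
    (∀ M : Subgroup G, IsCoatom M → KSubmodularIn k M ⊤) ↔
      (IsSupersolvable G ∧
        ∀ H K : Subgroup G, ∀ hcf : IsChiefFactor H K,
          (∃ M : Subgroup G, H ⊔ M = ⊤ ∧ H ⊓ M = K) →
          (chiefCentralizer H K hcf.1 hcf.2.1 = ⊤ ∨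
            ∃ (q n : ℕ), q.Prime ∧ 0 < n ∧ n ≤ k ∧
              (chiefCentralizer H K hcf.1 hcf.2.1).index = q ^ n ∧
              ∃ g : G, chiefCentralizer H K hcf.1 hcf.2.1 ⊔
                Subgroup.zpowers g = ⊤)) := by
  constructor
  · intro hall
    have hJ : ∀ M : Subgroup G, IsCoatom M → ∃ R : Subgroup G, R.Normal ∧ M.normalCore ≤ R ∧
      (M.normalCore.relIndex R).Prime ∧ R ⊔ M = ⊤ := by
      intro M hM
      refine ks_J M hM ?_
      rcases (ks_coatom_conv k hk M hM).1 (hall M hM) with h | ⟨n, p, q, -, -, h⟩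
      · exact Or.inl h
      · exact Or.inr ⟨n, p, q, h⟩
    have hch : ∀ H K : Subgroup G, IsChiefFactor H K → (K.relIndex H).Prime :=
      fun H K hcf => ks_huppert hJ _ H K rfl hcf
    refine ⟨ks_chief_ss_aux hch _ ⊥ inferInstance rfl, ?_⟩
    rintro H K hcf ⟨M, h1, h2⟩
    exact ks_fwd hk hall hch H K hcf M h1 h2
  · rintro ⟨hss, hall⟩ M hM
    exact ks_bwd hk hss hall M hM
end

section
/- Let G be a finite group. Every subgroup of G is k-submodular in G if and only if G is supersoluble and for every chief factor H/K of G, the group G/C_G(H/K) is either trivial or cyclic of order q^n for some prime q and some natural number n ≤ k. -/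
open Pointwise

def kstep {G : Type*} [Group G] (k : ℕ) (A B : Subgroup G) : Prop :=
  ∃ n : ℕ, 0 < n ∧ n ≤ k ∧ ModularlyEmbedded n A B

def wstep {G : Type*} [Group G] (A B : Subgroup G) : Prop :=
  A ≤ B ∧ (B ≤ Subgroup.normalizer (A : Set G) ∨ (A.relIndex B).Prime)

theorem chain_iff {G : Type*} [Group G] (k : ℕ) (H K : Subgroup G) :
    KSubmodularIn k H K ↔ Relation.ReflTransGen (kstep k) H K := by
  constructor
  · rintro ⟨m, c, rfl, rfl, h⟩
    induction m with
    | zero => exact .refl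
    | succ m ih =>
      exact (ih fun i hi => h i (by omega)).tail (h m (by omega))
  · intro h
    induction h using Relation.ReflTransGen.head_induction_on with
    | refl => exact ⟨0, fun _ => K, rfl, rfl, fun i hi => by omega⟩
    | head h1 _ ih =>
      rename_i a b _
      obtain ⟨m, c, h0, hm, hc⟩ := ih
      refine ⟨m + 1, fun i => Nat.casesOn i a c, rfl, hm, ?_⟩
      intro i hi
      cases i with
      | zero =>
        show kstep k a (c 0)
        rw [h0]; exact h1
      | succ i => exact hc i (by omega)

theorem kstep.wstep {G : Type*} [Group G] {k : ℕ} {A B : Subgroup G} (h : kstep k A B) :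
    wstep A B := by
  obtain ⟨n, -, -, hle, h | ⟨p, q, hp, hq, -, -, hi⟩⟩ := h
  · exact ⟨hle, Or.inl ((Subgroup.normal_subgroupOf_iff_le_normalizer hle).1 h)⟩
  · exact ⟨hle, Or.inr (by rw [Subgroup.relIndex, hi]; exact hp)⟩

theorem jump {G : Type*} [Group G] {r : Subgroup G → Subgroup G → Prop}
    (hr : ∀ A B, r A B → A ≤ B) (P : Subgroup G → Prop) {A B : Subgroup G}
    (h : Relation.ReflTransGen r A B) (hA : ¬ P A) (hB : P B) :
    ∃ X Y, A ≤ X ∧ r X Y ∧ ¬ P X ∧ P Y := by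
  induction h using Relation.ReflTransGen.head_induction_on with
  | refl => exact absurd hB hA
  | head h1 _ ih =>
    rename_i a b _
    by_cases hb : P b
    · exact ⟨a, b, le_rfl, h1, hA, hb⟩
    · obtain ⟨X, Y, h2, h3⟩ := ih hb
      exact ⟨X, Y, (hr _ _ h1).trans h2, h3⟩

/-- weak chains pass to quotients -/
theorem wchain_quot {G : Type*} [Group G] (N : Subgroup G) [N.Normal]
    (h : ∀ H : Subgroup G, Relation.ReflTransGen wstep H ⊤) (H : Subgroup (G ⧸ N)) :
    Relation.ReflTransGen wstep H ⊤ := by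
  set f := QuotientGroup.mk' N with hf
  have hs : Function.Surjective f := QuotientGroup.mk'_surjective N
  have hk : f.ker = N := QuotientGroup.ker_mk' N
  have key : ∀ A B : Subgroup G, Relation.ReflTransGen wstep A B → N ≤ A →
      Relation.ReflTransGen wstep (A.map f) (B.map f) := by
    intro A B hAB hA
    induction hAB using Relation.ReflTransGen.head_induction_on with
    | refl => exact .refl
    | head h1 _ ih =>
      rename_i a b _
      refine .head ?_ (ih (hA.trans h1.1))
      refine ⟨Subgroup.map_mono h1.1, ?_⟩
      rcases h1.2 with h2 | h2
      · left
        exact (Subgroup.map_mono h2).trans (Subgroup.le_normalizer_map f)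
      · right
        rw [Subgroup.relIndex_map_map, hk, sup_eq_left.2 hA, sup_eq_left.2 (hA.trans h1.1)]
        exact h2
  have := key _ _ (h (H.comap f)) (hk.symm.le.trans (Subgroup.ker_le_comap f H))
  rwa [Subgroup.map_comap_eq_self_of_surjective hs, Subgroup.map_top_of_surjective f hs] at this

theorem sylow_step {G : Type*} [Group G] [Finite G] {p : ℕ} [Fact p.Prime]
    (hmax : ∀ r, r.Prime → r ∣ Nat.card G → r ≤ p) (P : Sylow p G) {W V : Subgroup G}
    (hWV : wstep W V) (hPW : (P : Subgroup G) ≤ W)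
    (hW : W ≤ Subgroup.normalizer ((P : Subgroup G) : Set G)) :
    V ≤ Subgroup.normalizer ((P : Subgroup G) : Set G) := by
  obtain ⟨hle, h | h⟩ := hWV
  · intro v hv
    have h1 : ((v • P : Sylow p G) : Subgroup G) ≤ W := by
      rintro x hx
      rw [Sylow.coe_subgroup_smul] at hx
      obtain ⟨y, hy, rfl⟩ := hx
      exact ((Subgroup.mem_normalizer_iff.1 (h hv)) y).1 (hPW hy)
    have h2 := (v • P).isPGroup'.inf_normalizer_sylow P
    have h3 : ((v • P : Sylow p G) : Subgroup G) ≤ P :=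
      inf_eq_left.1 (h2.symm.trans (inf_eq_left.2 (h1.trans hW)))
    have h4 := (v • P).3 P.isPGroup' h3
    exact Sylow.smul_eq_iff_mem_normalizer.1 (Sylow.ext h4).symm
  · have hPV := hPW.trans hle
    let PV : Sylow p V := P.subtype hPV
    have h1 := card_sylow_modEq_one p V
    have h2 : Nat.card (Sylow p V) = (Subgroup.normalizer ((PV : Subgroup V) : Set V)).index :=
      PV.card_eq_index_normalizer
    have h3 : (Subgroup.normalizer ((PV : Subgroup V) : Set V)) =
        (Subgroup.normalizer ((P : Subgroup G) : Set G)).subgroupOf V := by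
      rw [Subgroup.subgroupOf_normalizer_eq hPV]
      rfl
    rw [h3] at h2
    have h4 : (Subgroup.normalizer ((P : Subgroup G) : Set G)).relIndex V ∣ W.relIndex V :=
      Subgroup.relIndex_dvd_of_le_left V hW
    have hr : W.relIndex V ≤ p := hmax _ h
      ((Subgroup.relIndex_dvd_card _ _).trans (Subgroup.card_subgroup_dvd_card V))
    rw [← Subgroup.relIndex_eq_one]
    rcases (Nat.dvd_prime h).1 h4 with h5 | h5
    · exact h5
    · exfalso
      rw [← Subgroup.relIndex] at h2
      rw [h2, h5] at h1
      have hp : p.Prime := Fact.out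
      rcases hr.lt_or_eq with h6 | h6
      · have := Nat.ModEq.eq_of_lt_of_lt h1 h6 hp.one_lt
        exact h.one_lt.ne' this
      · rw [h6] at h1
        have : p % p = 1 % p := h1
        rw [Nat.mod_self, Nat.mod_eq_of_lt hp.one_lt] at this
        omega

theorem exists_normal_prime {G : Type*} [Group G] [Finite G] [Nontrivial G]
    (h : ∀ H : Subgroup G, Relation.ReflTransGen wstep H ⊤) :
    ∃ N : Subgroup G, N.Normal ∧ (Nat.card N).Prime := by
  classical
  have hcard : 1 < Nat.card G := Finite.one_lt_card
  have hne : (Nat.card G).primeFactors.Nonempty := Nat.nonempty_primeFactors.2 hcard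
  obtain ⟨p, hpm, hmax'⟩ := Finset.exists_max_image _ id hne
  have hp : p.Prime := Nat.prime_of_mem_primeFactors hpm
  have hpd : p ∣ Nat.card G := Nat.dvd_of_mem_primeFactors hpm
  have hmax : ∀ r, r.Prime → r ∣ Nat.card G → r ≤ p := fun r hr hd =>
    hmax' r (Nat.mem_primeFactors.2 ⟨hr, hd, by omega⟩)
  have : Fact p.Prime := ⟨hp⟩
  obtain ⟨P⟩ : Nonempty (Sylow p G) := inferInstance
  have hPn : (P : Subgroup G).Normal := by
    rw [← Subgroup.normalizer_eq_top_iff, eq_top_iff]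
    by_contra hcon
    obtain ⟨X, Y, h1, h2, h3, h4⟩ := jump (r := wstep) (fun _ _ h => h.1)
      (fun X => ¬ X ≤ Subgroup.normalizer ((P : Subgroup G) : Set G)) (h P)
      (not_not.2 Subgroup.le_normalizer) hcon
    exact h4 (sylow_step hmax P h2 h1 (not_not.1 h3))
  have hcop : Nat.Coprime (Nat.card (P : Subgroup G)) (P : Subgroup G).index := P.card_coprime_index
  obtain ⟨Q, hQ⟩ := Subgroup.exists_right_complement'_of_coprime hcop
  -- centre of P
  set Z : Subgroup G := (P : Subgroup G) ⊓ Subgroup.centralizer ((P : Subgroup G) : Set G) with hZ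
  have hZn : Z.Normal := inferInstance
  have hPbot : (P : Subgroup G) ≠ ⊥ := P.ne_bot_of_dvd_card hpd
  have hZbot : Z ≠ ⊥ := by
    have : Nontrivial (P : Subgroup G) := (Subgroup.nontrivial_iff_ne_bot _).2 hPbot
    have := P.isPGroup'.center_nontrivial
    obtain ⟨⟨z, hz⟩, hz1⟩ := exists_ne (1 : Subgroup.center (P : Subgroup G))
    intro hb
    apply hz1
    have : (z : G) ∈ Z := by
      refine ⟨z.2, ?_⟩
      refine Subgroup.mem_centralizer_iff.2 ?_
      intro x hx
      have := Subgroup.mem_center_iff.1 hz ⟨x, hx⟩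
      exact congrArg Subtype.val this
    rw [hb, Subgroup.mem_bot] at this
    ext
    exact this
  obtain ⟨N, hNmin⟩ := (Set.toFinite {L : Subgroup G | L.Normal ∧ L ≠ ⊥ ∧ L ≤ Z}).exists_minimal
    ⟨Z, hZn, hZbot, le_rfl⟩
  obtain ⟨⟨hNn, hNb, hNZ⟩, hNm⟩ := hNmin
  have hNP : N ≤ P := hNZ.trans inf_le_left
  have hNcen : ∀ n ∈ N, ∀ x ∈ (P : Subgroup G), x * n = n * x := fun n hn x hx =>
    Subgroup.mem_centralizer_iff.1 (hNZ hn).2 x hx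
  have hgen : ∀ g : G, ∃ u ∈ (P : Subgroup G), ∃ q ∈ Q, u * q = g := by
    intro g
    have := hQ.sup_eq_top
    have hg : g ∈ (P : Subgroup G) ⊔ Q := by rw [this]; trivial
    exact Subgroup.mem_sup_of_normal_left.1 hg
  have hpN : p ∣ Nat.card N := by
    have hNpg : IsPGroup p N := P.isPGroup'.to_le hNP
    have : Nontrivial N := (Subgroup.nontrivial_iff_ne_bot _).2 hNb
    obtain ⟨n, hn, hn2⟩ := (IsPGroup.nontrivial_iff_card hNpg).1 inferInstance
    rw [hn2]; exact dvd_pow_self p hn.ne'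
  obtain ⟨A, B, hQA, hAB, hNA, hNB⟩ := jump (r := wstep) (fun _ _ h => h.1)
      (fun X => N ≤ X) (h Q) (by
        intro hc
        apply hNb
        rw [eq_bot_iff, ← hQ.disjoint.eq_bot]
        exact le_inf hNP hc) le_top
  have hAN : A ⊓ N = ⊥ := by
    by_contra hcon
    have hn : (A ⊓ N).Normal := by
      constructor
      rintro n ⟨hn1, hn2⟩ g
      refine ⟨?_, hNn.conj_mem n hn2 g⟩
      obtain ⟨u, hu, q, hq, rfl⟩ := hgen g
      have h1 : q * n * q⁻¹ ∈ A := A.mul_mem (A.mul_mem (hQA hq) hn1) (A.inv_mem (hQA hq))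
      have h2 := hNcen _ (hNn.conj_mem n hn2 q) u hu
      have h3 : u * q * n * (u * q)⁻¹ = q * n * q⁻¹ := by
        calc u * q * n * (u * q)⁻¹ = (u * (q * n * q⁻¹)) * u⁻¹ := by group
          _ = _ := by rw [h2]; group
      rw [h3]; exact h1
    have := hNm (y := A ⊓ N) ⟨hn, hcon, inf_le_right.trans hNZ⟩ inf_le_right
    exact hNA (this.trans inf_le_left)
  rcases hAB.2 with h1 | h1
  · -- N central
    have hcent : ∀ n ∈ N, ∀ g : G, g * n = n * g := by
      intro n hn g
      obtain ⟨u, hu, q, hq, rfl⟩ := hgen g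
      have h2 : q * n * q⁻¹ * n⁻¹ ∈ A ⊓ N := by
        constructor
        · have h3 : n * q⁻¹ * n⁻¹ ∈ A :=
            ((Subgroup.mem_normalizer_iff.1 (h1 (hNB hn))) q⁻¹).1 (A.inv_mem (hQA hq))
          have := A.mul_mem (hQA hq) h3
          have h5 : q * n * q⁻¹ * n⁻¹ = q * (n * q⁻¹ * n⁻¹) := by group
          rw [h5]; exact this
        · exact N.mul_mem (hNn.conj_mem n hn q) (N.inv_mem hn)
      rw [hAN, Subgroup.mem_bot] at h2
      have h3 : q * n = n * q := by
        have := mul_inv_eq_one.1 h2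
        exact mul_inv_eq_iff_eq_mul.1 this
      rw [mul_assoc, h3, ← mul_assoc, hNcen n hn u hu, mul_assoc]
    obtain ⟨x, hx⟩ := exists_prime_orderOf_dvd_card' (G := N) p hpN
    refine ⟨Subgroup.zpowers (x : G), ?_, ?_⟩
    · constructor
      intro y hy g
      have hyN : y ∈ N := (Subgroup.zpowers_le.2 x.2) hy
      rw [hcent y hyN g]
      simpa using hy
    · rw [Nat.card_zpowers, Subgroup.orderOf_coe, hx]; exact hp
  · have h2 : A.relIndex N ≤ A.relIndex B := Subgroup.relIndex_le_of_le_right hNB h1.ne_zero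
    rw [← Subgroup.inf_relIndex_right, hAN, Subgroup.relIndex_bot_left] at h2
    have h3 : A.relIndex B ≤ p := hmax _ h1
      ((Subgroup.relIndex_dvd_card _ _).trans (Subgroup.card_subgroup_dvd_card B))
    have h4 := Nat.le_of_dvd Nat.card_pos hpN
    refine ⟨N, hNn, ?_⟩
    have : Nat.card N = p := by omega
    rwa [this]

theorem series_from {G : Type*} [Group G] [Finite G]
    (h : ∀ H : Subgroup G, Relation.ReflTransGen wstep H ⊤) (d : ℕ) :
    ∀ N : Subgroup G, N.Normal → N.index ≤ d →
    ∃ (m : ℕ) (c : ℕ → Subgroup G), c 0 = N ∧ c m = ⊤ ∧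
    (∀ i, (c i).Normal) ∧ (∀ i, i < m → c i ≤ c (i + 1)) ∧
    ∀ i, i < m → ∀ [_h : ((c i).subgroupOf (c (i + 1))).Normal],
      IsCyclic (↥(c (i + 1)) ⧸ (c i).subgroupOf (c (i + 1))) := by
  induction d with
  | zero =>
    intro N _ hd
    exact absurd (Nat.le_zero.1 hd) Subgroup.index_ne_zero_of_finite
  | succ d ih =>
    intro N hN hd
    by_cases htop : N = ⊤
    · exact ⟨0, fun _ => N, rfl, htop, fun _ => hN, fun i hi => by omega, fun i hi => by omega⟩
    have : Nontrivial (G ⧸ N) := QuotientGroup.nontrivial_iff.2 htop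
    obtain ⟨M, hMn, hMp⟩ := exists_normal_prime (wchain_quot N h)
    set L := M.comap (QuotientGroup.mk' N) with hL
    have hLn : L.Normal := inferInstance
    have hNL : N ≤ L := by
      have := Subgroup.ker_le_comap (QuotientGroup.mk' N) M
      rwa [QuotientGroup.ker_mk'] at this
    have hrel : N.relIndex L = Nat.card M := by
      have := Subgroup.relIndex_ker (K := L) (QuotientGroup.mk' N)
      rw [QuotientGroup.ker_mk', hL,
        Subgroup.map_comap_eq_self_of_surjective (QuotientGroup.mk'_surjective N)] at this
      exact this
    have hidx : L.index ≤ d := by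
      have h1 := Subgroup.relIndex_mul_index hNL
      have h2 : L.index ≠ 0 := Subgroup.index_ne_zero_of_finite
      rw [hrel] at h1
      have := hMp.two_le
      nlinarith [Nat.pos_of_ne_zero h2]
    obtain ⟨m, c, h0, hm, hcn, hle, hcy⟩ := ih L hLn hidx
    refine ⟨m + 1, fun i => Nat.casesOn i N c, rfl, hm, ?_, ?_, ?_⟩
    · intro i; cases i with
      | zero => exact hN
      | succ i => exact hcn i
    · intro i hi; cases i with
      | zero => show N ≤ c 0
                rw [h0]; exact hNL
      | succ i => exact hle i (by omega)
    · intro i hi; cases i with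
      | zero =>
        show ∀ [_h : ((N).subgroupOf (c 0)).Normal], IsCyclic (↥(c 0) ⧸ (N).subgroupOf (c 0))
        rw [h0]
        intro _
        have : Fact (Nat.card M).Prime := ⟨hMp⟩
        exact isCyclic_of_prime_card (p := Nat.card M) hrel
      | succ i => exact hcy i (by omega)

theorem supersolvable_of {G : Type*} [Group G] [Finite G]
    (h : ∀ H : Subgroup G, Relation.ReflTransGen wstep H ⊤) : IsSupersolvable G :=
  series_from h _ ⊥ inferInstance le_rfl

theorem chief_prime {G : Type*} [Group G] [Finite G] (hss : IsSupersolvable G)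
    {H K : Subgroup G} (hcf : IsChiefFactor H K) : (K.relIndex H).Prime := by
  obtain ⟨hH, hK, hlt, hmin⟩ := hcf
  obtain ⟨m, c, h0, hm, hcn, hcle, hcy⟩ := hss
  obtain ⟨i, him, hi1, hi2⟩ : ∃ i, i < m ∧ H ⊓ c i ≤ K ∧ ¬ H ⊓ c (i + 1) ≤ K := by
    by_contra hcon
    push Not at hcon
    have : ∀ i, i ≤ m → H ⊓ c i ≤ K := by
      intro i
      induction i with
      | zero => intro _; rw [h0]; simp
      | succ i ih => intro hi; exact hcon i (by omega) (ih (by omega))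
    have := this m le_rfl
    rw [hm, inf_top_eq] at this
    exact absurd this (not_le_of_gt hlt)
  have hn1 := hcn i
  have hn2 := hcn (i + 1)
  have hcyc : IsCyclic (↥(c (i + 1)) ⧸ (c i).subgroupOf (c (i + 1))) := hcy i him
  have hsup : K ⊔ (H ⊓ c (i + 1)) = H := by
    rcases hmin (K ⊔ (H ⊓ c (i + 1))) inferInstance le_sup_left
      (sup_le hlt.le inf_le_left) with h | h
    · exact absurd (sup_eq_left.1 h) hi2
    · exact h
  set f := QuotientGroup.mk' K with hf
  have hfs : Function.Surjective f := QuotientGroup.mk'_surjective K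
  have hker : f.ker = K := QuotientGroup.ker_mk' K
  have hmapD : H.map f = (H ⊓ c (i + 1)).map f := by
    conv_lhs => rw [← hsup]
    rw [Subgroup.map_sup, (Subgroup.map_eq_bot_iff K).2 hker.ge, bot_sup_eq]
  set D : Subgroup G := H ⊓ c (i + 1) with hD
  let ψ : D →* (↥(c (i + 1)) ⧸ (c i).subgroupOf (c (i + 1))) :=
    (QuotientGroup.mk' _).comp (Subgroup.inclusion inf_le_right)
  obtain ⟨⟨_, x, rfl⟩, hx⟩ := (inferInstance : IsCyclic ψ.range).exists_generator
  have hgen : H.map f = Subgroup.zpowers (f x) := by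
    rw [hmapD]
    apply le_antisymm
    · rintro _ ⟨y, hy, rfl⟩
      obtain ⟨j, hj⟩ := Subgroup.mem_zpowers_iff.1 (hx ⟨ψ ⟨y, hy⟩, _, rfl⟩)
      have hj' : ψ x ^ j = ψ ⟨y, hy⟩ := congrArg Subtype.val hj
      rw [← map_zpow] at hj'
      have h1 : (Subgroup.inclusion (inf_le_right : D ≤ c (i + 1)) (x ^ j))⁻¹ *
          Subgroup.inclusion (inf_le_right : D ≤ c (i + 1)) ⟨y, hy⟩ ∈
          (c i).subgroupOf (c (i + 1)) := QuotientGroup.eq.1 hj'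
      have h2 : ((x : G) ^ j)⁻¹ * y ∈ c i := by
        simpa [Subgroup.mem_subgroupOf] using h1
      have h3 : ((x : G) ^ j)⁻¹ * y ∈ K := by
        apply hi1
        exact ⟨H.mul_mem (H.inv_mem (H.zpow_mem x.2.1 j)) hy.1, h2⟩
      rw [← hker, MonoidHom.mem_ker, map_mul, map_inv, map_zpow] at h3
      exact Subgroup.mem_zpowers_iff.2 ⟨j, (inv_mul_eq_one.1 h3)⟩
    · exact Subgroup.zpowers_le.2 ⟨x, x.2, rfl⟩
  have hcard : K.relIndex H = orderOf (f x) := by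
    have := Subgroup.relIndex_ker (K := H) f
    rw [hker, hgen, Nat.card_zpowers] at this
    exact this
  have hne1 : K.relIndex H ≠ 1 := fun h => absurd (Subgroup.relIndex_eq_one.1 h) (not_le_of_gt hlt)
  have hHc : (H.map f).comap f = H := by
    rw [Subgroup.comap_map_eq, hker, sup_eq_left.2 hlt.le]
  have hHn : (H.map f).Normal := hH.map f hfs
  obtain ⟨p, hp, hpd⟩ := Nat.exists_prime_and_dvd hne1
  set M : Subgroup (G ⧸ K) := Subgroup.zpowers (f x ^ p) with hM
  have hMH : M ≤ H.map f := by
    rw [hgen]; exact Subgroup.zpowers_le.2 (Subgroup.npow_mem_zpowers _ _)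
  have hMn : M.Normal := by
    constructor
    intro y hy g
    obtain ⟨t, rfl⟩ := Subgroup.mem_zpowers_iff.1 hy
    have h1 : g * f x * g⁻¹ ∈ H.map f := hHn.conj_mem _ ⟨x, x.2.1, rfl⟩ g
    rw [hgen] at h1
    obtain ⟨j, hj⟩ := Subgroup.mem_zpowers_iff.1 h1
    rw [← conj_zpow, ← conj_pow, ← hj]
    refine Subgroup.zpow_mem _ ?_ t
    refine Subgroup.mem_zpowers_iff.2 ⟨j, ?_⟩
    rw [← zpow_natCast, ← zpow_natCast, ← zpow_mul, ← zpow_mul, mul_comm]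
  have hKL : K ≤ M.comap f := by
    have := Subgroup.ker_le_comap f M
    exact hker.ge.trans this
  have hLH : M.comap f ≤ H := (Subgroup.comap_mono hMH).trans hHc.le
  have hord : 0 < orderOf (f x) := orderOf_pos _
  rcases hmin (M.comap f) (hMn.comap f) hKL hLH with h | h
  · have h1 : M = ⊥ := by
      rw [← Subgroup.map_comap_eq_self_of_surjective hfs M, h, Subgroup.map_eq_bot_iff, hker]
    have h2 : f x ^ p = 1 := Subgroup.zpowers_eq_bot.1 h1
    have h3 := orderOf_dvd_of_pow_eq_one h2
    rw [← hcard] at h3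
    rcases (Nat.dvd_prime hp).1 h3 with h4 | h4
    · exact absurd h4 hne1
    · rw [h4]; exact hp
  · exfalso
    have h1 : M = Subgroup.zpowers (f x) := by
      rw [← Subgroup.map_comap_eq_self_of_surjective hfs M, h, hgen]
    have h2 : Nat.card M = orderOf (f x) := by rw [h1, Nat.card_zpowers]
    rw [hcard] at hpd
    rw [hM, Nat.card_zpowers, orderOf_pow, Nat.gcd_eq_right hpd] at h2
    have := Nat.div_lt_self hord hp.one_lt
    omega

theorem cent_normal {G : Type*} [Group G] {H K : Subgroup G} (hH : H.Normal) (hK : K.Normal) :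
    (chiefCentralizer H K hH hK).Normal := by
  constructor
  intro n hn g h hh
  have h1 : g⁻¹ * h * g ∈ H := by simpa using hH.conj_mem h hh g⁻¹
  have h2 := hK.conj_mem _ (hn _ h1) g
  convert h2 using 1
  group

theorem mem_cent {G : Type*} [Group G] {H K : Subgroup G} {hH : H.Normal} {hK : K.Normal} {g : G} :
    g ∈ chiefCentralizer H K hH hK ↔ ∀ h ∈ H, g * h * g⁻¹ * h⁻¹ ∈ K := Iff.rfl

theorem cent_cyclic {G : Type*} [Group G] [Finite G] {H K : Subgroup G}
    (hH : H.Normal) (hK : K.Normal) (hp : (K.relIndex H).Prime) :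
    (chiefCentralizer H K hH hK).index.Coprime (K.relIndex H) ∧
      ∃ g : G, chiefCentralizer H K hH hK ⊔ Subgroup.zpowers g = ⊤ := by
  set f := QuotientGroup.mk' K with hf
  have hfs : Function.Surjective f := QuotientGroup.mk'_surjective K
  have hker : f.ker = K := QuotientGroup.ker_mk' K
  have hcard : Nat.card (H.map f) = K.relIndex H := by
    have := Subgroup.relIndex_ker (K := H) f
    rw [hker] at this
    exact this.symm
  have hHn : (H.map f).Normal := hH.map f hfs
  set p := K.relIndex H with hpdef
  have : Fact p.Prime := ⟨hp⟩
  have hcyc : IsCyclic (H.map f) := isCyclic_of_prime_card hcard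
  let φ : G →* MulAut (H.map f) := MulAut.conjNormal.comp f
  have hφ : φ.ker = chiefCentralizer H K hH hK := by
    ext g
    rw [MonoidHom.mem_ker, mem_cent]
    constructor
    · intro h1 h hh
      have h2 := congrArg (fun a : MulAut (H.map f) => ((a ⟨f h, h, hh, rfl⟩ : H.map f) : G ⧸ K)) h1
      have h3 : f g * f h * (f g)⁻¹ = f h := h2
      rw [← hker, MonoidHom.mem_ker]
      simp only [map_mul, map_inv]
      rw [h3, mul_inv_cancel]
    · intro h1
      ext ⟨_, h, hh, rfl⟩
      have h2 := h1 h hh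
      rw [← hker, MonoidHom.mem_ker] at h2
      simp only [map_mul, map_inv] at h2
      exact mul_inv_eq_one.1 h2
  have e := IsCyclic.mulAutMulEquiv (H.map f)
  rw [hcard] at e
  have hcy2 : IsCyclic (MulAut (H.map f)) := isCyclic_of_surjective e.symm e.symm.surjective
  have hcard2 : Nat.card (MulAut (H.map f)) = p - 1 := by
    rw [Nat.card_congr e.toEquiv, Nat.card_eq_fintype_card, ZMod.card_units]
  rw [← hφ]
  constructor
  · rw [Subgroup.index_ker]
    have h1 := Subgroup.card_subgroup_dvd_card φ.range
    rw [hcard2] at h1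
    refine Nat.Coprime.coprime_dvd_left h1 ?_
    rw [Nat.coprime_comm]
    refine (Nat.Prime.coprime_iff_not_dvd hp).2 fun h => ?_
    have := Nat.le_of_dvd (by have := hp.two_le; omega) h
    have := hp.two_le
    omega
  · obtain ⟨⟨_, g, rfl⟩, hg⟩ := (inferInstance : IsCyclic φ.range).exists_generator
    refine ⟨g, ?_⟩
    rw [eq_top_iff]
    intro y _
    obtain ⟨j, hj⟩ := Subgroup.mem_zpowers_iff.1 (hg ⟨φ y, y, rfl⟩)
    have hj' : φ g ^ j = φ y := congrArg Subtype.val hj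
    rw [Subgroup.mem_sup_of_normal_left]
    refine ⟨y * (g ^ j)⁻¹, ?_, g ^ j, Subgroup.zpow_mem_zpowers g j, by group⟩
    rw [MonoidHom.mem_ker, map_mul, map_inv, map_zpow, hj', mul_inv_cancel]

theorem core_eq {G : Type*} [Group G] {H K W : Subgroup G}
    (hH : H.Normal) (hK : K.Normal) (hWH : W ⊓ H = K) :
    (W.subgroupOf (W ⊔ H)).normalCore =
      (W ⊓ chiefCentralizer H K hH hK).subgroupOf (W ⊔ H) := by
  have hKW : K ≤ W := hWH ▸ inf_le_left
  have hCn := cent_normal hH hK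
  apply le_antisymm
  · intro x hx
    have hxW : (x : G) ∈ W := Subgroup.mem_subgroupOf.1 (Subgroup.normalCore_le _ hx)
    rw [Subgroup.mem_subgroupOf]
    refine ⟨hxW, ?_⟩
    refine mem_cent.2 fun h hh => ?_
    rw [← hWH]
    constructor
    · have h1 := (Subgroup.normalCore_normal (W.subgroupOf (W ⊔ H))).conj_mem _
        (Subgroup.inv_mem _ hx) ⟨h, (le_sup_right : H ≤ W ⊔ H) hh⟩
      have h2 := Subgroup.mem_subgroupOf.1 (Subgroup.normalCore_le _ h1)
      have h3 := W.mul_mem hxW h2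
      have h4 : (x : G) * h * (x : G)⁻¹ * h⁻¹ = x * (h * (x : G)⁻¹ * h⁻¹) := by group
      rw [h4]; exact h3
    · exact H.mul_mem (hH.conj_mem h hh x) (H.inv_mem hh)
  · have hn : ((W ⊓ chiefCentralizer H K hH hK).subgroupOf (W ⊔ H)).Normal := by
      rw [Subgroup.normal_subgroupOf_iff_le_normalizer (inf_le_left.trans le_sup_left)]
      refine sup_le ?_ ?_
      · refine le_trans ?_ Subgroup.inf_normalizer_le_normalizer_inf
        refine le_inf Subgroup.le_normalizer ?_
        rw [Subgroup.normalizer_eq_top]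
        exact le_top
      · have key : ∀ h ∈ H, ∀ x ∈ W ⊓ chiefCentralizer H K hH hK,
            h * x * h⁻¹ ∈ W ⊓ chiefCentralizer H K hH hK := by
          rintro h hh x ⟨hx1, hx2⟩
          refine ⟨?_, hCn.conj_mem x hx2 h⟩
          have h1 := W.mul_mem (W.inv_mem (hKW (mem_cent.1 hx2 h hh))) hx1
          have h2 : h * x * h⁻¹ = (x * h * x⁻¹ * h⁻¹)⁻¹ * x := by group
          rw [h2]; exact h1
        intro h hh
        rw [Subgroup.mem_normalizer_iff]
        intro x
        refine ⟨key h hh x, fun hx => ?_⟩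
        have := key h⁻¹ (H.inv_mem hh) _ hx
        convert this using 1
        group
    refine Subgroup.normal_le_normalCore.2 ?_
    exact Subgroup.comap_mono inf_le_left

theorem relIndex_sup {G : Type*} [Group G] [Finite G] {H W : Subgroup G} (hH : H.Normal) :
    W.relIndex (W ⊔ H) = (W ⊓ H).relIndex H := by
  have h1 := Subgroup.relIndex_mul_relIndex (W ⊓ H) W (W ⊔ H) inf_le_left le_sup_left
  have h2 := Subgroup.relIndex_mul_relIndex (W ⊓ H) H (W ⊔ H) inf_le_right le_sup_right
  rw [Subgroup.relIndex_sup_right, ← Subgroup.inf_relIndex_left W H, mul_comm] at h2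
  have h3 : (W ⊓ H).relIndex W ≠ 0 := by
    intro h
    have := Subgroup.index_eq_zero_of_relIndex_eq_zero h
    exact Subgroup.index_ne_zero_of_finite this
  exact Nat.eq_of_mul_eq_mul_left (Nat.pos_of_ne_zero h3) (h1.trans h2.symm)

theorem core_card {G : Type*} [Group G] [Finite G] {H K W : Subgroup G}
    (hH : H.Normal) (hK : K.Normal) (hWH : W ⊓ H = K) :
    Nat.card (↥(W ⊔ H) ⧸ (W.subgroupOf (W ⊔ H)).normalCore) =
      K.relIndex H * (chiefCentralizer H K hH hK).relIndex W := by
  rw [core_eq hH hK hWH]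
  have h1 := Subgroup.relIndex_mul_relIndex (W ⊓ chiefCentralizer H K hH hK) W (W ⊔ H)
    inf_le_left le_sup_left
  rw [relIndex_sup hH, Subgroup.inf_relIndex_left, hWH, mul_comm] at h1
  rw [h1]
  rfl

theorem normal_of_nilp {X : Type*} [Group X] (S : Subgroup X)
    (hp : S.index.Prime) (hn : Group.IsNilpotent (X ⧸ S.normalCore)) : S.Normal := by
  set f := QuotientGroup.mk' S.normalCore with hf
  have hfs : Function.Surjective f := QuotientGroup.mk'_surjective _
  have hker : f.ker = S.normalCore := QuotientGroup.ker_mk' _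
  have hSc : (S.map f).comap f = S := by
    rw [Subgroup.comap_map_eq, hker, sup_eq_left.2 S.normalCore_le]
  have hidx : (S.map f).index = S.index := by
    rw [← Subgroup.index_comap_of_surjective _ hfs, hSc]
  have hco : IsCoatom (S.map f) := by
    constructor
    · intro h
      rw [h, Subgroup.index_top] at hidx
      exact hp.one_lt.ne hidx
    · intro L hL
      have h1 := Subgroup.relIndex_mul_index hL.le
      rw [hidx] at h1
      rcases (Nat.dvd_prime hp).1 (Dvd.intro_left _ h1) with h2 | h2
      · exact Subgroup.index_eq_one.1 h2
      · rw [h2] at h1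
        have h3 := Nat.eq_of_mul_eq_mul_right hp.pos (h1.trans (one_mul _).symm)
        exact absurd (Subgroup.relIndex_eq_one.1 h3) (not_le_of_gt hL)
  have := Subgroup.NormalizerCondition.normal_of_coatom _
    (Group.normalizerCondition_of_isNilpotent (G := X ⧸ S.normalCore)) hco
  rw [← hSc]
  exact this.comap f

theorem inf_eq_of_prime {G : Type*} [Group G] [Finite G] {H K A : Subgroup G}
    (hKH : K ≤ H) (hp : (K.relIndex H).Prime) (hKA : K ≤ A) (hHA : ¬ H ≤ A) : A ⊓ H = K := by
  have h1 := Subgroup.relIndex_mul_relIndex K (A ⊓ H) H (le_inf hKA hKH) inf_le_right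
  rcases (Nat.dvd_prime hp).1 (Dvd.intro_left _ h1) with h2 | h2
  · exact absurd ((Subgroup.relIndex_eq_one.1 h2).trans inf_le_left) hHA
  · rw [h2] at h1
    have h3 := Nat.eq_of_mul_eq_mul_right hp.pos (h1.trans (one_mul _).symm)
    exact le_antisymm (Subgroup.relIndex_eq_one.1 h3) (le_inf hKA hKH)

theorem forward_chief {G : Type*} [Group G] [Finite G] {k : ℕ}
    (h : ∀ H : Subgroup G, Relation.ReflTransGen (kstep k) H ⊤)
    {H K : Subgroup G} (hH : H.Normal) (hK : K.Normal) (hKH : K ≤ H)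
    (hp : (K.relIndex H).Prime) (hC : chiefCentralizer H K hH hK ≠ ⊤) :
    ∃ (q n : ℕ), q.Prime ∧ 0 < n ∧ n ≤ k ∧ (chiefCentralizer H K hH hK).index = q ^ n := by
  obtain ⟨hcop, g, hg⟩ := cent_cyclic hH hK hp
  have hCn := cent_normal hH hK
  set C := chiefCentralizer H K hH hK with hCdef
  obtain ⟨a, b, hb, hab⟩ := Nat.exists_eq_pow_mul_and_not_dvd
    (orderOf_pos g).ne' (K.relIndex H) hp.ne_one
  set p := K.relIndex H with hpdef
  set g' := g ^ p ^ a with hg'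
  have hord : orderOf g' = b := by
    rw [hg', orderOf_pow, hab, Nat.gcd_mul_right_left, Nat.mul_div_cancel_left _ (pow_pos hp.pos a)]
  have hsup : C ⊔ Subgroup.zpowers g' = ⊤ := by
    rw [eq_top_iff, ← hg]
    refine sup_le le_sup_left (Subgroup.zpowers_le.2 ?_)
    have h1 : g ^ C.index ∈ C ⊔ Subgroup.zpowers g' :=
      (le_sup_left : C ≤ _) (Subgroup.pow_index_mem C g)
    have h2 : g ^ p ^ a ∈ C ⊔ Subgroup.zpowers g' :=
      (le_sup_right : Subgroup.zpowers g' ≤ _) (Subgroup.mem_zpowers g')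
    have h3 : Nat.gcd C.index (p ^ a) = 1 := hcop.pow_right a
    have h4 : g = (g ^ C.index) ^ (Nat.gcdA C.index (p ^ a)) *
        (g ^ p ^ a) ^ (Nat.gcdB C.index (p ^ a)) := by
      have := Nat.gcd_eq_gcd_ab C.index (p ^ a)
      rw [h3] at this
      rw [← zpow_natCast, ← zpow_natCast, ← zpow_mul, ← zpow_mul, ← zpow_add, ← this]
      simp
    rw [h4]
    exact Subgroup.mul_mem _ (Subgroup.zpow_mem _ h1 _) (Subgroup.zpow_mem _ h2 _)
  have hHQ : ¬ H ≤ K ⊔ Subgroup.zpowers g' := by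
    intro hle
    have h1 := Subgroup.relIndex_mul_relIndex K H _ hKH hle
    rw [Subgroup.relIndex_sup_left] at h1
    have h2 := Subgroup.relIndex_dvd_card K (Subgroup.zpowers g')
    rw [Nat.card_zpowers, hord] at h2
    exact hb ((Dvd.intro _ h1).trans h2)
  obtain ⟨A, B, hQA, hAB, hHA, hHB⟩ := jump (r := kstep k) (fun _ _ h => h.wstep.1)
    (fun X => H ≤ X) (h _) hHQ le_top
  have hKA : K ≤ A := le_sup_left.trans hQA
  have hgA : Subgroup.zpowers g' ≤ A := le_sup_right.trans hQA
  have hAH := inf_eq_of_prime hKH hp hKA hHA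
  obtain ⟨n, hn0, hnk, hle, hn | ⟨r, q, hr, hq, -, hcard, hidx⟩⟩ := hAB
  · exfalso
    rw [Subgroup.normal_subgroupOf_iff_le_normalizer hle] at hn
    have hAC : A ≤ C := by
      intro x hx
      refine mem_cent.2 fun y hy => ?_
      rw [← hAH]
      constructor
      · have h1 := (Subgroup.mem_normalizer_iff.1 (hn (hHB hy)) x⁻¹).1 (A.inv_mem hx)
        have h2 : x * y * x⁻¹ * y⁻¹ = x * (y * x⁻¹ * y⁻¹) := by group
        rw [h2]; exact A.mul_mem hx h1
      · exact H.mul_mem (hH.conj_mem y hy x) (H.inv_mem hy)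
    apply hC
    rw [← hsup]
    exact (sup_eq_left.2 (hgA.trans hAC)).symm
  · have hrel : A.relIndex (A ⊔ H) = p := by rw [relIndex_sup hH, hAH]
    have hBeq : B = A ⊔ H := by
      have h1 := Subgroup.relIndex_mul_relIndex A (A ⊔ H) B le_sup_left (sup_le hle hHB)
      have h2 : A.relIndex B = r := hidx
      rw [hrel, h2] at h1
      rcases (Nat.dvd_prime hr).1 (Dvd.intro _ h1) with h3 | h3
      · exact absurd h3 hp.ne_one
      · rw [h3] at h1
        have h4 := Nat.eq_of_mul_eq_mul_left hr.pos (h1.trans (mul_one _).symm)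
        exact le_antisymm (Subgroup.relIndex_eq_one.1 h4) (sup_le hle hHB)
    subst hBeq
    have h2 : A.relIndex (A ⊔ H) = r := hidx
    rw [core_card hH hK hAH, ← hCdef, ← hpdef, ← h2, hrel] at hcard
    have h3 := Nat.eq_of_mul_eq_mul_left hp.pos hcard
    refine ⟨q, n, hq, hn0, hnk, ?_⟩
    rw [← h3, ← Subgroup.relIndex_sup_left, eq_top_iff.2 (hsup.ge.trans (sup_le_sup_left hgA C)),
      Subgroup.relIndex_top_right]

theorem back_step {G : Type*} [Group G] [Finite G] {k : ℕ} (hk : 0 < k)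
    {H K : Subgroup G} (hH : H.Normal) (hK : K.Normal) (hKH : K ≤ H)
    (hp : (K.relIndex H).Prime)
    (hC : chiefCentralizer H K hH hK = ⊤ ∨ ∃ (q n : ℕ), q.Prime ∧ 0 < n ∧ n ≤ k ∧
      (chiefCentralizer H K hH hK).index = q ^ n) (W : Subgroup G) (hKW : K ≤ W) :
    kstep k W (W ⊔ H) := by
  by_cases hnorm : (W.subgroupOf (W ⊔ H)).Normal
  · exact ⟨1, one_pos, hk, le_sup_left, Or.inl hnorm⟩
  have hHW : ¬ H ≤ W := by
    intro hle
    apply hnorm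
    rw [Subgroup.normal_subgroupOf_iff_le_normalizer le_sup_left, sup_eq_left.2 hle]
    exact Subgroup.le_normalizer
  have hWH := inf_eq_of_prime hKH hp hKW hHW
  have hCn := cent_normal hH hK
  have hcore := core_eq hH hK hWH
  have hcard := core_card hH hK hWH
  set C := chiefCentralizer H K hH hK with hCdef
  have hWC : ¬ W ≤ C := by
    intro hle
    rw [inf_eq_left.2 hle] at hcore
    apply hnorm
    rw [← hcore]
    infer_instance
  have hidx : (W.subgroupOf (W ⊔ H)).index = K.relIndex H := by
    rw [← hWH]; exact relIndex_sup hH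
  rcases hC with hC | ⟨q, n, hq, hn0, hnk, hqn⟩
  · exact absurd (hC ▸ le_top) hWC
  have hdvd : C.relIndex W ∣ C.index := Subgroup.relIndex_dvd_index_of_normal C W
  rw [hqn] at hdvd
  obtain ⟨n', hn', hqn'⟩ := (Nat.dvd_prime_pow hq).1 hdvd
  refine ⟨n', ?_, hn'.trans hnk, le_sup_left, Or.inr ⟨K.relIndex H, q, hp, hq, ?_, ?_, hidx⟩⟩
  · rcases Nat.eq_zero_or_pos n' with h0 | h0
    · rw [h0, pow_zero] at hqn'
      exact absurd (Subgroup.relIndex_eq_one.1 hqn') hWC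
    · exact h0
  · intro hnil
    exact hnorm (normal_of_nilp _ (hidx ▸ hp) hnil)
  · rw [hcard, hqn']

theorem exists_chief {G : Type*} [Group G] [Finite G] {N : Subgroup G} (hN : N.Normal)
    (htop : N ≠ ⊤) : ∃ H, IsChiefFactor H N := by
  obtain ⟨M, hM⟩ := (Set.toFinite {L : Subgroup G | L.Normal ∧ N < L}).exists_minimal
    ⟨⊤, inferInstance, lt_top_iff_ne_top.2 htop⟩
  obtain ⟨⟨hMn, hlt⟩, hmin⟩ := hM
  refine ⟨M, hMn, hN, hlt, fun L hL h1 h2 => ?_⟩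
  rcases h1.eq_or_lt with h3 | h3
  · exact Or.inl h3.symm
  · exact Or.inr (le_antisymm h2 (hmin ⟨hL, h3⟩ h2))

theorem backward {G : Type*} [Group G] [Finite G] {k : ℕ} (hk : 0 < k) (hss : IsSupersolvable G)
    (hch : ∀ H K : Subgroup G, ∀ hcf : IsChiefFactor H K,
      (chiefCentralizer H K hcf.1 hcf.2.1 = ⊤ ∨ ∃ (q n : ℕ), q.Prime ∧ 0 < n ∧ n ≤ k ∧
        (chiefCentralizer H K hcf.1 hcf.2.1).index = q ^ n))
    (W : Subgroup G) (d : ℕ) : ∀ N : Subgroup G, N.Normal → N.index ≤ d →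
      Relation.ReflTransGen (kstep k) (W ⊔ N) ⊤ := by
  induction d with
  | zero =>
    intro N _ hd
    exact absurd (Nat.le_zero.1 hd) Subgroup.index_ne_zero_of_finite
  | succ d ih =>
    intro N hN hd
    by_cases htop : N = ⊤
    · subst htop
      rw [sup_top_eq]
    obtain ⟨M, hcf⟩ := exists_chief hN htop
    have hp := chief_prime hss hcf
    have hlt := hcf.2.2.1
    have hidx : M.index ≤ d := by
      have h1 := Subgroup.relIndex_mul_index hlt.le
      have h2 : M.index ≠ 0 := Subgroup.index_ne_zero_of_finite
      have := hp.two_le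
      nlinarith [Nat.pos_of_ne_zero h2]
    have hstep := back_step hk hcf.1 hcf.2.1 hlt.le hp (hch M N hcf) (W ⊔ N) le_sup_right
    rw [sup_assoc, sup_eq_right.2 hlt.le] at hstep
    exact .head hstep (ih M hcf.1 hidx)

/-- Theorem 2 (parts (1) ↔ (3)): every subgroup of `G` is `k`-submodular in
`G` iff `G` is supersoluble and, for every chief factor `H/K` of `G`,
`G/C_G(H/K)` is trivial or cyclic of order `q ^ n` for a prime `q` and a
natural number `n ≤ k`. -/
theorem all_kSubmodular_iff_supersolvable {G : Type*} [Group G] [Finite G]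
    {k : ℕ} (hk : 0 < k) :
    (∀ H : Subgroup G, KSubmodularIn k H ⊤) ↔
      (IsSupersolvable G ∧
        ∀ H K : Subgroup G, ∀ hcf : IsChiefFactor H K,
          (chiefCentralizer H K hcf.1 hcf.2.1 = ⊤ ∨
            ∃ (q n : ℕ), q.Prime ∧ 0 < n ∧ n ≤ k ∧
              (chiefCentralizer H K hcf.1 hcf.2.1).index = q ^ n ∧
              ∃ g : G, chiefCentralizer H K hcf.1 hcf.2.1 ⊔
                Subgroup.zpowers g = ⊤)) := by
  simp only [chain_iff]
  constructor
  · intro h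
    have hw : ∀ H : Subgroup G, Relation.ReflTransGen wstep H ⊤ := fun H =>
      Relation.ReflTransGen.mono (r := kstep k) (fun _ _ h => kstep.wstep h) _ _ (h H)
    have hss := supersolvable_of hw
    refine ⟨hss, fun H K hcf => ?_⟩
    have hp := chief_prime hss hcf
    by_cases hC : chiefCentralizer H K hcf.1 hcf.2.1 = ⊤
    · exact Or.inl hC
    · right
      obtain ⟨q, n, h1, h2, h3, h4⟩ := forward_chief h hcf.1 hcf.2.1 hcf.2.2.1.le hp hC
      exact ⟨q, n, h1, h2, h3, h4, (cent_cyclic hcf.1 hcf.2.1 hp).2⟩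
  · rintro ⟨hss, hch⟩ H
    have := backward hk hss (fun H K hcf => (hch H K hcf).imp id
      fun ⟨q, n, h1, h2, h3, h4, _⟩ => ⟨q, n, h1, h2, h3, h4⟩) H _ ⊥ inferInstance le_rfl
    rwa [sup_bot_eq] at this
end
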